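/- (Lee–Szczarba, quoted in Section 5.) The group cohomology of GL(4,ℤ) with trivial rational coefficients vanishes in degree 5: H^5(GL(4,ℤ);ℚ) = 0. -/

import Mathlib

noncomputable section

open Matrix

section Cohomology

open CategoryTheory

variable {k G : Type} [CommRing k] [Group G]

theorem Rep.shortExact_of_maps {A B C : Rep.{0} k G} (f : A ⟶ B) (h : B ⟶ C)
    (hf : Function.Injective f.hom) (hh : Function.Surjective h.hom)
    (hfh : ∀ a, h.hom (f.hom a) = 0) (hex : ∀ b, h.hom b = 0 → ∃ a, f.hom a = b) :
    (ShortComplex.mk f h (by ext a; exact hfh a)).ShortExact where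
  exact := by
    rw [← ShortComplex.exact_map_iff_of_faithful _ (forget₂ (Rep k G) (ModuleCat k)),
      ShortComplex.moduleCat_exact_iff]
    exact hex
  mono_f := (Rep.mono_iff_injective _).2 hf
  epi_g := (Rep.epi_iff_surjective _).2 hh

/-- Dimension shifting along a short exact sequence `0 → A → B → C → 0`. -/
theorem groupCohomology.subsingleton_succ_of_shortExact {A B C : Rep.{0} k G} (f : A ⟶ B)
    (h : B ⟶ C) (hf : Function.Injective f.hom) (hh : Function.Surjective h.hom)
    (hfh : ∀ a, h.hom (f.hom a) = 0) (hex : ∀ b, h.hom b = 0 → ∃ a, f.hom a = b) (n : ℕ)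
    (hB : Subsingleton (groupCohomology B (n + 1))) (hC : Subsingleton (groupCohomology C n)) :
    Subsingleton (groupCohomology A (n + 1)) := by
  have hX := Rep.shortExact_of_maps f h hf hh hfh hex
  have := groupCohomology.epi_δ_of_isZero hX n (@ModuleCat.isZero_of_subsingleton _ _ _ hB)
  have hs := (ModuleCat.epi_iff_surjective _).1 this
  exact hs.subsingleton

/-- Vanishing of `H¹(A)` from a short exact sequence `0 → A → B → C → 0` in which invariants
of `C` lift to invariants of `B`. -/
theorem groupCohomology.subsingleton_one_of_shortExact {A B C : Rep.{0} k G} (f : A ⟶ B)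
    (h : B ⟶ C) (hf : Function.Injective f.hom) (hh : Function.Surjective h.hom)
    (hfh : ∀ a, h.hom (f.hom a) = 0) (hex : ∀ b, h.hom b = 0 → ∃ a, f.hom a = b)
    (hB : Subsingleton (groupCohomology B 1))
    (hlift : ∀ c, (∀ g, C.ρ g c = c) → ∃ b, (∀ g, B.ρ g b = b) ∧ h.hom b = c) :
    Subsingleton (groupCohomology A 1) := by
  have hX := Rep.shortExact_of_maps f h hf hh hfh hex
  have := groupCohomology.epi_δ_of_isZero hX 0 (@ModuleCat.isZero_of_subsingleton _ _ _ hB)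
  have hs := (ModuleCat.epi_iff_surjective _).1 this
  refine subsingleton_of_forall_eq 0 fun y => ?_
  obtain ⟨z, rfl⟩ := hs y
  induction z using groupCohomology.H0_induction_on with
  | h z =>
    obtain ⟨b, hb, hbz⟩ := hlift z.1 z.2
    have h0 : (f.hom ∘ (0 : G → A)) = groupCohomology.d₀₁ B b := by
      ext g; simp [groupCohomology.d₀₁, hb]
    refine (groupCohomology.δ₀_apply hX z b hbz 0 h0).trans ?_
    have : (⟨0, groupCohomology.mem_cocycles₁_of_comp_eq_d₀₁ hX h0⟩ :
      groupCohomology.cocycles₁ A) = 0 := rfl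
    erw [this]
    simp

/-- A representation which is a retract of one coinduced from the trivial group has vanishing
higher cohomology. -/
theorem groupCohomology.subsingleton_of_retract {V : Type} [AddCommGroup V] [Module k V]
    (ρ : Representation k G V) (r : (G → V) →ₗ[k] V)
    (hr : ∀ v, r (fun g => ρ g v) = v)
    (hcomm : ∀ h F, r (fun g => F (g * h)) = ρ h (r F)) (n : ℕ) :
    Subsingleton (groupCohomology (Rep.of ρ) (n + 1)) := by
  let S : Subgroup G := ⊥
  let A : Rep k S := Rep.res S.subtype (Rep.of ρ)
  let i : Rep.of ρ ⟶ Rep.coind S.subtype A := Rep.ofHom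
    { toLinearMap :=
        { toFun := fun v => ⟨fun g => ρ g v, by
            rintro ⟨g, hg⟩ h
            simp [A]⟩
          map_add' := by intros; ext; simp
          map_smul' := by intros; ext; simp }
      isIntertwining' := by
        intro g; ext v h
        exact (LinearMap.congr_fun (ρ.map_mul h g) v).symm }
  let p : Rep.coind S.subtype A ⟶ Rep.of ρ := Rep.ofHom
    { toLinearMap := r ∘ₗ Submodule.subtype _
      isIntertwining' := by
        intro g; ext F; exact hcomm g F.1 }
  have hip : i ≫ p = 𝟙 _ := by
    ext v; exact hr v
  have hz : Limits.IsZero (groupCohomology (Rep.coind S.subtype A) (n + 1)) :=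
    (isZero_groupCohomology_succ_of_subsingleton A n).of_iso (groupCohomology.coindIso A (n + 1))
  have h1 : (groupCohomology.functor k G (n + 1)).map i ≫
      (groupCohomology.functor k G (n + 1)).map p = 𝟙 _ := by
    rw [← Functor.map_comp, hip, CategoryTheory.Functor.map_id]
  have h2 : (𝟙 (groupCohomology (Rep.of ρ) (n + 1))) = 0 := by
    rw [← show _ = 𝟙 (groupCohomology (Rep.of ρ) (n + 1)) from h1]
    rw [show (groupCohomology.functor k G (n + 1)).map i = 0 from hz.eq_of_tgt _ _]
    exact Limits.zero_comp
  exact ModuleCat.subsingleton_of_isZero ((Limits.IsZero.iff_id_eq_zero _).2 h2)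

end Cohomology

section Alternating

variable {P : Type}

/-- A function on `m`-tuples is alternating under permutations of the entries. -/
def IsAlt {m : ℕ} (φ : (Fin m → P) → ℚ) : Prop :=
  ∀ (x : Fin m → P) (σ : Equiv.Perm (Fin m)), φ (x ∘ σ) = ((Equiv.Perm.sign σ : ℤ) : ℚ) * φ x

theorem Fin.cons_comp_perm {m : ℕ} (v : P) (x : Fin m → P) (σ : Equiv.Perm (Fin m)) :
    (Fin.cons v (x ∘ σ) : Fin (m + 1) → P) =
      (Fin.cons v x : Fin (m + 1) → P) ∘ Equiv.Perm.decomposeFin.symm (0, σ) := by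
  ext i
  refine Fin.cases ?_ (fun j => ?_) i <;> simp

theorem IsAlt.cons_comp {m : ℕ} {φ : (Fin (m + 1) → P) → ℚ} (h : IsAlt φ) (v : P)
    (x : Fin m → P) (σ : Equiv.Perm (Fin m)) :
    φ (Fin.cons v (x ∘ σ)) = ((Equiv.Perm.sign σ : ℤ) : ℚ) * φ (Fin.cons v x) := by
  rw [Fin.cons_comp_perm, h, Equiv.Perm.decomposeFin.symm_sign]
  simp

theorem IsAlt.cons_cons {m : ℕ} {φ : (Fin (m + 2) → P) → ℚ} (h : IsAlt φ) (u v : P)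
    (x : Fin m → P) :
    φ (Fin.cons u (Fin.cons v x : Fin (m + 1) → P)) =
      -φ (Fin.cons v (Fin.cons u x : Fin (m + 1) → P)) := by
  have : (Fin.cons u (Fin.cons v x : Fin (m + 1) → P) : Fin (m + 2) → P) =
      (Fin.cons v (Fin.cons u x : Fin (m + 1) → P) : Fin (m + 2) → P) ∘ Equiv.swap 0 1 := by
    ext i
    refine Fin.cases ?_ (fun j => Fin.cases ?_ (fun j => ?_) j) i
    · simp
    · simp [show Fin.succ (0 : Fin (m + 1)) = 1 from rfl]
    · rw [Function.comp_apply, Equiv.swap_apply_of_ne_of_ne]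
      · simp
      · exact Fin.succ_ne_zero _
      · rw [← Fin.succ_zero_eq_one, Ne, Fin.succ_inj]; exact Fin.succ_ne_zero _
  rw [this, h, Equiv.Perm.sign_swap (by simp)]
  simp

theorem IsAlt.exists_perm_zero {m : ℕ} {φ ψ : (Fin (m + 1) → P) → ℚ} (h : IsAlt φ) (h' : IsAlt ψ)
    (x : Fin (m + 1) → P) (u : P) (hu : u ∈ Set.range x)
    (H : ∀ y : Fin m → P, Set.range (Fin.cons u y : Fin (m + 1) → P) = Set.range x →
      φ (Fin.cons u y) = ψ (Fin.cons u y)) : φ x = ψ x := by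
  obtain ⟨j, rfl⟩ := hu
  have key : (Fin.cons (x j) (Fin.tail (x ∘ Equiv.swap 0 j)) : Fin (m + 1) → P) =
      x ∘ Equiv.swap 0 j := by
    conv_rhs => rw [← Fin.cons_self_tail (x ∘ Equiv.swap 0 j)]
    simp
  have := H (Fin.tail (x ∘ Equiv.swap 0 j)) (by
    rw [key, (Equiv.swap 0 j).surjective.range_comp])
  rw [key, h, h'] at this
  refine mul_left_cancel₀ ?_ this
  rcases Int.units_eq_one_or (Equiv.Perm.sign (Equiv.swap 0 j)) with h | h <;> simp [h]

/-- Antisymmetrization of a function of a point and a tuple that is alternating in the tuple. -/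
def antisymmetrize {m : ℕ} (θ : P → (Fin m → P) → ℚ) (y : Fin (m + 1) → P) : ℚ :=
  θ (y 0) (Fin.tail y) - ∑ j, θ (y (Fin.succ j)) (Function.update (Fin.tail y) j (y 0))

theorem antisymmetrize_eq {m : ℕ} (θ : P → (Fin m → P) → ℚ) (hθ : ∀ u, IsAlt (θ u))
    (y : Fin (m + 1) → P) :
    (m.factorial : ℚ) * antisymmetrize θ y = ∑ σ : Equiv.Perm (Fin (m + 1)),
      ((Equiv.Perm.sign σ : ℤ) : ℚ) * θ (y (σ 0)) (fun i => y (σ i.succ)) := by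
  rw [← Equiv.Perm.decomposeFin.symm.sum_comp, Fintype.sum_prod_type]
  have h1 : ∀ (p : Fin (m + 1)) (e : Equiv.Perm (Fin m)),
      ((Equiv.Perm.sign (Equiv.Perm.decomposeFin.symm (p, e)) : ℤ) : ℚ) *
        θ (y (Equiv.Perm.decomposeFin.symm (p, e) 0))
          (fun i => y (Equiv.Perm.decomposeFin.symm (p, e) i.succ)) =
      (if p = 0 then 1 else -1) * θ (y p) (fun i => y (Equiv.swap 0 p i.succ)) := by
    intro p e
    have := hθ (y p) (fun i => y (Equiv.swap 0 p i.succ)) e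
    have h2 : (fun i => y (Equiv.Perm.decomposeFin.symm (p, e) i.succ)) =
        (fun i => y (Equiv.swap 0 p i.succ)) ∘ e := by
      ext i; simp
    rw [h2, Equiv.Perm.decomposeFin_symm_apply_zero, this, Equiv.Perm.decomposeFin.symm_sign]
    have h3 : ((Equiv.Perm.sign e : ℤ) : ℚ) * ((Equiv.Perm.sign e : ℤ) : ℚ) = 1 := by
      rcases Int.units_eq_one_or (Equiv.Perm.sign e) with h | h <;> simp [h]
    split_ifs
    · push_cast; linear_combination θ (y p) (fun i => y (Equiv.swap 0 p i.succ)) * h3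
    · push_cast; linear_combination -θ (y p) (fun i => y (Equiv.swap 0 p i.succ)) * h3
  simp_rw [h1, Finset.sum_const, Finset.card_univ, Fintype.card_perm, Fintype.card_fin,
    nsmul_eq_mul, ← Finset.mul_sum]
  congr 1
  rw [Fin.sum_univ_succ, antisymmetrize, sub_eq_add_neg, ← Finset.sum_neg_distrib]
  congr 1
  · simp; rfl
  · refine Finset.sum_congr rfl fun j _ => ?_
    have h4 : (fun i => y (Equiv.swap 0 j.succ i.succ)) =
        Function.update (Fin.tail y) j (y 0) := by
      ext i
      by_cases h : i = j
      · subst h; simp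
      · rw [Function.update_of_ne h, Equiv.swap_apply_of_ne_of_ne (Fin.succ_ne_zero _)
          (by simpa using h)]
        rfl
    simp [h4, Fin.succ_ne_zero]

theorem isAlt_antisymmetrize {m : ℕ} (θ : P → (Fin m → P) → ℚ) (hθ : ∀ u, IsAlt (θ u)) :
    IsAlt (antisymmetrize θ) := by
  intro x σ
  have hm : (m.factorial : ℚ) ≠ 0 := by positivity
  apply mul_left_cancel₀ hm
  rw [mul_left_comm, antisymmetrize_eq θ hθ, antisymmetrize_eq θ hθ, Finset.mul_sum]
  conv_rhs => rw [← Equiv.sum_comp (Equiv.mulLeft σ)]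
  refine Finset.sum_congr rfl fun τ _ => ?_
  have h3 : ((Equiv.Perm.sign σ : ℤ) : ℚ) * ((Equiv.Perm.sign σ : ℤ) : ℚ) = 1 := by
    rcases Int.units_eq_one_or (Equiv.Perm.sign σ) with h | h <;> simp [h]
  simp only [Equiv.coe_mulLeft, Equiv.Perm.sign_mul, Units.val_mul, Int.cast_mul,
    Equiv.Perm.coe_mul, Function.comp_apply]
  linear_combination -((Equiv.Perm.sign τ : ℤ) : ℚ) *
    θ (x (σ (τ 0))) (fun i => x (σ (τ i.succ))) * h3

theorem antisymmetrize_cons {m : ℕ} (θ : P → (Fin m → P) → ℚ) (u : P) (y : Fin m → P) :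
    antisymmetrize θ (Fin.cons u y : Fin (m + 1) → P) =
      θ u y - ∑ j, θ (y j) (Function.update y j u) := by
  simp [antisymmetrize]

end Alternating

/-- A family of finite cells on a set of points, locally finite and convex for inclusion. -/
structure CellFamily (P : Type) where
  /-- The sets of points spanning a cell. -/
  Cell : Set P → Prop
  convex : ∀ {S S' S'' : Set P}, Cell S → S ⊆ S' → S' ⊆ S'' → Cell S'' → Cell S'
  finite_link : ∀ {S : Set P}, Cell S → {v | Cell (insert v S)}.Finite

namespace CellFamily

variable {P : Type} (K : CellFamily P)

/-- Alternating functions on ordered cells with `m` vertices. -/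
def Alt (m : ℕ) : Submodule ℚ ((Fin m → P) → ℚ) where
  carrier := {φ | IsAlt φ ∧ ∀ x, φ x ≠ 0 → Function.Injective x ∧ K.Cell (Set.range x)}
  zero_mem' := ⟨fun x σ => by simp, fun x h => absurd rfl h⟩
  add_mem' := by
    rintro φ ψ ⟨h1, h2⟩ ⟨h3, h4⟩
    refine ⟨fun x σ => by simp [h1 x σ, h3 x σ, mul_add], fun x hx => ?_⟩
    by_cases h : φ x = 0
    · exact h4 x (by simpa [h] using hx)
    · exact h2 x h
  smul_mem' := by
    rintro c φ ⟨h1, h2⟩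
    refine ⟨fun x σ => by simp [h1 x σ, mul_left_comm], fun x hx => h2 x ?_⟩
    intro h; simp [h] at hx

variable {K}

theorem Alt.isAlt {m : ℕ} (φ : K.Alt m) : IsAlt φ.1 := φ.2.1

theorem Alt.injective {m : ℕ} (φ : K.Alt m) {x : Fin m → P} (h : φ.1 x ≠ 0) :
    Function.Injective x := (φ.2.2 x h).1

theorem Alt.cell {m : ℕ} (φ : K.Alt m) {x : Fin m → P} (h : φ.1 x ≠ 0) :
    K.Cell (Set.range x) := (φ.2.2 x h).2

theorem Alt.cell_cons {m : ℕ} (φ : K.Alt (m + 1)) {v : P} {x : Fin m → P}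
    (h : φ.1 (Fin.cons v x) ≠ 0) : K.Cell (insert v (Set.range x)) := by
  rw [← Fin.range_cons]; exact (Alt.cell φ) h

theorem Alt.notMem_cons {m : ℕ} (φ : K.Alt (m + 1)) {v : P} {x : Fin m → P}
    (h : φ.1 (Fin.cons v x) ≠ 0) : v ∉ Set.range x :=
  (Fin.cons_injective_iff.1 ((Alt.injective φ) h)).1

theorem Alt.finite_support {m : ℕ} (φ : K.Alt (m + 1)) {x : Fin m → P}
    (hx : K.Cell (Set.range x)) : (Function.support fun v => φ.1 (Fin.cons v x)).Finite :=
  (K.finite_link hx).subset fun _ hv => (Alt.cell_cons φ) hv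

open Classical in
/-- The boundary of a locally finite alternating chain. -/
def bdry (m : ℕ) : K.Alt (m + 1) →ₗ[ℚ] K.Alt m where
  toFun φ := ⟨fun x => if K.Cell (Set.range x) then ∑ᶠ v, φ.1 (Fin.cons v x) else 0, by
    refine ⟨fun x σ => ?_, fun x hx => ?_⟩
    · simp only [σ.surjective.range_comp, (Alt.isAlt φ).cons_comp]
      split_ifs with h
      · rw [mul_finsum]
      · simp
    · beta_reduce at hx
      split_ifs at hx with h
      · refine ⟨?_, h⟩
        obtain ⟨v, hv⟩ : ∃ v, φ.1 (Fin.cons v x) ≠ 0 := by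
          by_contra! h0
          exact hx (finsum_eq_zero_of_forall_eq_zero h0)
        exact (Fin.cons_injective_iff.1 ((Alt.injective φ) hv)).2
      · exact absurd rfl hx⟩
  map_add' φ ψ := by
    ext x
    by_cases h : K.Cell (Set.range x)
    · simp [h, finsum_add_distrib ((Alt.finite_support φ) h) ((Alt.finite_support ψ) h)]
    · simp [h]
  map_smul' c φ := by
    ext x
    by_cases h : K.Cell (Set.range x)
    · simp [h, mul_finsum]
    · simp [h]

theorem bdry_apply {m : ℕ} (φ : K.Alt (m + 1)) {x : Fin m → P} (hx : K.Cell (Set.range x)) :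
    (bdry m φ).1 x = ∑ᶠ v, φ.1 (Fin.cons v x) := by
  simp [bdry, hx]

theorem bdry_apply_of_not {m : ℕ} (φ : K.Alt (m + 1)) {x : Fin m → P}
    (hx : ¬ K.Cell (Set.range x)) : (bdry m φ).1 x = 0 := by
  simp [bdry, hx]

theorem bdry_bdry {m : ℕ} (φ : K.Alt (m + 2)) : bdry m (bdry (m + 1) φ) = 0 := by
  ext x
  by_cases hx : K.Cell (Set.range x)
  swap
  · exact bdry_apply_of_not _ hx
  let F := (K.finite_link hx).toFinset
  have hF : ∀ {u v}, φ.1 (Fin.cons v (Fin.cons u x : Fin (m + 1) → P)) ≠ 0 → u ∈ F ∧ v ∈ F := by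
    intro u v h
    have hc := (Alt.cell_cons φ) h
    rw [Fin.range_cons] at hc
    simp only [F, Set.Finite.mem_toFinset, Set.mem_ofPred_eq]
    exact ⟨K.convex hx (Set.subset_insert _ _) (Set.subset_insert _ _) hc,
      K.convex hx (Set.subset_insert _ _)
        (Set.insert_subset_insert (Set.subset_insert _ _)) hc⟩
  have h1 : ∀ u, (bdry (m + 1) φ).1 (Fin.cons u x) =
      ∑ v ∈ F, φ.1 (Fin.cons v (Fin.cons u x : Fin (m + 1) → P)) := by
    intro u
    by_cases hu : K.Cell (Set.range (Fin.cons u x : Fin (m + 1) → P))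
    · rw [bdry_apply φ hu]
      exact finsum_eq_sum_of_support_subset _ fun v hv => (hF hv).2
    · rw [bdry_apply_of_not φ hu, eq_comm]
      refine Finset.sum_eq_zero fun v _ => ?_
      by_contra hne
      have := (hF hne).1
      simp only [F, Set.Finite.mem_toFinset, Set.mem_ofPred_eq] at this
      exact hu (by rwa [Fin.range_cons])
  rw [bdry_apply _ hx]
  simp_rw [h1]
  rw [finsum_eq_sum_of_support_subset (s := F)]
  · have h2 : ∑ u ∈ F, ∑ v ∈ F, φ.1 (Fin.cons v (Fin.cons u x : Fin (m + 1) → P)) =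
        -∑ u ∈ F, ∑ v ∈ F, φ.1 (Fin.cons v (Fin.cons u x : Fin (m + 1) → P)) := by
      conv_lhs => rw [Finset.sum_comm]
      simp_rw [← Finset.sum_neg_distrib]
      refine Finset.sum_congr rfl fun u _ => Finset.sum_congr rfl fun v _ => ?_
      exact (Alt.isAlt φ).cons_cons _ _ _
    change _ = (0 : ℚ)
    linarith
  · intro u hu
    obtain ⟨v, _, hv⟩ := Finset.exists_ne_zero_of_sum_ne_zero hu
    exact (hF hv).1

/-- The cochain obtained by antisymmetrizing. -/
def antisymmetrize {m : ℕ} (θ : P → (Fin m → P) → ℚ) (hθ : ∀ u, IsAlt (θ u))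
    (hc : ∀ u x, θ u x ≠ 0 → u ∉ Set.range x ∧ Function.Injective x ∧
      K.Cell (insert u (Set.range x))) : K.Alt (m + 1) :=
  ⟨_root_.antisymmetrize θ, isAlt_antisymmetrize θ hθ, fun y hy => by
    obtain ⟨u, x, rfl⟩ : ∃ u x, y = (Fin.cons u x : Fin (m + 1) → P) :=
      ⟨y 0, Fin.tail y, (Fin.cons_self_tail y).symm⟩
    rw [antisymmetrize_cons] at hy
    rw [Fin.cons_injective_iff, Fin.range_cons, and_assoc]
    by_cases h0 : θ u x = 0
    · rw [h0, zero_sub, neg_ne_zero] at hy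
      obtain ⟨j, _, hj⟩ := Finset.exists_ne_zero_of_sum_ne_zero hy
      obtain ⟨h1, h2, h3⟩ := hc _ _ hj
      have h4 : ∀ i, i ≠ j → x i = Function.update x j u i :=
        fun i hi => (Function.update_of_ne hi _ _).symm
      have h5 : Function.update x j u j = u := Function.update_self _ _ _
      refine ⟨?_, ?_, ?_⟩
      · rintro ⟨i, hi⟩
        by_cases hij : i = j
        · subst hij; exact h1 ⟨i, by rw [h5, hi]⟩
        · exact hij (h2 (by rw [h5, ← h4 i hij, hi]))
      · intro a b hab
        by_cases ha : a = j <;> by_cases hb : b = j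
        · rw [ha, hb]
        · subst ha; exact absurd ⟨b, by rw [← h4 b hb, hab]⟩ h1
        · subst hb; exact absurd ⟨a, by rw [← h4 a ha, hab]⟩ h1
        · exact h2 (by rw [← h4 a ha, ← h4 b hb, hab])
      · convert h3 using 1
        ext w
        simp only [Set.mem_insert_iff, Set.mem_range]
        constructor
        · rintro (rfl | ⟨i, rfl⟩)
          · exact Or.inr ⟨j, h5⟩
          · by_cases hi : i = j
            · left; rw [hi]
            · exact Or.inr ⟨i, (h4 i hi).symm⟩
        · rintro (rfl | ⟨i, rfl⟩)
          · exact Or.inr ⟨j, rfl⟩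
          · by_cases hi : i = j
            · left; rw [hi, h5]
            · exact Or.inr ⟨i, h4 i hi⟩
    · exact hc _ _ h0⟩

end CellFamily

namespace CellFamily

/-- A shelling-like decomposition of the cells into Boolean intervals `[W τ \ D τ, W τ]`,
ordered by a rank function. -/
structure Decomposition {P : Type} (K : CellFamily P) where
  /-- The index type of the intervals. -/
  T : Type
  /-- The largest cell of an interval. -/
  W : T → Set P
  /-- The vertices that may be removed without leaving an interval. -/
  D : T → Set P
  /-- The interval that contains a given cell. -/
  t : Set P → T
  /-- The rank of an interval. -/
  r : T → ℕ
  r_injective : Function.Injective r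
  D_subset : ∀ τ, D τ ⊆ W τ
  subset : ∀ {S}, K.Cell S → S ⊆ W (t S)
  diff_subset : ∀ {S}, K.Cell S → W (t S) \ S ⊆ D (t S)
  interval : ∀ {S τ}, S ⊆ W τ → W τ \ S ⊆ D τ → K.Cell S ∧ t S = τ
  antitone : ∀ {S S'}, K.Cell S → K.Cell S' → S ⊆ S' → r (t S') ≤ r (t S)

namespace Decomposition

variable {P : Type} {K : CellFamily P} (M : K.Decomposition)

theorem interval_insert {S : Set P} (hS : K.Cell S) {u : P} (hu : u ∈ M.W (M.t S)) :
    K.Cell (insert u S) ∧ M.t (insert u S) = M.t S :=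
  M.interval (Set.insert_subset hu (M.subset hS))
    ((Set.sdiff_subset_sdiff_right (Set.subset_insert _ _)).trans (M.diff_subset hS))

theorem interval_of_insert {S : Set P} {u : P} (hS : K.Cell (insert u S))
    (hu : u ∈ M.D (M.t (insert u S))) :
    K.Cell S ∧ M.t S = M.t (insert u S) := by
  refine M.interval ((Set.subset_insert _ _).trans (M.subset hS)) fun v hv => ?_
  by_cases h : v = u
  · rwa [h]
  · exact M.diff_subset hS ⟨hv.1, fun h' => h'.elim h hv.2⟩

open Classical in
theorem exists_step {m : ℕ} (φ : K.Alt (m + 1)) (hφ : bdry m φ = 0) (N : ℕ)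
    (hN : ∀ x, φ.1 x ≠ 0 → N ≤ M.r (M.t (Set.range x)))
    (hD : ∀ x : Fin (m + 1) → P, K.Cell (Set.range x) → (M.D (M.t (Set.range x))).Nonempty) :
    ∃ ψ : K.Alt (m + 2), (∀ y, ψ.1 y ≠ 0 → M.r (M.t (Set.range y)) = N) ∧
      ∀ x, K.Cell (Set.range x) → M.r (M.t (Set.range x)) ≤ N →
        (bdry (m + 1) ψ).1 x = φ.1 x := by
  by_cases hτ : ∃ τ, M.r τ = N ∧ (M.D τ).Nonempty
  swap
  · refine ⟨0, fun y hy => absurd rfl hy, fun x hx hr => ?_⟩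
    have : φ.1 x = 0 := by
      by_contra h
      exact hτ ⟨_, le_antisymm hr (hN x h), hD x hx⟩
    rw [this, map_zero]; rfl
  obtain ⟨τ, hτN, u, hu⟩ := hτ
  let θ : P → (Fin (m + 1) → P) → ℚ := fun w y =>
    if w = u ∧ u ∉ Set.range y ∧ K.Cell (insert u (Set.range y)) ∧
      M.t (insert u (Set.range y)) = τ then φ.1 y else 0
  have hθu : ∀ w y, w ≠ u → θ w y = 0 := fun w y h => by simp [θ, h]
  have hθalt : ∀ w, IsAlt (θ w) := fun w x σ => by
    simp only [θ, σ.surjective.range_comp, Alt.isAlt φ x σ]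
    split_ifs <;> simp
  have hθc : ∀ w x, θ w x ≠ 0 → w ∉ Set.range x ∧ Function.Injective x ∧
      K.Cell (insert w (Set.range x)) := by
    intro w x h
    simp only [θ] at h
    split_ifs at h with h'
    · rw [h'.1]; exact ⟨h'.2.1, Alt.injective φ h, h'.2.2.1⟩
    · exact absurd rfl h
  let ψ : K.Alt (m + 2) := CellFamily.antisymmetrize θ hθalt hθc
  have hψ : ∀ w x, ψ.1 (Fin.cons w x) = θ w x - ∑ j, θ (x j) (Function.update x j w) :=
    fun w x => antisymmetrize_cons θ w x
  have hψu : ∀ w x, u ∉ Set.range x → ψ.1 (Fin.cons w x) = θ w x := by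
    intro w x hx
    rw [hψ, Finset.sum_eq_zero, sub_zero]
    exact fun j _ => hθu _ _ fun h => hx ⟨j, h⟩
  have hψτ : ∀ y, ψ.1 y ≠ 0 → M.t (Set.range y) = τ := by
    intro y hy
    have key : ∀ w x, θ w x ≠ 0 → M.t (Set.range (Fin.cons w x : Fin (m + 2) → P)) = τ := by
      intro w x h
      simp only [θ] at h
      split_ifs at h with h'
      · rw [Fin.range_cons, h'.1]; exact h'.2.2.2
      · exact absurd rfl h
    by_cases hx : u ∈ Set.range y
    · by_contra hne
      refine hy (IsAlt.exists_perm_zero (ψ := 0) (Alt.isAlt ψ) (fun _ _ => by simp) y u hx ?_)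
      intro x hxy
      rw [← hxy] at hne
      rw [hψ]
      have h0 : θ u x = 0 := by
        by_contra h; exact hne (key _ _ h)
      rw [h0, Finset.sum_eq_zero]
      · simp
      · intro j _
        by_cases hj : x j = u
        · rw [Function.update_eq_self_iff.2 hj.symm, hj, h0]
        · exact hθu _ _ hj
    · have h1 : ψ.1 y = θ (y 0) (Fin.tail y) := by
        conv_lhs => rw [← Fin.cons_self_tail y]
        exact hψu _ _ fun h => hx (by
          obtain ⟨j, hj⟩ := h; exact ⟨j.succ, hj⟩)
      refine absurd ?_ hy
      rw [h1]
      exact hθu _ _ fun h => hx ⟨0, h⟩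
  refine ⟨ψ, fun y hy => by rw [hψτ y hy, hτN], fun x hx hr => ?_⟩
  rcases hr.lt_or_eq with hlt | heq
  · have h1 : φ.1 x = 0 := by
      by_contra h; exact absurd (hN x h) (not_le.2 hlt)
    rw [bdry_apply _ hx, h1]
    refine finsum_eq_zero_of_forall_eq_zero fun v => ?_
    by_contra h
    have h2 := M.antitone hx (Alt.cell_cons ψ h) (Set.subset_insert _ _)
    rw [← Fin.range_cons, hψτ _ h, hτN] at h2
    omega
  have htx : M.t (Set.range x) = τ := M.r_injective (heq.trans hτN.symm)
  by_cases hux : u ∈ Set.range x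
  · refine IsAlt.exists_perm_zero (Alt.isAlt _) (Alt.isAlt φ) x u hux fun y hy => ?_
    by_cases huy : u ∈ Set.range y
    · have hni : ¬ Function.Injective (Fin.cons u y : Fin (m + 1) → P) := by
        rw [Fin.cons_injective_iff]; exact fun h => h.1 huy
      have h1 : (bdry (m + 1) ψ).1 (Fin.cons u y) = 0 := by
        by_contra h; exact hni (Alt.injective _ h)
      have h2 : φ.1 (Fin.cons u y) = 0 := by
        by_contra h; exact hni (Alt.injective _ h)
      rw [h1, h2]
    rw [← hy] at hx htx
    have hxi := hx
    rw [Fin.range_cons] at hxi htx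
    obtain ⟨hyc, hyt⟩ := M.interval_of_insert hxi (by rwa [htx])
    rw [htx] at hyt
    have hsum : ∑ᶠ v, φ.1 (Fin.cons v y) = 0 := by
      rw [← bdry_apply φ hyc, hφ]; rfl
    rw [bdry_apply ψ hx]
    have hterm : ∀ v, ψ.1 (Fin.cons v (Fin.cons u y : Fin (m + 1) → P)) =
        -φ.1 (Fin.cons v y) + Pi.single (M := fun _ => ℚ) u (φ.1 (Fin.cons u y)) v := by
      intro v
      rw [(Alt.isAlt ψ).cons_cons]
      by_cases hvu : v = u
      · subst hvu
        have : ψ.1 (Fin.cons v (Fin.cons v y : Fin (m + 1) → P)) = 0 := by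
          by_contra h
          exact Alt.notMem_cons ψ h ⟨0, rfl⟩
        simp [this]
      · rw [Pi.single_eq_of_ne hvu, add_zero, hψu]
        · congr 1
          simp only [θ]
          split_ifs with h
          · rfl
          · by_contra hne
            have hne' : φ.1 (Fin.cons v y) ≠ 0 := fun h => hne h.symm
            have hvc := Alt.cell_cons φ hne'
            have h1 := M.antitone hyc hvc (Set.subset_insert _ _)
            have h2 := hN _ hne'
            rw [Fin.range_cons] at h2
            rw [hyt, hτN] at h1
            have h3 : M.t (insert v (Set.range y)) = τ :=
              M.r_injective (by rw [hτN]; omega)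
            have h4 := M.interval_insert hvc (u := u) (by rw [h3]; exact M.D_subset _ hu)
            rw [h3] at h4
            refine h ⟨trivial, ?_, ?_, ?_⟩
            · rw [Fin.range_cons]; exact fun h' => h'.elim (fun h => hvu h.symm) huy
            · rw [Fin.range_cons]; exact h4.1
            · rw [Fin.range_cons]; exact h4.2
        · rw [Fin.range_cons]; exact fun h' => h'.elim (fun h => hvu h.symm) huy
    simp_rw [hterm]
    rw [finsum_add_distrib, finsum_neg_distrib, hsum, finsum_eq_single _ u]
    · simp
    · intro v hv; exact Pi.single_eq_of_ne hv _
    · have := Alt.finite_support φ hyc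
      rwa [← Function.support_neg] at this
    · exact (Set.finite_singleton u).subset Pi.support_single_subset
  · rw [bdry_apply ψ hx]
    simp_rw [fun v => hψu v x hux]
    rw [finsum_eq_single _ u fun v hv => hθu v x hv]
    have := M.interval_insert hx (u := u) (by rw [htx]; exact M.D_subset _ hu)
    rw [htx] at this
    exact if_pos ⟨rfl, hux, this⟩

theorem exists_bdry_eq {m : ℕ} (φ : K.Alt (m + 1)) (hφ : bdry m φ = 0)
    (hD : ∀ x : Fin (m + 1) → P, K.Cell (Set.range x) → (M.D (M.t (Set.range x))).Nonempty) :
    ∃ ψ : K.Alt (m + 2), bdry (m + 1) ψ = φ := by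
  choose s hs1 hs2 using fun (φ : K.Alt (m + 1)) (hφ : bdry m φ = 0) (N : ℕ)
    (hN : ∀ x, φ.1 x ≠ 0 → N ≤ M.r (M.t (Set.range x))) => M.exists_step φ hφ N hN hD
  let seq : (N : ℕ) → {φ' : K.Alt (m + 1) // bdry m φ' = 0 ∧
      ∀ x, φ'.1 x ≠ 0 → N ≤ M.r (M.t (Set.range x))} := fun N =>
    Nat.rec ⟨φ, hφ, fun _ _ => Nat.zero_le _⟩ (fun N φ' =>
      ⟨φ'.1 - bdry (m + 1) (s φ'.1 φ'.2.1 N φ'.2.2), by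
        rw [map_sub, bdry_bdry, sub_zero]; exact φ'.2.1, by
        intro x hx
        by_contra hlt
        apply hx
        by_cases hc : K.Cell (Set.range x)
        · exact sub_eq_zero.2 (hs2 φ'.1 φ'.2.1 N φ'.2.2 x hc (by omega)).symm
        · refine sub_eq_zero.2 ?_
          rw [bdry_apply_of_not _ hc]
          by_contra h
          exact hc (Alt.cell _ h)⟩) N
  let ψ' : ℕ → K.Alt (m + 2) := fun N => s (seq N).1 (seq N).2.1 N (seq N).2.2
  have hseq : ∀ N, (seq (N + 1)).1 = (seq N).1 - bdry (m + 1) (ψ' N) := fun N => rfl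
  have hψ' : ∀ N y, (ψ' N).1 y ≠ 0 → M.r (M.t (Set.range y)) = N := fun N => hs1 _ _ _ _
  let ψ : K.Alt (m + 2) := ⟨fun y => (ψ' (M.r (M.t (Set.range y)))).1 y, fun x σ => by
    simp only [σ.surjective.range_comp]
    exact Alt.isAlt _ _ _, fun x hx => ⟨Alt.injective _ hx, Alt.cell _ hx⟩⟩
  have hsum : ∀ R, ∑ N ∈ Finset.range R, bdry (m + 1) (ψ' N) = φ - (seq R).1 := by
    intro R
    induction R with
    | zero => exact (sub_self φ).symm
    | succ R ih => rw [Finset.sum_range_succ, ih, hseq]; abel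
  refine ⟨ψ, ?_⟩
  ext x
  by_cases hx : K.Cell (Set.range x)
  swap
  · rw [bdry_apply_of_not _ hx]
    by_contra h
    exact hx (Alt.cell φ (Ne.symm h))
  set R := M.r (M.t (Set.range x)) with hR
  have h1 : (seq (R + 1)).1.1 x = 0 := by
    by_contra h
    have := (seq (R + 1)).2.2 x h
    omega
  have h2 : φ.1 x = (∑ N ∈ Finset.range (R + 1), bdry (m + 1) (ψ' N)).1 x := by
    rw [hsum]
    simp [h1]
  rw [h2, ← map_sum, bdry_apply _ hx, bdry_apply _ hx]
  refine finsum_congr fun v => ?_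
  have h3 : ((∑ N ∈ Finset.range (R + 1), ψ' N : K.Alt (m + 2)) : (Fin (m + 2) → P) → ℚ)
      (Fin.cons v x) = ∑ N ∈ Finset.range (R + 1), (ψ' N).1 (Fin.cons v x) := by
    simp
  rw [h3]
  by_cases hc : K.Cell (insert v (Set.range x))
  · have h4 := M.antitone hx hc (Set.subset_insert _ _)
    rw [Finset.sum_eq_single (M.r (M.t (insert v (Set.range x))))]
    · change (ψ' (M.r (M.t (Set.range (Fin.cons v x : Fin (m + 2) → P))))).1 _ = _
      rw [Fin.range_cons]
    · intro N _ hN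
      by_contra h
      have := hψ' N _ h
      rw [Fin.range_cons] at this
      exact hN this.symm
    · intro h
      simp at h
      omega
  · have h5 : ∀ χ : K.Alt (m + 2), χ.1 (Fin.cons v x) = 0 := fun χ => by
      by_contra h; exact hc (Alt.cell_cons χ h)
    rw [h5 ψ, Finset.sum_eq_zero fun N _ => h5 _]

theorem eq_zero_of_bdry_eq_zero {m : ℕ} (φ : K.Alt (m + 1)) (hφ : bdry m φ = 0)
    (hW : ∀ x : Fin (m + 1) → P, Function.Injective x → K.Cell (Set.range x) →
      Set.range x = M.W (M.t (Set.range x)))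
    (h0 : ∀ x, M.D (M.t (Set.range x)) = ∅ → φ.1 x = 0) : φ = 0 := by
  have key : ∀ N x, M.r (M.t (Set.range x)) = N → φ.1 x = 0 := by
    intro N
    induction N using Nat.strong_induction_on with
    | _ N ih =>
      intro x hxN
      by_contra hne
      obtain ⟨u, hu⟩ : (M.D (M.t (Set.range x))).Nonempty := by
        rw [Set.nonempty_iff_ne_empty]
        exact fun h => hne (h0 x h)
      have hx := Alt.cell φ hne
      have hux : u ∈ Set.range x := by
        rw [hW x (Alt.injective φ hne) hx]; exact M.D_subset _ hu
      refine hne (IsAlt.exists_perm_zero (ψ := 0) (Alt.isAlt φ) (fun _ _ => by simp) x u hux ?_)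
      intro y hy
      rw [← hy] at hx hu hxN
      rw [Fin.range_cons] at hx hu hxN
      obtain ⟨hyc, hyt⟩ := M.interval_of_insert hx hu
      by_contra hney
      have hney : φ.1 (Fin.cons u y) ≠ 0 := hney
      have hsum : ∑ᶠ v, φ.1 (Fin.cons v y) = 0 := by
        rw [← bdry_apply φ hyc, hφ]; rfl
      rw [finsum_eq_single _ u] at hsum
      · exact hney hsum
      · intro v hv
        by_contra hne'
        have hvc := Alt.cell_cons φ hne'
        have h1 := M.antitone hyc hvc (Set.subset_insert _ _)
        rw [hyt, hxN] at h1
        rcases h1.lt_or_eq with hlt | heq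
        · refine hne' (ih _ hlt _ ?_)
          rw [Fin.range_cons]
        · have h3 := M.r_injective (heq.trans hxN.symm)
          have h4 := hW _ (Alt.injective φ hne') (by rwa [Fin.range_cons])
          rw [Fin.range_cons, h3] at h4
          have h5 := hW _ (Alt.injective φ hney) (by rwa [Fin.range_cons])
          rw [Fin.range_cons, ← h4] at h5
          have : v ∈ insert u (Set.range y) := by rw [h5]; exact Set.mem_insert _ _
          exact this.elim hv (Alt.notMem_cons φ hne')
  ext x
  exact key _ x rfl

end Decomposition
end CellFamily

section Shift

variable {k G V V' : Type} [CommRing k] [Group G] [AddCommGroup V] [Module k V]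
  [AddCommGroup V'] [Module k V'] {σ : Representation k G V'} {ρ : Representation k G V}

/-- The inclusion of a subrepresentation. -/
def Subrepresentation.incl (U : Subrepresentation ρ) :
    U.toRepresentation.IntertwiningMap ρ where
  toLinearMap := U.toSubmodule.subtype
  isIntertwining' _ := rfl

/-- An intertwining map with restricted codomain. -/
def Representation.IntertwiningMap.codRestrictSub (d : ρ.IntertwiningMap σ)
    (W : Subrepresentation σ) (hW : ∀ v, d v ∈ W.toSubmodule) :
    ρ.IntertwiningMap W.toRepresentation where
  toLinearMap := d.toLinearMap.codRestrict W.toSubmodule hW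
  isIntertwining' g := by
    ext v
    exact LinearMap.congr_fun (d.isIntertwining' g) v

theorem groupCohomology.subsingleton_succ_ker (d : ρ.IntertwiningMap σ) (U : Subrepresentation ρ)
    (W : Subrepresentation σ) (hU : ∀ v, v ∈ U.toSubmodule ↔ d v = 0)
    (hW : ∀ w, w ∈ W.toSubmodule ↔ ∃ v, d v = w) (n : ℕ)
    (hV : Subsingleton (groupCohomology (Rep.of ρ) (n + 1)))
    (hn : Subsingleton (groupCohomology (Rep.of W.toRepresentation) n)) :
    Subsingleton (groupCohomology (Rep.of U.toRepresentation) (n + 1)) := by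
  refine groupCohomology.subsingleton_succ_of_shortExact (Rep.ofHom U.incl)
    (Rep.ofHom (d.codRestrictSub W fun v => (hW _).2 ⟨v, rfl⟩)) ?_ ?_ ?_ ?_ n hV hn
  · exact Subtype.val_injective
  · rintro ⟨w, hw⟩
    obtain ⟨v, rfl⟩ := (hW w).1 hw
    exact ⟨v, rfl⟩
  · rintro ⟨u, hu⟩
    exact Subtype.ext ((hU u).1 hu)
  · intro b hb
    exact ⟨⟨b, (hU b).2 (congrArg Subtype.val hb)⟩, rfl⟩

theorem groupCohomology.subsingleton_one_ker (d : ρ.IntertwiningMap σ) (U : Subrepresentation ρ)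
    (hU : ∀ v, v ∈ U.toSubmodule ↔ d v = 0)
    (hV : Subsingleton (groupCohomology (Rep.of ρ) 1))
    (hlift : ∀ v, (∀ g, σ g (d v) = d v) → ∃ v', (∀ g, ρ g v' = v') ∧ d v' = d v) :
    Subsingleton (groupCohomology (Rep.of U.toRepresentation) 1) := by
  let W : Subrepresentation σ := ⟨LinearMap.range d.toLinearMap, by
    rintro g _ ⟨v, rfl⟩
    exact ⟨ρ g v, LinearMap.congr_fun (d.isIntertwining' g) v⟩⟩
  refine groupCohomology.subsingleton_one_of_shortExact (Rep.ofHom U.incl)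
    (Rep.ofHom (d.codRestrictSub W fun v => ⟨v, rfl⟩)) ?_ ?_ ?_ ?_ hV ?_
  · exact Subtype.val_injective
  · rintro ⟨_, v, rfl⟩
    exact ⟨v, rfl⟩
  · rintro ⟨u, hu⟩
    exact Subtype.ext ((hU u).1 hu)
  · intro b hb
    exact ⟨⟨b, (hU b).2 (congrArg Subtype.val hb)⟩, rfl⟩
  · rintro ⟨_, v, rfl⟩ hc
    obtain ⟨v', h1, h2⟩ := hlift v fun g => congrArg Subtype.val (hc g)
    exact ⟨v', h1, Subtype.ext h2⟩

end Shift

namespace CellFamily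

open scoped Pointwise

variable {G P : Type} [Group G] [MulAction G P] {K : CellFamily P}

/-- The action of a group on alternating functions, twisted by a character. -/
def altRep (hK : ∀ (g : G) S, K.Cell S → K.Cell (g • S)) (χ : G →* ℚ) (m : ℕ) :
    Representation ℚ G (K.Alt m) where
  toFun g :=
    { toFun := fun φ => ⟨fun x => χ g * φ.1 (g⁻¹ • x), by
        refine ⟨fun x s => ?_, fun x hx => ?_⟩
        · have : g⁻¹ • (x ∘ s) = (g⁻¹ • x) ∘ s := rfl
          beta_reduce
          rw [this, Alt.isAlt φ, mul_left_comm]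
        · have h := right_ne_zero_of_mul hx
          refine ⟨fun i j hij => Alt.injective φ h (by simp [hij]), ?_⟩
          have := hK g _ (Alt.cell φ h)
          rwa [← Set.range_smul, show (fun i => g • (g⁻¹ • x) i) = x from
            smul_inv_smul g x] at this⟩
      map_add' := fun φ ψ => by ext x; simp [mul_add]
      map_smul' := fun c φ => by ext x; simp [mul_left_comm] }
  map_one' := by ext φ x; simp
  map_mul' g h := by ext φ x; simp [mul_smul, mul_assoc]

theorem cell_smul_iff (hK : ∀ (g : G) S, K.Cell S → K.Cell (g • S)) (g : G) (S : Set P) :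
    K.Cell (g • S) ↔ K.Cell S :=
  ⟨fun h => by simpa using hK g⁻¹ _ h, hK g S⟩

variable (hK : ∀ (g : G) S, K.Cell S → K.Cell (g • S)) (χ : G →* ℚ)

theorem altRep_apply {m : ℕ} (g : G) (φ : K.Alt m) (x : Fin m → P) :
    (altRep hK χ m g φ).1 x = χ g * φ.1 (g⁻¹ • x) := rfl

/-- The boundary as an intertwining map. -/
def bdryHom (m : ℕ) : (altRep hK χ (m + 1)).IntertwiningMap (altRep hK χ m) where
  toLinearMap := bdry m
  isIntertwining' g := by
    ext φ x
    have hr : Set.range (g⁻¹ • x) = g⁻¹ • Set.range x := Set.range_smul _ _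
    by_cases hx : K.Cell (Set.range x)
    · have hx' : K.Cell (Set.range (g⁻¹ • x)) := by rw [hr]; exact hK _ _ hx
      simp only [LinearMap.comp_apply, altRep_apply]
      rw [bdry_apply _ hx, bdry_apply _ hx', mul_finsum]
      simp only [altRep_apply]
      refine Eq.trans (finsum_congr fun v => ?_) (finsum_comp_equiv (MulAction.toPerm g⁻¹))
      congr 1
      refine congrArg φ.1 (funext fun i => ?_)
      refine Fin.cases ?_ (fun j => ?_) i <;> simp
    · have hx' : ¬ K.Cell (Set.range (g⁻¹ • x)) := by rwa [hr, cell_smul_iff hK]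
      simp only [LinearMap.comp_apply, altRep_apply]
      rw [bdry_apply_of_not _ hx, bdry_apply_of_not _ hx', mul_zero]

open Classical in
/-- Averaging a family of cochains over the finitely many `γ` such that `κ (γ⁻¹ • S)`. -/
def average (κ : Set P → Prop)
    (hfin : ∀ S, K.Cell S → {γ : G | κ (γ⁻¹ • S)}.Finite) (m : ℕ) :
    (G → K.Alt m) →ₗ[ℚ] K.Alt m where
  toFun F := ⟨fun x => if K.Cell (Set.range x) then
      (∑ᶠ γ : G, if κ (γ⁻¹ • Set.range x) then (F γ).1 x else 0) /
        ({γ : G | κ (γ⁻¹ • Set.range x)}.ncard : ℚ) else 0, by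
    refine ⟨fun x s => ?_, fun x hx => ?_⟩
    · simp only [s.surjective.range_comp]
      split_ifs
      · rw [← mul_div_assoc, mul_finsum]
        congr 1
        refine finsum_congr fun γ => ?_
        rw [Alt.isAlt (F γ)]
        simp
      · simp
    · beta_reduce at hx
      split_ifs at hx with h
      · refine ⟨?_, h⟩
        obtain ⟨γ, hγ⟩ : ∃ γ, (if κ (γ⁻¹ • Set.range x) then (F γ).1 x else 0) ≠ 0 := by
          by_contra! h0
          rw [finsum_eq_zero_of_forall_eq_zero h0, zero_div] at hx
          exact hx rfl
        split_ifs at hγ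
        · exact Alt.injective _ hγ
        · exact absurd rfl hγ
      · exact absurd rfl hx⟩
  map_add' F F' := by
    ext x
    by_cases h : K.Cell (Set.range x)
    · simp only [h, if_true, Pi.add_apply, Submodule.coe_add]
      rw [← add_div, ← finsum_add_distrib]
      · congr 1
        refine finsum_congr fun γ => ?_
        split_ifs <;> simp
      all_goals
        refine (hfin _ h).subset fun γ hγ => ?_
        by_contra h'
        exact hγ (if_neg h')
    · simp [h]
  map_smul' c F := by
    ext x
    by_cases h : K.Cell (Set.range x)
    · simp [h, mul_finsum, mul_div_assoc']
    · simp [h]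

variable (κ : Set P → Prop) (hfin : ∀ S, K.Cell S → {γ : G | κ (γ⁻¹ • S)}.Finite)

open Classical in
theorem average_apply {m : ℕ} (F : G → K.Alt m) {x : Fin m → P} (hx : K.Cell (Set.range x)) :
    (average κ hfin m F).1 x =
      (∑ᶠ γ : G, if κ (γ⁻¹ • Set.range x) then (F γ).1 x else 0) /
        ({γ : G | κ (γ⁻¹ • Set.range x)}.ncard : ℚ) := by
  simp [average, hx]

theorem average_apply_of_not {m : ℕ} (F : G → K.Alt m) {x : Fin m → P}
    (hx : ¬ K.Cell (Set.range x)) : (average κ hfin m F).1 x = 0 := by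
  simp [average, hx]

theorem average_apply_const {m : ℕ} (F : G → K.Alt m) {x : Fin m → P}
    (hx : K.Cell (Set.range x)) (hne : ∃ γ : G, κ (γ⁻¹ • Set.range x)) (c : ℚ)
    (hc : ∀ γ, κ (γ⁻¹ • Set.range x) → (F γ).1 x = c) :
    (average κ hfin m F).1 x = c := by
  classical
  rw [average_apply _ _ _ hx, finsum_eq_sum_of_support_subset (s := (hfin _ hx).toFinset),
    Set.ncard_eq_toFinset_card _ (hfin _ hx)]
  · rw [Finset.sum_congr rfl (g := fun _ => c), Finset.sum_const, nsmul_eq_mul]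
    · refine mul_div_cancel_left₀ _ (Nat.cast_ne_zero.2 (Finset.card_ne_zero.2 ?_))
      obtain ⟨γ, hγ⟩ := hne
      exact ⟨γ, by simpa using hγ⟩
    · intro γ hγ
      have hγ' : κ (γ⁻¹ • Set.range x) := by simpa using hγ
      rw [if_pos hγ', hc _ hγ']
  · intro γ hγ
    by_contra h'
    exact hγ (if_neg (by simpa using h'))

theorem altRep_average {m : ℕ} (h : G) (F : G → K.Alt m) :
    altRep hK χ m h (average κ hfin m F) =
      average κ hfin m (fun γ => altRep hK χ m h (F (h⁻¹ * γ))) := by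
  classical
  ext x
  rw [altRep_apply]
  have hr : Set.range (h⁻¹ • x) = h⁻¹ • Set.range x := Set.range_smul _ _
  by_cases hx : K.Cell (Set.range x)
  · have hx' : K.Cell (Set.range (h⁻¹ • x)) := by rw [hr]; exact hK _ _ hx
    rw [average_apply _ _ _ hx, average_apply _ _ _ hx', ← mul_div_assoc, mul_finsum]
    congr 1
    · rw [← finsum_comp_equiv (Equiv.mulLeft h⁻¹)]
      refine finsum_congr fun γ => ?_
      simp [hr, mul_smul, altRep_apply]
    · congr 1
      rw [← Set.ncard_image_of_injective _ (mul_right_injective h)]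
      congr 1
      ext γ
      simp only [Set.image_mul_left, Set.mem_preimage, Set.mem_ofPred_eq, hr]
      simp [mul_smul]
  · have hx' : ¬ K.Cell (Set.range (h⁻¹ • x)) := by rwa [hr, cell_smul_iff hK]
    rw [average_apply_of_not _ _ _ hx, average_apply_of_not _ _ _ hx', mul_zero]

theorem altRep_acyclic (hfin : ∀ S, K.Cell S → {γ : G | κ (γ⁻¹ • S)}.Finite)
    (hne : ∀ S, K.Cell S → ∃ γ : G, κ (γ⁻¹ • S)) (m n : ℕ) :
    Subsingleton (groupCohomology (Rep.of (altRep hK χ m)) (n + 1)) := by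
  let L : (G → K.Alt m) →ₗ[ℚ] (G → K.Alt m) :=
    LinearMap.pi fun γ => (altRep hK χ m γ) ∘ₗ LinearMap.proj γ⁻¹
  refine groupCohomology.subsingleton_of_retract _ (average κ hfin m ∘ₗ L) ?_ ?_ n
  · intro φ
    ext x
    by_cases hx : K.Cell (Set.range x)
    · refine average_apply_const κ hfin _ hx (hne _ hx) _ fun γ _ => ?_
      simp [L]
    · refine (average_apply_of_not κ hfin _ hx).trans ?_
      by_contra h
      exact hx (Alt.cell φ (Ne.symm h))
  · intro h F
    rw [LinearMap.comp_apply, LinearMap.comp_apply, altRep_average]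
    congr 1
    ext1 γ
    simp only [L, LinearMap.pi_apply, LinearMap.comp_apply, LinearMap.proj_apply]
    rw [_root_.mul_inv_rev, inv_inv, ← Module.End.mul_apply, ← map_mul, mul_inv_cancel_left]

theorem subsingleton_groupCohomology_five
    (hacyc : ∀ m n, Subsingleton (groupCohomology (Rep.of (altRep hK χ m)) (n + 1)))
    (hexact : ∀ m, m < 9 → ∀ φ : K.Alt (m + 1), bdry m φ = 0 → ∃ ψ, bdry (m + 1) ψ = φ)
    (ε : K.Alt 10) (hε : ∀ g, altRep hK χ 10 g ε = ε) (hε0 : ε ≠ 0) (hdε : bdry 9 ε = 0)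
    (hker : ∀ φ : K.Alt 10, bdry 9 φ = 0 → ∃ c : ℚ, φ = c • ε)
    (hlift : ∀ φ : K.Alt 6, (∀ g, altRep hK χ 5 g (bdry 5 φ) = bdry 5 φ) →
      ∃ ψ : K.Alt 6, (∀ g, altRep hK χ 6 g ψ = ψ) ∧ bdry 5 ψ = bdry 5 φ) :
    Subsingleton (groupCohomology (Rep.trivial ℚ G ℚ) 5) := by
  let Z : ∀ m, Subrepresentation (altRep hK χ (m + 1)) := fun m =>
    ⟨LinearMap.ker (bdry m), fun g φ hφ => by
      have := LinearMap.congr_fun ((bdryHom hK χ m).isIntertwining' g) φ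
      refine this.trans ?_
      change altRep hK χ m g (bdry m φ) = 0
      rw [LinearMap.mem_ker.1 hφ, map_zero]⟩
  have hZ : ∀ m v, v ∈ (Z m).toSubmodule ↔ bdryHom hK χ m v = 0 := fun m v => Iff.rfl
  have hR : ∀ m, m < 9 → ∀ w, w ∈ (Z m).toSubmodule ↔ ∃ v, bdryHom hK χ (m + 1) v = w := by
    intro m hm w
    refine ⟨hexact m hm w, ?_⟩
    rintro ⟨v, rfl⟩
    exact bdry_bdry v
  have h1 := groupCohomology.subsingleton_one_ker (bdryHom hK χ 5) (Z 5) (hZ 5) (hacyc 6 0) hlift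
  have h2 := groupCohomology.subsingleton_succ_ker _ _ _ (hZ 6) (hR 5 (by norm_num)) 1
    (hacyc 7 1) h1
  have h3 := groupCohomology.subsingleton_succ_ker _ _ _ (hZ 7) (hR 6 (by norm_num)) 2
    (hacyc 8 2) h2
  have h4 := groupCohomology.subsingleton_succ_ker _ _ _ (hZ 8) (hR 7 (by norm_num)) 3
    (hacyc 9 3) h3
  let e : (Representation.trivial ℚ G ℚ).IntertwiningMap (altRep hK χ 10) :=
    { toLinearMap := LinearMap.toSpanSingleton ℚ _ ε
      isIntertwining' := fun g => by
        ext1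
        simp [hε] }
  refine groupCohomology.subsingleton_succ_of_shortExact (Rep.ofHom e)
    (Rep.ofHom ((bdryHom hK χ 9).codRestrictSub (Z 8) fun v => bdry_bdry v)) ?_ ?_ ?_ ?_ 4
    (hacyc 10 4) h4
  · exact smul_left_injective ℚ hε0
  · rintro ⟨w, hw⟩
    obtain ⟨v, hv⟩ := hexact 8 (by norm_num) w hw
    exact ⟨v, Subtype.ext hv⟩
  · intro a
    refine Subtype.ext ?_
    change bdry 9 ((a : ℚ) • ε) = 0
    rw [map_smul, hdε, smul_zero]
  · intro b hb
    obtain ⟨c, rfl⟩ := hker b (congrArg Subtype.val hb)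
    exact ⟨c, rfl⟩

end CellFamily

namespace CellFamily

open scoped Pointwise

variable {G P : Type} [Group G] [MulAction G P] {K : CellFamily P}
  (hK : ∀ (g : G) S, K.Cell S → K.Cell (g • S)) (χ : G →* ℚ)

theorem bdry_average_apply (κ : Set P → Prop)
    (hfin : ∀ S, K.Cell S → {γ : G | κ (γ⁻¹ • S)}.Finite) {m : ℕ} (F : G → K.Alt (m + 1))
    {x : Fin m → P} (hx : K.Cell (Set.range x))
    (hκ : ∀ v, K.Cell (insert v (Set.range x)) → ∀ γ : G,
      κ (γ⁻¹ • insert v (Set.range x)) ↔ κ (γ⁻¹ • Set.range x)) :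
    (bdry m (average κ hfin (m + 1) F)).1 x =
      (average κ hfin m fun γ => bdry m (F γ)).1 x := by
  classical
  rw [bdry_apply _ hx, average_apply _ _ _ hx]
  simp only [bdry_apply _ hx]
  set A := (hfin _ hx).toFinset
  set B := (K.finite_link hx).toFinset
  have hA : ∀ {γ : G}, γ ∈ A ↔ κ (γ⁻¹ • Set.range x) := by simp [A]
  have hB : ∀ {v}, v ∈ B ↔ K.Cell (insert v (Set.range x)) := by simp [B]
  have h1 : ∀ v, (average κ hfin (m + 1) F).1 (Fin.cons v x) =
      (∑ γ ∈ A, (F γ).1 (Fin.cons v x)) / ({γ : G | κ (γ⁻¹ • Set.range x)}.ncard : ℚ) := by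
    intro v
    have hr : Set.range (Fin.cons v x : Fin (m + 1) → P) = insert v (Set.range x) :=
      Fin.range_cons _ _
    by_cases hv : K.Cell (insert v (Set.range x))
    · rw [average_apply _ _ _ (by rwa [hr])]
      simp only [hr, hκ v hv]
      rw [finsum_eq_sum_of_support_subset (s := A)]
      · congr 1
        exact Finset.sum_congr rfl fun γ hγ => if_pos (hA.1 hγ)
      · intro γ hγ
        by_contra h
        exact hγ (if_neg fun h' => h (hA.2 h'))
    · rw [average_apply_of_not _ _ _ (by rwa [hr]), Finset.sum_eq_zero, zero_div]
      intro γ _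
      by_contra h
      exact hv (Alt.cell_cons _ h)
  have h2 : ∀ γ, ∑ᶠ v, (F γ).1 (Fin.cons v x) = ∑ v ∈ B, (F γ).1 (Fin.cons v x) := fun γ =>
    finsum_eq_sum_of_support_subset _ fun v hv => hB.2 (Alt.cell_cons _ hv)
  simp only [h1, h2]
  rw [finsum_eq_sum_of_support_subset (s := B), finsum_eq_sum_of_support_subset (s := A),
    ← Finset.sum_div, Finset.sum_comm]
  · congr 1
    exact Finset.sum_congr rfl fun γ hγ => (if_pos (hA.1 hγ)).symm
  · intro γ hγ
    by_contra h
    exact hγ (if_neg fun h' => h (hA.2 h'))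
  · intro v hv
    by_contra h
    refine hv ?_
    beta_reduce
    rw [Finset.sum_eq_zero, zero_div]
    intro γ _
    by_contra h'
    exact h (hB.2 (Alt.cell_cons _ h'))

theorem exists_invariant_eq_on_center {m : ℕ} {c : P}
    (hfin : ∀ S, K.Cell S → {γ : G | c ∈ γ⁻¹ • S}.Finite)
    (huniq : ∀ S, K.Cell S → ∀ γ γ' : G, γ • c ∈ S → γ' • c ∈ S → γ • c = γ' • c)
    (φ : K.Alt (m + 1)) (hφ : ∀ g, altRep hK χ m g (bdry m φ) = bdry m φ) :
    ∃ ψ : K.Alt (m + 1), (∀ g, altRep hK χ (m + 1) g ψ = ψ) ∧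
      ∀ x : Fin m → P, (∃ γ : G, γ • c ∈ Set.range x) → (bdry m ψ).1 x = (bdry m φ).1 x := by
  have hmem : ∀ (γ : G) (S : Set P), c ∈ γ⁻¹ • S ↔ γ • c ∈ S := fun γ S => by
    rw [Set.mem_smul_set_iff_inv_smul_mem, inv_inv]
  refine ⟨average (fun S => c ∈ S) hfin (m + 1) fun γ => altRep hK χ (m + 1) γ φ, ?_, ?_⟩
  · intro g
    rw [altRep_average]
    congr 1
    ext1 γ
    rw [← Module.End.mul_apply, ← map_mul, mul_inv_cancel_left]
  · rintro x ⟨γ₀, hγ₀⟩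
    by_cases hx : K.Cell (Set.range x)
    · rw [bdry_average_apply _ _ _ hx]
      · refine average_apply_const _ _ _ hx ⟨γ₀, (hmem _ _).2 hγ₀⟩ _ fun γ _ => ?_
        have := LinearMap.congr_fun ((bdryHom hK χ m).isIntertwining' γ) φ
        exact congrArg (fun ψ => ψ.1 x) (this.trans (hφ γ))
      · intro v hv γ
        rw [hmem, hmem]
        refine ⟨fun h => ?_, fun h => Set.mem_insert_of_mem _ h⟩
        rwa [huniq _ hv γ γ₀ h (Set.mem_insert_of_mem _ hγ₀)]
    · rw [bdry_apply_of_not _ hx, bdry_apply_of_not _ hx]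

/-- A tuple fixed by an element on which the character is `-1`. -/
def Flip {m : ℕ} (x : Fin m → P) : Prop := ∃ g : G, g • x = x ∧ χ g = -1

theorem Flip.eq_zero {m : ℕ} {x : Fin m → P} (hx : Flip χ x) {φ : K.Alt m}
    (hφ : ∀ g, altRep hK χ m g φ = φ) : φ.1 x = 0 := by
  obtain ⟨g, hg, hχ⟩ := hx
  have h := congrArg (fun ψ => ψ.1 x) (hφ g)
  simp only [altRep_apply, hχ] at h
  rw [inv_smul_eq_iff.2 hg.symm] at h
  linarith

theorem exists_invariant_of_vanish {m : ℕ} (C : P → Prop) (hC : ∀ (g : G) p, C (g • p) ↔ C p)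
    (hlink : ∀ S, K.Cell S → (∀ p ∈ S, ¬ C p) → S.ncard = m → 
      ∃ v, ¬ C v ∧ v ∉ S ∧ K.Cell (insert v S))
    (hflip : ∀ x : Fin m → P, Function.Injective x → K.Cell (Set.range x) →
      (∀ i, ¬ C (x i)) → Flip χ x ∨ ∀ u, ¬ C u → u ∉ Set.range x →
        K.Cell (insert u (Set.range x)) → ∀ j, K.Cell (Set.range (Function.update x j u)) →
          Flip χ (Function.update x j u))
    (φ : K.Alt m) (hφ : ∀ g, altRep hK χ m g φ = φ) (hφC : ∀ x, (∃ i, C (x i)) → φ.1 x = 0) :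
    ∃ ψ : K.Alt (m + 1), (∀ g, altRep hK χ (m + 1) g ψ = ψ) ∧ bdry m ψ = φ := by
  classical
  let L : Set P → Set P := fun S => {v | ¬ C v ∧ v ∉ S ∧ K.Cell (insert v S)}
  let θ : P → (Fin m → P) → ℚ := fun u x =>
    if u ∈ L (Set.range x) then φ.1 x / ((L (Set.range x)).ncard : ℚ) else 0
  have hθ : ∀ u, IsAlt (θ u) := by
    intro u x σ
    simp only [θ, σ.surjective.range_comp, Alt.isAlt φ x σ]
    split_ifs <;> ring
  have hθ' : ∀ {u x}, θ u x ≠ 0 → u ∈ L (Set.range x) ∧ φ.1 x ≠ 0 := by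
    intro u x h
    simp only [θ] at h
    split_ifs at h with h1
    · exact ⟨h1, fun h0 => h (by rw [h0, zero_div])⟩
    · exact absurd rfl h
  have hL : ∀ (g : G) S v, g • v ∈ L (g • S) ↔ v ∈ L S := by
    intro g S v
    simp only [L, Set.mem_ofPred_eq, hC, Set.smul_mem_smul_set_iff]
    rw [← Set.smul_set_insert, cell_smul_iff hK]
  have hLc : ∀ (g : G) S, (L (g • S)).ncard = (L S).ncard := by
    intro g S
    rw [← Set.ncard_image_of_injective (L S) (MulAction.injective g)]
    congr 1
    ext v
    rw [Set.image_smul, Set.mem_smul_set_iff_inv_smul_mem, ← hL g S, smul_inv_smul]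
  have hθg : ∀ (g : G) u x, χ g * θ (g⁻¹ • u) (g⁻¹ • x) = θ u x := by
    intro g u x
    have hr : Set.range (g⁻¹ • x) = g⁻¹ • Set.range x := Set.range_smul _ _
    have h : χ g * φ.1 (g⁻¹ • x) = φ.1 x := congrArg (fun ψ => ψ.1 x) (hφ g)
    simp only [θ, hr, hL, hLc]
    split_ifs
    · rw [← h, mul_div_assoc]
    · simp
  let ψ : K.Alt (m + 1) := CellFamily.antisymmetrize θ hθ (by
    intro u x h
    obtain ⟨⟨_, h2, h3⟩, h4⟩ := hθ' h
    exact ⟨h2, Alt.injective φ h4, h3⟩)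
  have hψ : ∀ v x, ψ.1 (Fin.cons v x) = θ v x - ∑ j, θ (x j) (Function.update x j v) :=
    fun v x => antisymmetrize_cons θ v x
  have hinv : ∀ g, altRep hK χ (m + 1) g ψ = ψ := by
    intro g
    ext y
    rw [altRep_apply]
    simp only [ψ, CellFamily.antisymmetrize, _root_.antisymmetrize]
    rw [mul_sub, Finset.mul_sum]
    congr 1
    · exact hθg g _ _
    · refine Finset.sum_congr rfl fun j _ => ?_
      refine Eq.trans ?_ (hθg g _ _)
      congr 1
      refine congrArg (θ _) (funext fun i => ?_)
      by_cases h : i = j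
      · subst h; simp
      · simp [h, Fin.tail]
  refine ⟨ψ, hinv, ?_⟩
  ext x
  by_cases hx : K.Cell (Set.range x)
  swap
  · rw [bdry_apply_of_not _ hx]
    by_contra h
    exact hx (Alt.cell φ (Ne.symm h))
  by_cases hinj : Function.Injective x
  swap
  · have h1 : φ.1 x = 0 := by
      by_contra h; exact hinj (Alt.injective _ h)
    have h2 : (bdry m ψ).1 x = 0 := by
      by_contra h; exact hinj (Alt.injective _ h)
    rw [h1, h2]
  by_cases hc : ∃ i, C (x i)
  · rw [hφC x hc, bdry_apply _ hx]
    refine finsum_eq_zero_of_forall_eq_zero fun v => ?_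
    rw [hψ]
    have h1 : θ v x = 0 := by
      by_contra h; exact (hθ' h).2 (hφC x hc)
    have h2 : ∀ j, θ (x j) (Function.update x j v) = 0 := by
      intro j
      by_contra h
      obtain ⟨i, hi⟩ := hc
      have hij : i ≠ j := by
        rintro rfl; exact (hθ' h).1.1 hi
      exact (hθ' h).2 (hφC _ ⟨i, by rwa [Function.update_of_ne hij]⟩)
    simp [h1, h2]
  push Not at hc
  rcases hflip x hinj hx hc with hf | hf
  · rw [hf.eq_zero hK χ hφ]
    refine hf.eq_zero hK χ fun g => ?_
    have := LinearMap.congr_fun ((bdryHom hK χ m).isIntertwining' g) ψ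
    exact this.symm.trans (congrArg (bdry m) (hinv g))
  · rw [bdry_apply _ hx]
    have h2 : ∀ v j, θ (x j) (Function.update x j v) = 0 := by
      intro v j
      by_contra h
      obtain ⟨⟨h1, h2, h3⟩, h4⟩ := hθ' h
      have hinj' := Alt.injective _ h4
      have hvx : v ∉ Set.range x := by
        rintro ⟨i, rfl⟩
        by_cases hij : i = j
        · subst hij
          exact h2 ⟨i, by simp⟩
        · exact hij (hinj' (by simp [hij]))
      have hvC : ¬ C v := fun hv => h4 (hφC _ ⟨j, by simpa using hv⟩)
      refine h4 ((hf v hvC hvx ?_ j (Alt.cell _ h4)).eq_zero hK χ hφ)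
      convert h3 using 1
      ext w
      simp only [Set.mem_insert_iff, Set.mem_range]
      constructor
      · rintro (rfl | ⟨i, rfl⟩)
        · exact Or.inr ⟨j, by simp⟩
        · by_cases hi : i = j
          · left; rw [hi]
          · exact Or.inr ⟨i, by simp [hi]⟩
      · rintro (rfl | ⟨i, rfl⟩)
        · exact Or.inr ⟨j, rfl⟩
        · by_cases hi : i = j
          · left; simp [hi]
          · exact Or.inr ⟨i, by simp [hi]⟩
    have h3 : ∀ v, ψ.1 (Fin.cons v x) =
        if v ∈ L (Set.range x) then φ.1 x / ((L (Set.range x)).ncard : ℚ) else 0 := by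
      intro v
      simp [hψ, h2, θ]
    have hLf : (L (Set.range x)).Finite := (K.finite_link hx).subset fun v hv => hv.2.2
    simp only [h3]
    rw [finsum_eq_sum_of_support_subset (s := hLf.toFinset)]
    · rw [Finset.sum_congr rfl (g := fun _ => φ.1 x / ((L (Set.range x)).ncard : ℚ)),
        Finset.sum_const, nsmul_eq_mul, ← Set.ncard_eq_toFinset_card _ hLf]
      · refine mul_div_cancel₀ _ (Nat.cast_ne_zero.2 ((Set.ncard_pos hLf).2 ?_).ne')
        refine hlink _ hx ?_ ?_
        · rintro _ ⟨i, rfl⟩; exact hc i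
        · rw [← Set.image_univ, Set.ncard_image_of_injective _ hinj, Set.ncard_univ]; simp
      · intro v hv
        exact if_pos (by simpa using hv)
    · intro v hv
      by_contra h
      exact hv (if_neg (by simpa using h))

theorem exists_invariant_bdry_eq {m : ℕ} {c : P}
    (hfin : ∀ S, K.Cell S → {γ : G | c ∈ γ⁻¹ • S}.Finite)
    (huniq : ∀ S, K.Cell S → ∀ γ γ' : G, γ • c ∈ S → γ' • c ∈ S → γ • c = γ' • c)
    (hlink : ∀ S, K.Cell S → (∀ p ∈ S, p ∉ MulAction.orbit G c) → S.ncard = m → 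
      ∃ v, v ∉ MulAction.orbit G c ∧ v ∉ S ∧ K.Cell (insert v S))
    (hflip : ∀ x : Fin m → P, Function.Injective x → K.Cell (Set.range x) →
      (∀ i, x i ∉ MulAction.orbit G c) → Flip χ x ∨
        ∀ u, u ∉ MulAction.orbit G c → u ∉ Set.range x →
          K.Cell (insert u (Set.range x)) → ∀ j, K.Cell (Set.range (Function.update x j u)) →
            Flip χ (Function.update x j u))
    (φ : K.Alt (m + 1)) (hφ : ∀ g, altRep hK χ m g (bdry m φ) = bdry m φ) :
    ∃ ψ : K.Alt (m + 1), (∀ g, altRep hK χ (m + 1) g ψ = ψ) ∧ bdry m ψ = bdry m φ := by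
  obtain ⟨ψ, h1, h2⟩ := exists_invariant_eq_on_center hK χ hfin huniq φ hφ
  obtain ⟨ψ', h3, h4⟩ := exists_invariant_of_vanish hK χ (· ∈ MulAction.orbit G c)
    (fun g p => by rw [MulAction.mem_orbit_symm, MulAction.orbit_smul, MulAction.mem_orbit_symm])
    hlink hflip (bdry m φ - bdry m ψ)
    (fun g => by
      have := LinearMap.congr_fun ((bdryHom hK χ m).isIntertwining' g) ψ
      have h5 : altRep hK χ m g (bdry m ψ) = bdry m ψ :=
        this.symm.trans (congrArg (bdry m) (h1 g))
      rw [map_sub, hφ, h5])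
    (by
      rintro x ⟨i, γ, hγ⟩
      have := h2 x ⟨γ, i, hγ.symm⟩
      simp [this])
  exact ⟨ψ + ψ', fun g => by rw [map_add, h1, h3], by rw [map_add, h4]; abel⟩

end CellFamily

/-- The trace pairing of a quadratic form with a symmetric matrix. -/
def pair {R : Type} [CommRing R] (q Y : Matrix (Fin 4) (Fin 4) R) : R := (q * Y).trace

/-- The value of a quadratic form on a vector. -/
def ev {R : Type} [CommRing R] (Y : Matrix (Fin 4) (Fin 4) R) (v : Fin 4 → R) : R := v ⬝ᵥ Y *ᵥ v

/-- The real matrix underlying an integral one. -/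
abbrev toReal (X : Matrix (Fin 4) (Fin 4) ℤ) : Matrix (Fin 4) (Fin 4) ℝ :=
  X.map (Int.castRingHom ℝ)

/-- The action of `GL(4,ℤ)` on quadratic forms. -/
def act (g : GL (Fin 4) ℤ) (q : Matrix (Fin 4) (Fin 4) ℤ) : Matrix (Fin 4) (Fin 4) ℤ :=
  (g⁻¹).1ᵀ * q * (g⁻¹).1

/-- The action of `GL(4,ℤ)` on real symmetric matrices. -/
def conj (g : GL (Fin 4) ℤ) (Y : Matrix (Fin 4) (Fin 4) ℝ) : Matrix (Fin 4) (Fin 4) ℝ :=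
  toReal g.1 * Y * (toReal g.1)ᵀ

/-- Integral matrices with the congruence action of `GL(4,ℤ)`. -/
@[ext]
structure Pt where
  /-- The underlying matrix. -/
  mat : Matrix (Fin 4) (Fin 4) ℤ

instance : MulAction (GL (Fin 4) ℤ) Pt where
  smul g X := ⟨g.1 * X.mat * g.1ᵀ⟩
  one_smul X := by
    ext1
    change (1 : Matrix (Fin 4) (Fin 4) ℤ) * X.mat * 1ᵀ = X.mat
    simp
  mul_smul g h X := by
    ext1
    change g.1 * h.1 * X.mat * (g.1 * h.1)ᵀ = g.1 * (h.1 * X.mat * h.1ᵀ) * g.1ᵀ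
    rw [transpose_mul]
    noncomm_ring

theorem Pt.mat_smul (g : GL (Fin 4) ℤ) (X : Pt) : (g • X).mat = g.1 * X.mat * g.1ᵀ := rfl

theorem GL.inv_mul_val (g : GL (Fin 4) ℤ) : (g⁻¹).1 * g.1 = 1 := Units.inv_mul g

theorem GL.mul_inv_val (g : GL (Fin 4) ℤ) : g.1 * (g⁻¹).1 = 1 := Units.mul_inv g

theorem toReal_mul (X Y : Matrix (Fin 4) (Fin 4) ℤ) : toReal (X * Y) = toReal X * toReal Y :=
  Matrix.map_mul

theorem toReal_one : toReal 1 = 1 := Matrix.map_one _ (map_zero _) (map_one _)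

theorem pair_toReal (q X : Matrix (Fin 4) (Fin 4) ℤ) :
    pair (toReal q) (toReal X) = ((pair q X : ℤ) : ℝ) := by
  rw [pair, ← toReal_mul, pair, ← eq_intCast (Int.castRingHom ℝ), AddMonoidHom.map_trace]

theorem act_mul (g h : GL (Fin 4) ℤ) (q : Matrix (Fin 4) (Fin 4) ℤ) :
    act (g * h) q = act g (act h q) := by
  simp only [act, _root_.mul_inv_rev, Units.val_mul, transpose_mul]
  noncomm_ring

theorem act_sub (g : GL (Fin 4) ℤ) (q q' : Matrix (Fin 4) (Fin 4) ℤ) :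
    act g (q - q') = act g q - act g q' := by
  simp only [act]; noncomm_ring

theorem pair_act (g : GL (Fin 4) ℤ) (q : Matrix (Fin 4) (Fin 4) ℤ) (X : Pt) :
    pair (act g q) (g • X).mat = pair q X.mat := by
  rw [pair, pair, act, Pt.mat_smul]
  have : (g⁻¹).1ᵀ * q * (g⁻¹).1 * (g.1 * X.mat * g.1ᵀ) =
      (g⁻¹).1ᵀ * (q * ((g⁻¹).1 * g.1) * X.mat * g.1ᵀ) := by noncomm_ring
  rw [this, GL.inv_mul_val, mul_one, Matrix.trace_mul_comm, mul_assoc, ← transpose_mul,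
    GL.inv_mul_val, transpose_one, mul_one]

theorem pair_act_real (g : GL (Fin 4) ℤ) (q : Matrix (Fin 4) (Fin 4) ℤ)
    (Y : Matrix (Fin 4) (Fin 4) ℝ) :
    pair (toReal (act g q)) Y = pair (toReal q) (conj g⁻¹ Y) := by
  rw [pair, pair, act, conj, toReal_mul, toReal_mul, mul_assoc, mul_assoc, Matrix.trace_mul_comm,
    mul_assoc, mul_assoc, ← mul_assoc (toReal _) Y]
  rfl

theorem pair_sub {R : Type} [CommRing R] (q q' Y : Matrix (Fin 4) (Fin 4) R) :
    pair (q - q') Y = pair q Y - pair q' Y := by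
  simp [pair, sub_mul]

theorem pair_add {R : Type} [CommRing R] (q Y Y' : Matrix (Fin 4) (Fin 4) R) :
    pair q (Y + Y') = pair q Y + pair q Y' := by
  simp [pair, mul_add]

theorem pair_smul {R : Type} [CommRing R] (q Y : Matrix (Fin 4) (Fin 4) R) (c : R) :
    pair q (c • Y) = c * pair q Y := by
  simp [pair]

theorem pair_sum {R ι : Type} [CommRing R] (s : Finset ι) (q : Matrix (Fin 4) (Fin 4) R)
    (Y : ι → Matrix (Fin 4) (Fin 4) R) : pair q (∑ i ∈ s, Y i) = ∑ i ∈ s, pair q (Y i) := by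
  simp [pair, Finset.mul_sum, trace_sum]

theorem pair_vecMulVec {R : Type} [CommRing R] (q : Matrix (Fin 4) (Fin 4) R) (v : Fin 4 → R) :
    pair q (vecMulVec v v) = ev q v := by
  rw [pair, ev, mul_vecMulVec, trace_vecMulVec, dotProduct_comm]

theorem pair_comm {R : Type} [CommRing R] (q Y : Matrix (Fin 4) (Fin 4) R) :
    pair q Y = pair Y q := Matrix.trace_mul_comm _ _

theorem ev_congr_mul {R : Type} [CommRing R] (A Y : Matrix (Fin 4) (Fin 4) R) (v : Fin 4 → R) :
    ev (A * Y * Aᵀ) v = ev Y (Aᵀ *ᵥ v) := by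
  rw [ev, ev, ← mulVec_mulVec, ← mulVec_mulVec, dotProduct_mulVec, ← mulVec_transpose]

theorem ev_vecMulVec {R : Type} [CommRing R] (u v : Fin 4 → R) :
    ev (vecMulVec u u) v = (u ⬝ᵥ v) ^ 2 := by
  rw [ev, vecMulVec_mulVec]
  simp [dotProduct_smul, dotProduct_comm v u, sq]

theorem mul_vecMulVec_mul_transpose {R : Type} [CommRing R] (A : Matrix (Fin 4) (Fin 4) R)
    (v : Fin 4 → R) : A * vecMulVec v v * Aᵀ = vecMulVec (A *ᵥ v) (A *ᵥ v) := by
  rw [mul_vecMulVec, vecMulVec_mul, vecMul_transpose]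

/-- Representatives of the forms supporting the top cells. -/
def stdForm : Fin 3 → Matrix (Fin 4) (Fin 4) ℤ :=
  ![!![12, 6, 6, 6; 6, 12, 6, 6; 6, 6, 12, 6; 6, 6, 6, 12],
    !![12, 2, 8, 8; 2, 12, 8, 8; 8, 8, 16, 8; 8, 8, 8, 16],
    !![12, 0, 6, 8; 0, 12, 6, 6; 6, 6, 12, 6; 8, 6, 6, 16]]

/-- The minimal vectors of the standard forms, padded by zero. -/
def stdVec : Fin 3 → Fin 10 → Fin 4 → ℤ :=
  ![![![0, 0, 0, 1], ![0, 0, 1, -1], ![0, 0, 1, 0], ![0, 1, -1, 0],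
      ![0, 1, 0, -1], ![0, 1, 0, 0], ![1, -1, 0, 0], ![1, 0, -1, 0],
      ![1, 0, 0, -1], ![1, 0, 0, 0]],
    ![![0, 1, -1, 0], ![0, 1, 0, -1], ![0, 1, 0, 0], ![1, 0, -1, 0],
      ![1, 0, 0, -1], ![1, 0, 0, 0], ![1, 1, -1, -1], ![1, 1, -1, 0],
      ![1, 1, 0, -1], ![0, 0, 0, 0]],
    ![![0, 0, 1, 0], ![0, 1, -1, 0], ![0, 1, 0, 0], ![1, 0, -1, 0],
      ![1, 0, 0, -1], ![1, 0, 0, 0], ![1, 1, -1, -1], ![1, 1, -1, 0],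
      ![1, 1, 0, -1], ![0, 0, 0, 0]]]

/-- Two thirds of the sum of the squares of the minimal vectors of `D₄`. -/
def ctr : Matrix (Fin 4) (Fin 4) ℤ := !![4, 2, -2, -2; 2, 4, -2, -2; -2, -2, 4, 0; -2, -2, 0, 4]

/-- The minimal vectors of `D₄`. -/
def rootD : Fin 12 → Fin 4 → ℤ :=
  ![![0, 0, 0, 1], ![0, 0, 1, -1], ![0, 0, 1, 0], ![0, 1, -1, 0],
    ![0, 1, 0, -1], ![0, 1, 0, 0], ![1, 0, -1, 0], ![1, 0, 0, -1],
    ![1, 0, 0, 0], ![1, 1, -1, -1], ![1, 1, -1, 0], ![1, 1, 0, -1]]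

/-- The types of the neighbours of the standard top cells. -/
def nbType : Fin 3 → Fin 10 → Fin 3 :=
  ![![2, 2, 2, 2, 2, 2, 2, 2, 2, 2],
    ![2, 2, 2, 2, 2, 2, 2, 2, 2, 1],
    ![1, 1, 1, 2, 2, 2, 2, 2, 2, 0]]

/-- Base changes from the standard forms to the neighbours of the standard top cells. -/
def nbMat : Fin 3 → Fin 10 → Matrix (Fin 4) (Fin 4) ℤ :=
  ![![!![1, 1, 1, 2; 0, 0, 1, 1; -1, 0, -1, -1; 0, 0, 0, -1],
      !![0, 0, 1, -1; 0, 1, 1, 0; 1, 0, 0, 1; 0, 0, -1, 0],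
      !![1, 1, 2, 1; 0, 0, 1, 1; -1, 0, -1, -1; 0, 0, -1, 0],
      !![0, 1, -1, 0; 0, 0, -1, -1; 1, 0, 1, 1; 0, 0, 1, 0],
      !![0, 1, 0, -1; 0, 0, -1, -1; 1, 0, 1, 1; 0, 0, 0, 1],
      !![1, 2, 1, 1; 0, 1, 0, 1; -1, -1, 0, -1; 0, -1, 0, 0],
      !![1, -1, 0, 0; 0, -1, 0, -1; -1, 0, -1, 0; 0, 1, 0, 0],
      !![1, 0, -1, 0; 0, 0, -1, -1; -1, -1, 0, 0; 0, 0, 1, 0],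
      !![1, 0, 0, -1; 0, 0, -1, -1; -1, -1, 0, 0; 0, 0, 0, 1],
      !![2, 1, 1, 1; 1, 0, 0, 1; -1, -1, 0, -1; -1, 0, 0, 0]],
    ![!![1, 0, 0, 0; 0, 1, 0, 0; -1, -1, -1, -1; 0, 0, 1, 0],
      !![1, 0, 0, 0; 0, 1, 0, 0; -1, -1, -1, -1; 0, 0, 0, 1],
      !![1, 0, 0, 0; 0, 0, 0, -1; -1, 0, -1, 0; 0, 1, 1, 1],
      !![0, 1, 0, 0; 0, 0, 0, -1; 1, 0, 1, 1; 0, -1, -1, 0],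
      !![0, 1, 0, 0; 0, 0, -1, 0; 1, 0, 1, 1; 0, -1, 0, -1],
      !![0, 1, 0, 0; 0, 0, 0, -1; 0, -1, -1, 0; 1, 0, 1, 1],
      !![1, -1, 0, 0; 0, -1, 0, -1; -1, 0, -1, 0; 0, 1, 1, 1],
      !![1, -1, 0, 0; 0, -1, 0, 0; -1, 0, -1, -1; 0, 1, 0, 1],
      !![1, -1, 0, 0; 0, -1, 0, 0; -1, 0, -1, -1; 0, 1, 1, 0],
      !![0, 0, 1, -1; 1, 1, 2, 1; -1, 0, -1, 0; 0, -1, -1, 0]],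
    ![!![0, 1, 0, 0; 1, 0, 0, 0; -1, -1, -1, -1; 0, 0, 1, 0],
      !![0, 1, 1, 1; 1, 1, 1, 1; -1, 0, -1, -1; 0, -1, -1, 0],
      !![0, 0, 1, 0; 1, 0, 1, 0; -1, 0, -1, -1; 0, 1, 0, 1],
      !![1, 1, 1, 1; 0, 1, 0, 0; -1, 0, 0, 0; 0, -1, -1, 0],
      !![0, 1, 0, 0; 0, 0, -1, 0; 1, 0, 1, 1; 0, -1, 0, -1],
      !![0, 0, 1, 0; 0, 1, 1, 0; 0, -1, -1, -1; 1, 0, 0, 1],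
      !![1, 0, 1, 0; 0, 1, 1, 0; -1, -1, -1, -1; 0, 0, 0, 1],
      !![1, -1, 0, 0; 0, -1, 0, 0; -1, 0, -1, -1; 0, 1, 0, 1],
      !![0, 1, 1, 1; 0, 0, 1, 0; 1, 0, 0, 0; 0, -1, -1, 0],
      !![0, 0, 0, 1; 0, 1, 1, 0; 0, -1, 0, -1; 1, 0, 0, 1]]]

/-- The inverses of the matrices `nbMat`. -/
def nbInv : Fin 3 → Fin 10 → Matrix (Fin 4) (Fin 4) ℤ :=
  ![![!![0, -1, -1, 0; 1, 0, 1, 1; 0, 1, 0, 1; 0, 0, 0, -1],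
      !![1, 0, 1, 1; 0, 1, 0, 1; 0, 0, 0, -1; -1, 0, 0, -1],
      !![0, -1, -1, 0; 1, 0, 1, 1; 0, 0, 0, -1; 0, 1, 0, 1],
      !![0, 1, 1, 0; 1, 0, 0, 1; 0, 0, 0, 1; 0, -1, 0, -1],
      !![0, 1, 1, 0; 1, 0, 0, 1; 0, -1, 0, -1; 0, 0, 0, 1],
      !![0, -1, -1, 0; 0, 0, 0, -1; 1, 0, 1, 1; 0, 1, 0, 1],
      !![1, 0, 0, 1; 0, 0, 0, 1; -1, 0, -1, -1; 0, -1, 0, -1],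
      !![1, 0, 0, 1; -1, 0, -1, -1; 0, 0, 0, 1; 0, -1, 0, -1],
      !![1, 0, 0, 1; -1, 0, -1, -1; 0, -1, 0, -1; 0, 0, 0, 1],
      !![0, 0, 0, -1; 0, -1, -1, 0; 1, 0, 1, 1; 0, 1, 0, 1]],
    ![!![1, 0, 0, 0; 0, 1, 0, 0; 0, 0, 0, 1; -1, -1, -1, -1],
      !![1, 0, 0, 0; 0, 1, 0, 0; -1, -1, -1, -1; 0, 0, 0, 1],
      !![1, 0, 0, 0; 1, 1, 1, 1; -1, 0, -1, 0; 0, -1, 0, 0],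
      !![1, 1, 1, 1; 1, 0, 0, 0; -1, 0, 0, -1; 0, -1, 0, 0],
      !![1, 1, 1, 1; 1, 0, 0, 0; 0, -1, 0, 0; -1, 0, 0, -1],
      !![1, 1, 1, 1; 1, 0, 0, 0; -1, 0, -1, 0; 0, -1, 0, 0],
      !![0, -1, -1, -1; -1, -1, -1, -1; 0, 1, 0, 1; 1, 0, 1, 1],
      !![1, -1, 0, 0; 0, -1, 0, 0; -1, 0, -1, -1; 0, 1, 0, 1],
      !![1, -1, 0, 0; 0, -1, 0, 0; 0, 1, 0, 1; -1, 0, -1, -1],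
      !![-1, -1, -2, -1; -1, -1, -1, -2; 1, 1, 1, 1; 0, 1, 1, 1]],
    ![!![0, 1, 0, 0; 1, 0, 0, 0; 0, 0, 0, 1; -1, -1, -1, -1],
      !![-1, 1, 0, 0; 0, 1, 1, 0; 0, -1, -1, -1; 1, 0, 0, 1],
      !![-1, 1, 0, 0; 0, 1, 1, 1; 1, 0, 0, 0; 0, -1, -1, 0],
      !![0, 0, -1, 0; 0, 1, 0, 0; 0, -1, 0, -1; 1, 0, 1, 1],
      !![1, 1, 1, 1; 1, 0, 0, 0; 0, -1, 0, 0; -1, 0, 0, -1],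
      !![0, 1, 1, 1; -1, 1, 0, 0; 1, 0, 0, 0; 0, -1, -1, 0],
      !![0, -1, -1, -1; -1, 0, -1, -1; 1, 1, 1, 1; 0, 0, 0, 1],
      !![1, -1, 0, 0; 0, -1, 0, 0; -1, 0, -1, -1; 0, 1, 0, 1],
      !![0, 0, 1, 0; 0, -1, 0, -1; 0, 1, 0, 0; 1, 0, 0, 1],
      !![-1, 0, 0, 1; -1, 0, -1, 0; 1, 1, 1, 0; 1, 0, 0, 0]]]

/-- The increase of a neighbouring form on the vertex that is lost. -/
def nbGap : Fin 3 → Fin 10 → ℤ :=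
  ![![8, 8, 8, 8, 8, 8, 8, 8, 8, 8],
    ![4, 4, 4, 4, 4, 4, 4, 4, 4, 8],
    ![4, 4, 4, 4, 4, 4, 4, 4, 4, 16]]

/-- The vertices of the standard top cells. -/
def stdPt (i : Fin 3) (k : Fin 10) : Pt :=
  ⟨if i ≠ 0 ∧ k = 9 then ctr else vecMulVec (stdVec i k) (stdVec i k)⟩

/-- The forms of the neighbours of the standard top cells. -/
def nbForm (i : Fin 3) (k : Fin 10) : Matrix (Fin 4) (Fin 4) ℤ :=
  (nbMat i k)ᵀ * stdForm (nbType i k) * nbMat i k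

theorem nbMat_mul_nbInv : ∀ i k, nbMat i k * nbInv i k = 1 ∧ nbInv i k * nbMat i k = 1 := by
  decide +kernel

theorem pair_nbForm_sub : ∀ i k l, pair (nbForm i k - stdForm i) (stdPt i l).mat =
    if k = l then nbGap i k else 0 := by
  decide +kernel

theorem nbGap_pos : ∀ i k, 0 < nbGap i k := by decide +kernel

theorem stdForm_transpose : ∀ i, (stdForm i)ᵀ = stdForm i := by decide +kernel

theorem std_dual_identity : ∀ i, ∀ a b c d : Fin 4,
    ∑ k, (16 / nbGap i k) * (nbForm i k - stdForm i) a b * (stdPt i k).mat c d =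
      8 * ((if a = c ∧ b = d then 1 else 0) + (if a = d ∧ b = c then 1 else 0)) := by
  decide +kernel

theorem nbGap_dvd : ∀ i k, nbGap i k * (16 / nbGap i k) = 16 := by decide +kernel

/-- The vertices of the cell structure, with the value that supporting forms take on them. -/
def Vert (X : Pt) (l : ℤ) : Prop :=
  (l = 12 ∧ ∃ v : Fin 4 → ℤ, v ≠ 0 ∧ X.mat = vecMulVec v v) ∨
    (l = 104 ∧ X ∈ MulAction.orbit (GL (Fin 4) ℤ) (⟨ctr⟩ : Pt))

/-- The forms that support the top cells. -/
def TopForm (q : Matrix (Fin 4) (Fin 4) ℤ) : Prop := ∃ g i, q = act g (stdForm i)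

/-- The vertices of the top cell supported by a form. -/
def suppV (q : Matrix (Fin 4) (Fin 4) ℤ) : Set Pt := {X | Vert X (pair q X.mat)}

/-- A basis of linear forms whose squares are dominated by the standard forms. -/
def domForm (i : Fin 3) : Matrix (Fin 4) (Fin 4) ℤ :=
  if i = 0 then 1 else !![1, 1, 1, 1; 1, -1, 0, 0; 0, 0, 1, 0; 0, 0, 0, 1]

/-- The coefficients of the remainder of the standard forms. -/
def restCoeff : Fin 3 → Fin 5 → ℕ := ![![1, 1, 1, 1, 6], ![1, 1, 1, 0, 0], ![1, 1, 1, 0, 0]]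

/-- The linear forms in the remainder of the standard forms. -/
def restForm : Fin 3 → Fin 5 → Fin 4 → ℤ :=
  ![![![1, 0, 0, 0], ![0, 1, 0, 0], ![0, 0, 1, 0], ![0, 0, 0, 1], ![1, 1, 1, 1]],
    ![![1, 1, 1, 2], ![0, 0, 1, -1], ![1, 1, 2, 1], 0, 0],
    ![![1, 1, 1, 2], ![0, 0, 1, -1], ![1, -1, 0, 1], 0, 0]]

theorem stdForm_eq_sum : ∀ i, stdForm i = ∑ r, (5 : ℤ) • vecMulVec (domForm i r) (domForm i r) +
    ∑ s, (restCoeff i s : ℤ) • vecMulVec (restForm i s) (restForm i s) := by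
  decide +kernel

theorem ev_eq_sum {R : Type} [CommRing R] (Y : Matrix (Fin 4) (Fin 4) R) (v : Fin 4 → R) :
    ev Y v = ∑ a, ∑ b, v a * (Y a b * v b) := by
  simp [ev, dotProduct, mulVec, Finset.mul_sum]

theorem five_mul_le_ev_stdForm (i : Fin 3) (v : Fin 4 → ℤ) :
    5 * ∑ r, (domForm i r ⬝ᵥ v) ^ 2 ≤ ev (stdForm i) v := by
  rw [← pair_vecMulVec, stdForm_eq_sum, pair_comm, pair_add, pair_sum, pair_sum]
  simp only [pair_smul, pair_vecMulVec, ev_vecMulVec, Finset.mul_sum]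
  have : 0 ≤ ∑ s, (restCoeff i s : ℤ) * (v ⬝ᵥ restForm i s) ^ 2 := by positivity
  simp only [dotProduct_comm v] at this ⊢
  linarith

theorem ev_stdForm_box (i : Fin 3) (v : Fin 4 → ℤ) (h : ev (stdForm i) v < 20) :
    ∃ a b c d : Fin 5, v = ![(a : ℤ) - 2, (b : ℤ) - 2, (c : ℤ) - 2, (d : ℤ) - 2] := by
  have key : ∀ r, -1 ≤ domForm i r ⬝ᵥ v ∧ domForm i r ⬝ᵥ v ≤ 1 := fun r => by
    have h1 := five_mul_le_ev_stdForm i v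
    have h2 : (domForm i r ⬝ᵥ v) ^ 2 ≤ ∑ r, (domForm i r ⬝ᵥ v) ^ 2 :=
      Finset.single_le_sum (f := fun r => (domForm i r ⬝ᵥ v) ^ 2) (fun _ _ => sq_nonneg _)
        (Finset.mem_univ r)
    have h3 : (domForm i r ⬝ᵥ v) ^ 2 < 4 := by linarith
    exact ⟨by nlinarith, by nlinarith⟩
  have H : ∀ j, -2 ≤ v j ∧ v j ≤ 2 := by
    have k0 := key 0
    have k1 := key 1
    have k2 := key 2
    have k3 := key 3
    have hi : domForm i = domForm 0 ∨ domForm i = domForm 1 := by fin_cases i <;> decide +kernel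
    rcases hi with hi | hi <;> rw [hi] at k0 k1 k2 k3 <;>
      simp [domForm, dotProduct, Fin.sum_univ_four] at k0 k1 k2 k3 <;>
      intro j <;> fin_cases j <;> simp <;> omega
  have h2 : ∀ j, ∃ a : Fin 5, v j = (a : ℤ) - 2 := fun j =>
    ⟨⟨(v j + 2).toNat, by have := H j; omega⟩, by have := H j; simp; omega⟩
  obtain ⟨a, ha⟩ := h2 0
  obtain ⟨b, hb⟩ := h2 1
  obtain ⟨c, hc⟩ := h2 2
  obtain ⟨d, hd⟩ := h2 3
  refine ⟨a, b, c, d, ?_⟩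
  ext j
  fin_cases j <;> simp [ha, hb, hc, hd]

/-- The vectors of value less than `20` for the standard forms, up to sign and padding. -/
def shortVec (i : Fin 3) (m : Fin 12) : Fin 4 → ℤ :=
  if i = 0 then (if h : m.1 < 10 then stdVec 0 ⟨m.1, h⟩ else 0) else rootD m

/-- The defects `20 - q` of the vectors `shortVec`. -/
def defect (i : Fin 3) (m : Fin 12) : ℤ :=
  if i = 0 ∧ 10 ≤ m.1 then 0 else 20 - ev (stdForm i) (shortVec i m)

theorem shortVec_box : ∀ (i : Fin 3) (a b c d : Fin 5),
    (fun v : Fin 4 → ℤ => v ≠ 0 → 12 ≤ ev (stdForm i) v ∧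
      (ev (stdForm i) v = 12 → ∃ k, vecMulVec v v = (stdPt i k).mat) ∧
      20 - ev (stdForm i) v ≤
        ∑ m, if v = shortVec i m ∨ v = -shortVec i m then defect i m else 0)
      ![(a : ℤ) - 2, (b : ℤ) - 2, (c : ℤ) - 2, (d : ℤ) - 2] := by
  decide +kernel

open scoped Pointwise

theorem defect_nonneg : ∀ i m, 0 ≤ defect i m := by decide +kernel

theorem shortVec_bound (i : Fin 3) {v : Fin 4 → ℤ} (hv : v ≠ 0) :
    12 ≤ ev (stdForm i) v ∧ (ev (stdForm i) v = 12 → ∃ k, vecMulVec v v = (stdPt i k).mat) ∧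
      20 - ev (stdForm i) v ≤
        ∑ m, if v = shortVec i m ∨ v = -shortVec i m then defect i m else 0 := by
  by_cases h : ev (stdForm i) v < 20
  · obtain ⟨a, b, c, d, rfl⟩ := ev_stdForm_box i v h
    exact shortVec_box i a b c d hv
  · refine ⟨by omega, by omega, le_trans (b := 0) (by omega) (Finset.sum_nonneg fun m _ => ?_)⟩
    split_ifs
    exacts [defect_nonneg i m, le_rfl]

theorem sum_defect_zero : ∑ m, defect 0 m = 80 := by decide +kernel

theorem sum_defect : ∀ i, i ≠ 0 → ∑ m, defect i m = 84 ∧ ∀ m, 0 < defect i m := by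
  decide +kernel

theorem shortVec_of_ne {i : Fin 3} (hi : i ≠ 0) (m : Fin 12) : shortVec i m = rootD m := by
  simp [shortVec, hi]

theorem rootD_injective : ∀ m m', rootD m = rootD m' ∨ rootD m = -rootD m' → m = m' := by
  decide +kernel

theorem rootD_ne_zero : ∀ m, rootD m ≠ 0 := by decide +kernel

theorem three_smul_ctr : (3 : ℤ) • ctr = (2 : ℤ) • ∑ m, vecMulVec (rootD m) (rootD m) := by
  decide +kernel

theorem vecMulVec_eq_of_eq_or_neg {v w : Fin 4 → ℤ} (h : v = w ∨ v = -w) :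
    vecMulVec v v = vecMulVec w w := by
  rcases h with rfl | rfl
  · rfl
  · simp

/-- A root system of type `D₄` has total value at least `156` on the standard forms, with
equality only for the standard one. -/
theorem sum_ev_stdForm (i : Fin 3) (u : Fin 12 → Fin 4 → ℤ) (hu : ∀ k, u k ≠ 0)
    (hinj : ∀ k l, u k = u l ∨ u k = -u l → k = l) :
    156 ≤ ∑ k, ev (stdForm i) (u k) ∧ (∑ k, ev (stdForm i) (u k) = 156 →
      i ≠ 0 ∧ ∑ k, vecMulVec (u k) (u k) = ∑ k, vecMulVec (rootD k) (rootD k)) := by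
  classical
  set f : Fin 12 → ℤ := fun m => ∑ k, if u k = shortVec i m ∨ u k = -shortVec i m
    then defect i m else 0 with hf
  have hle : ∀ m, f m ≤ defect i m := fun m => by
    by_cases h : ∃ k, u k = shortVec i m ∨ u k = -shortVec i m
    · obtain ⟨k, hk⟩ := h
      rw [hf]
      dsimp only
      rw [Finset.sum_eq_single k]
      · rw [if_pos hk]
      · intro l _ hl
        rw [if_neg]
        intro hl'
        refine hl (hinj _ _ ?_)
        rcases hk with hk | hk <;> rcases hl' with hl' | hl' <;> rw [hk, hl'] <;> simp
      · simp
    · push Not at h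
      rw [hf]
      dsimp only
      rw [Finset.sum_eq_zero]
      · exact defect_nonneg i m
      · intro k _
        rw [if_neg]
        have := h k
        tauto
  have hsum : 240 - ∑ k, ev (stdForm i) (u k) ≤ ∑ m, f m := by
    rw [hf, Finset.sum_comm]
    have := Finset.sum_le_sum fun k (_ : k ∈ Finset.univ) => (shortVec_bound i (hu k)).2.2
    rw [Finset.sum_sub_distrib] at this
    simpa using this
  have hsum2 : ∑ m, f m ≤ ∑ m, defect i m := Finset.sum_le_sum fun m _ => hle m
  by_cases hi : i = 0
  · subst hi
    rw [sum_defect_zero] at hsum2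
    exact ⟨by omega, by omega⟩
  · obtain ⟨h84, hpos⟩ := sum_defect i hi
    refine ⟨by omega, fun heq => ⟨hi, ?_⟩⟩
    have hall : ∀ m, f m = defect i m := by
      have := (Finset.sum_eq_sum_iff_of_le fun m (_ : m ∈ Finset.univ) => hle m).1 (by omega)
      exact fun m => this m (Finset.mem_univ m)
    have hex : ∀ m, ∃ k, u k = rootD m ∨ u k = -rootD m := fun m => by
      by_contra hcon
      push Not at hcon
      have h0 : f m = 0 := by
        rw [hf]
        refine Finset.sum_eq_zero fun k _ => ?_
        rw [if_neg]
        rw [shortVec_of_ne hi]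
        have := hcon k
        tauto
      have := hall m
      have := hpos m
      omega
    choose σ hσ using hex
    have hσi : Function.Injective σ := fun m m' h => rootD_injective _ _ (by
      have h1 := hσ m
      have h2 := hσ m'
      rw [h] at h1
      rcases h1 with h1 | h1 <;> rcases h2 with h2 | h2 <;> rw [h1] at h2
      · exact Or.inl h2
      · exact Or.inr h2
      · exact Or.inr (by rw [← h2, neg_neg])
      · exact Or.inl (neg_injective h2))
    have hb : Function.Bijective σ := Finite.injective_iff_bijective.1 hσi
    rw [← hb.sum_comp fun k => vecMulVec (u k) (u k)]
    exact Finset.sum_congr rfl fun m _ => vecMulVec_eq_of_eq_or_neg (hσ m)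

theorem GL.mulVec_injective (g : GL (Fin 4) ℤ) {v w : Fin 4 → ℤ} (h : g.1 *ᵥ v = g.1 *ᵥ w) :
    v = w := by
  have := congrArg ((g⁻¹).1 *ᵥ ·) h
  simpa [mulVec_mulVec, GL.inv_mul_val] using this

theorem smul_vecMulVec_mat (g : GL (Fin 4) ℤ) (v : Fin 4 → ℤ) :
    (g • (⟨vecMulVec v v⟩ : Pt)).mat = vecMulVec (g.1 *ᵥ v) (g.1 *ᵥ v) := by
  rw [Pt.mat_smul, mul_vecMulVec_mul_transpose]

theorem three_smul_smul_ctr (g : GL (Fin 4) ℤ) : (3 : ℤ) • (g • (⟨ctr⟩ : Pt)).mat =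
    (2 : ℤ) • ∑ m, vecMulVec (g.1 *ᵥ rootD m) (g.1 *ᵥ rootD m) := by
  rw [Pt.mat_smul, ← Matrix.smul_mul, ← Matrix.mul_smul, three_smul_ctr, Matrix.mul_smul,
    Matrix.smul_mul, Finset.mul_sum, Finset.sum_mul]
  simp only [mul_vecMulVec_mul_transpose]

theorem le_pair_stdForm (i : Fin 3) {X : Pt} {l : ℤ} (hX : Vert X l) :
    l ≤ pair (stdForm i) X.mat ∧ (pair (stdForm i) X.mat = l → X ∈ Set.range (stdPt i)) := by
  rcases hX with ⟨rfl, v, hv, hX⟩ | ⟨rfl, g, rfl⟩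
  · rw [hX, pair_vecMulVec]
    obtain ⟨h1, h2, -⟩ := shortVec_bound i hv
    refine ⟨h1, fun h => ?_⟩
    obtain ⟨k, hk⟩ := h2 h
    exact ⟨k, Pt.ext (by rw [hX, hk])⟩
  · dsimp only
    have h3 := three_smul_smul_ctr g
    have hp : 3 * pair (stdForm i) (g • (⟨ctr⟩ : Pt)).mat =
        2 * ∑ m, ev (stdForm i) (g.1 *ᵥ rootD m) := by
      rw [← pair_smul, h3, pair_smul, pair_sum]
      simp only [pair_vecMulVec]
    obtain ⟨h1, h2⟩ := sum_ev_stdForm i (fun m => g.1 *ᵥ rootD m)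
      (fun k h => rootD_ne_zero k (GL.mulVec_injective g (by rw [h, mulVec_zero])))
      (fun k l h => rootD_injective k l (h.imp (GL.mulVec_injective g) fun h =>
        GL.mulVec_injective g (by rw [h, mulVec_neg])))
    refine ⟨by omega, fun h => ?_⟩
    obtain ⟨hi, hs⟩ := h2 (by omega)
    refine ⟨9, Pt.ext ?_⟩
    rw [hs, ← three_smul_ctr] at h3
    have := smul_right_injective (Matrix (Fin 4) (Fin 4) ℤ) (three_ne_zero (α := ℤ)) h3
    rw [this]
    simp [stdPt, hi]

theorem stdVec_ne_zero : ∀ i k, (i = 0 ∨ k ≠ 9) → stdVec i k ≠ 0 := by decide +kernel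

theorem ev_stdForm_stdVec : ∀ i k, (i = 0 ∨ k ≠ 9) → ev (stdForm i) (stdVec i k) = 12 := by
  decide +kernel

theorem pair_stdForm_ctr : ∀ i, i ≠ 0 → pair (stdForm i) ctr = 104 := by decide +kernel

theorem stdPt_of_ne {i : Fin 3} {k : Fin 10} (h : i = 0 ∨ k ≠ 9) :
    stdPt i k = ⟨vecMulVec (stdVec i k) (stdVec i k)⟩ := by
  rw [stdPt, if_neg]
  tauto

theorem suppV_stdForm (i : Fin 3) : suppV (stdForm i) = Set.range (stdPt i) := by
  refine Set.Subset.antisymm (fun X hX => (le_pair_stdForm i hX).2 rfl) ?_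
  rintro _ ⟨k, rfl⟩
  by_cases h : i = 0 ∨ k ≠ 9
  · refine Or.inl ⟨?_, stdVec i k, stdVec_ne_zero i k h, by rw [stdPt_of_ne h]⟩
    rw [stdPt_of_ne h]
    exact (pair_vecMulVec _ _).trans (ev_stdForm_stdVec i k h)
  · push Not at h
    have e : stdPt i k = ⟨ctr⟩ := by rw [stdPt, if_pos h]
    refine Or.inr ⟨?_, ?_⟩
    · rw [e]
      exact pair_stdForm_ctr i h.1
    · rw [e]
      exact MulAction.mem_orbit_self _

theorem Vert.smul (g : GL (Fin 4) ℤ) {X : Pt} {l : ℤ} (hX : Vert X l) : Vert (g • X) l := by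
  rcases hX with ⟨rfl, v, hv, hX⟩ | ⟨rfl, hX⟩
  · refine Or.inl ⟨rfl, g.1 *ᵥ v, fun h => hv (GL.mulVec_injective g (by rw [h, mulVec_zero])), ?_⟩
    rw [← smul_vecMulVec_mat, ← hX]
  · obtain ⟨h, rfl⟩ := hX
    exact Or.inr ⟨rfl, g * h, mul_smul g h _⟩

theorem suppV_act (g : GL (Fin 4) ℤ) (q : Matrix (Fin 4) (Fin 4) ℤ) :
    suppV (act g q) = g • suppV q := by
  ext X
  rw [Set.mem_smul_set_iff_inv_smul_mem]
  have h1 : pair (act g q) X.mat = pair q (g⁻¹ • X).mat := by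
    rw [← pair_act g q, smul_inv_smul]
  constructor
  · intro h
    have := Vert.smul g⁻¹ h
    rwa [h1] at this
  · intro h
    have := Vert.smul g h
    rw [smul_inv_smul, ← h1] at this
    exact this

theorem TopForm.act (g : GL (Fin 4) ℤ) {q : Matrix (Fin 4) (Fin 4) ℤ} (hq : TopForm q) :
    TopForm (act g q) := by
  obtain ⟨h, i, rfl⟩ := hq
  exact ⟨g * h, i, (act_mul _ _ _).symm⟩

theorem TopForm.le_pair {q : Matrix (Fin 4) (Fin 4) ℤ} (hq : TopForm q) {X : Pt} {l : ℤ}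
    (hX : Vert X l) : l ≤ pair q X.mat := by
  obtain ⟨g, i, rfl⟩ := hq
  rw [← smul_inv_smul g X, pair_act]
  exact (le_pair_stdForm i (hX.smul g⁻¹)).1

theorem TopForm.pair_le {q q' : Matrix (Fin 4) (Fin 4) ℤ} (hq : TopForm q) {X : Pt}
    (hX : X ∈ suppV q') : pair q' X.mat ≤ pair q X.mat := hq.le_pair hX

theorem mem_suppV_of_pair_eq {q q' : Matrix (Fin 4) (Fin 4) ℤ} {X : Pt}
    (hX : X ∈ suppV q') (h : pair q X.mat = pair q' X.mat) : X ∈ suppV q := by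
  have : Vert X (pair q' X.mat) := hX
  rwa [← h] at this

theorem TopForm.pair_eq {q q' : Matrix (Fin 4) (Fin 4) ℤ} (hq : TopForm q) (hq' : TopForm q')
    {X : Pt} (hX : X ∈ suppV q) (hXq : X ∈ suppV q') : pair q X.mat = pair q' X.mat :=
  le_antisymm (hq'.pair_le hX) (hq.pair_le hXq)

/-- The vertices and neighbours of the top cell of a form. -/
structure TopData (q : Matrix (Fin 4) (Fin 4) ℤ) where
  /-- The vertices. -/
  pt : Fin 10 → Pt
  /-- The neighbour across the facet opposite to a vertex. -/
  nb : Fin 10 → Matrix (Fin 4) (Fin 4) ℤ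
  /-- The increase of the neighbouring form. -/
  gap : Fin 10 → ℤ
  suppV_eq : suppV q = Set.range pt
  topForm_nb : ∀ k, TopForm (nb k)
  gap_pos : ∀ k, 0 < gap k
  pair_sub_pt : ∀ k l, pair (nb k - q) (pt l).mat = if k = l then gap k else 0
  eq_sum : ∀ Y : Matrix (Fin 4) (Fin 4) ℝ, Yᵀ = Y →
    Y = ∑ k, (pair (toReal (nb k - q)) Y / gap k) • toReal (pt k).mat

theorem pair_eq_sum {R : Type} [CommRing R] (q Y : Matrix (Fin 4) (Fin 4) R) :
    pair q Y = ∑ a, ∑ b, q a b * Y b a := by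
  simp [pair, trace, mul_apply]

theorem mul_eight_mul_ite_add_ite (p q r s : Prop) [Decidable p] [Decidable q] [Decidable r]
    [Decidable s] (x : ℝ) :
    x * (8 * ((if p ∧ q then 1 else 0) + (if r ∧ s then 1 else 0))) =
      (if p then if q then 8 * x else 0 else 0) + (if r then if s then 8 * x else 0 else 0) := by
  by_cases p <;> by_cases q <;> by_cases r <;> by_cases s <;> simp [*] <;> ring

theorem stdForm_eq_sum_pair (i : Fin 3) (Y : Matrix (Fin 4) (Fin 4) ℝ) (hY : Yᵀ = Y) :
    Y = ∑ k, (pair (toReal (nbForm i k - stdForm i)) Y / nbGap i k) • toReal (stdPt i k).mat := by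
  ext c d
  have hcd : Y d c = Y c d := congrFun (congrFun hY c) d
  have hid : ∀ a b, ∑ k, (16 / (nbGap i k : ℝ)) * ((nbForm i k - stdForm i) a b : ℤ) *
      ((stdPt i k).mat c d : ℤ) =
      8 * ((if a = c ∧ b = d then 1 else 0) + (if a = d ∧ b = c then 1 else 0)) := fun a b => by
    have := congrArg (Int.cast : ℤ → ℝ) (std_dual_identity i a b c d)
    push_cast at this
    rw [← this]
    refine Finset.sum_congr rfl fun k _ => ?_
    congr 2
    have h1 : (nbGap i k : ℝ) * ((16 / nbGap i k : ℤ) : ℝ) = 16 := by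
      exact_mod_cast nbGap_dvd i k
    have h2 : (nbGap i k : ℝ) ≠ 0 := by exact_mod_cast (nbGap_pos i k).ne'
    field_simp
    linarith
  have key : 16 * Y c d = ∑ k, (16 / (nbGap i k : ℝ)) *
      pair (toReal (nbForm i k - stdForm i)) Y * ((stdPt i k).mat c d : ℤ) := by
    simp only [pair_eq_sum, Finset.mul_sum, Finset.sum_mul]
    rw [Finset.sum_comm]
    have : ∀ a, ∑ k, ∑ b, 16 / (nbGap i k : ℝ) *
        (toReal (nbForm i k - stdForm i) a b * Y b a) * ((stdPt i k).mat c d : ℤ) =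
        ∑ b, Y b a * (8 * ((if a = c ∧ b = d then 1 else 0) +
          (if a = d ∧ b = c then 1 else 0))) := fun a => by
      rw [Finset.sum_comm]
      refine Finset.sum_congr rfl fun b _ => ?_
      rw [← hid, Finset.mul_sum]
      refine Finset.sum_congr rfl fun k _ => ?_
      simp only [map_apply, eq_intCast]
      ring
    simp only [this]
    have h2 : ∀ a b, Y b a * (8 * ((if a = c ∧ b = d then 1 else 0) +
          (if a = d ∧ b = c then 1 else 0))) =
        (if a = c then if b = d then 8 * Y b a else 0 else 0) +
          (if a = d then if b = c then 8 * Y b a else 0 else 0) := fun a b => by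
      exact mul_eight_mul_ite_add_ite _ _ _ _ _
    simp only [h2, Finset.sum_add_distrib, Finset.sum_ite_irrel, Finset.sum_const_zero,
      Finset.sum_ite_eq', Finset.mem_univ, if_true, hcd]
    ring
  rw [Matrix.sum_apply]
  have : ∀ k, ((pair (toReal (nbForm i k - stdForm i)) Y / nbGap i k) •
      toReal (stdPt i k).mat) c d = (1 / 16) * ((16 / (nbGap i k : ℝ)) *
      pair (toReal (nbForm i k - stdForm i)) Y * ((stdPt i k).mat c d : ℤ)) := fun k => by
    simp only [Matrix.smul_apply, map_apply, eq_intCast, smul_eq_mul]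
    ring
  simp only [this, ← Finset.mul_sum, ← key]
  ring

/-- The matrices `nbInv` as elements of the general linear group. -/
def nbUnit (i : Fin 3) (k : Fin 10) : GL (Fin 4) ℤ :=
  ⟨nbInv i k, nbMat i k, (nbMat_mul_nbInv i k).2, (nbMat_mul_nbInv i k).1⟩

theorem act_nbUnit (i : Fin 3) (k : Fin 10) :
    act (nbUnit i k) (stdForm (nbType i k)) = nbForm i k := rfl

/-- The vertices and neighbours of the standard top cells. -/
def stdData (i : Fin 3) : TopData (stdForm i) where
  pt := stdPt i
  nb := nbForm i
  gap := nbGap i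
  suppV_eq := suppV_stdForm i
  topForm_nb k := ⟨nbUnit i k, nbType i k, (act_nbUnit i k).symm⟩
  gap_pos := nbGap_pos i
  pair_sub_pt := pair_nbForm_sub i
  eq_sum := stdForm_eq_sum_pair i

theorem conj_conj_inv (g : GL (Fin 4) ℤ) (Y : Matrix (Fin 4) (Fin 4) ℝ) :
    conj g (conj g⁻¹ Y) = Y := by
  have : toReal g.1 * toReal (g⁻¹).1 = 1 := by rw [← toReal_mul, GL.mul_inv_val, toReal_one]
  rw [conj, conj]
  have e : toReal g.1 * (toReal (g⁻¹).1 * Y * (toReal (g⁻¹).1)ᵀ) * (toReal g.1)ᵀ =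
    (toReal g.1 * toReal (g⁻¹).1) * Y * ((toReal (g⁻¹).1)ᵀ * (toReal g.1)ᵀ) := by noncomm_ring
  rw [e, ← transpose_mul, this]
  simp

theorem conj_toReal (g : GL (Fin 4) ℤ) (X : Pt) :
    conj g (toReal X.mat) = toReal (g • X).mat := by
  rw [conj, Pt.mat_smul, toReal_mul, toReal_mul]
  rfl

/-- Transport of the data of a top cell. -/
def TopData.act (g : GL (Fin 4) ℤ) {q : Matrix (Fin 4) (Fin 4) ℤ} (d : TopData q) :
    TopData (act g q) where
  pt k := g • d.pt k
  nb k := _root_.act g (d.nb k)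
  gap := d.gap
  suppV_eq := by
    rw [suppV_act, d.suppV_eq]
    ext X
    simp [Set.mem_smul_set]
  topForm_nb k := (d.topForm_nb k).act g
  gap_pos := d.gap_pos
  pair_sub_pt k l := by rw [← act_sub, pair_act, d.pair_sub_pt]
  eq_sum Y hY := by
    have hZ : (conj g⁻¹ Y)ᵀ = conj g⁻¹ Y := by
      rw [conj, transpose_mul, transpose_mul, transpose_transpose, hY, mul_assoc]
    have h := congrArg (conj g) (d.eq_sum _ hZ)
    rw [conj_conj_inv] at h
    simp only [← act_sub, pair_act_real, ← conj_toReal]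
    refine h.trans ?_
    generalize conj g⁻¹ Y = Z
    simp only [conj, Finset.mul_sum, Finset.sum_mul, Matrix.mul_smul, Matrix.smul_mul]

theorem TopForm.nonempty_data {q : Matrix (Fin 4) (Fin 4) ℤ} (hq : TopForm q) :
    Nonempty (TopData q) := by
  obtain ⟨g, i, rfl⟩ := hq
  exact ⟨(stdData i).act g⟩

theorem TopForm.transpose_eq {q : Matrix (Fin 4) (Fin 4) ℤ} (hq : TopForm q) : qᵀ = q := by
  obtain ⟨g, i, rfl⟩ := hq
  rw [_root_.act, transpose_mul, transpose_mul, transpose_transpose, stdForm_transpose, mul_assoc]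

theorem TopData.pt_injective {q : Matrix (Fin 4) (Fin 4) ℤ} (d : TopData q) :
    Function.Injective d.pt := fun k l h => by
  by_contra hkl
  have h1 := d.pair_sub_pt k l
  rw [← h, d.pair_sub_pt, if_pos rfl, if_neg hkl] at h1
  exact (d.gap_pos k).ne' h1

theorem TopData.pair_nb {q : Matrix (Fin 4) (Fin 4) ℤ} (d : TopData q) (k l : Fin 10) :
    pair (d.nb k) (d.pt l).mat = pair q (d.pt l).mat + if k = l then d.gap k else 0 := by
  rw [← d.pair_sub_pt, pair_sub]
  ring

theorem TopData.pt_mem {q : Matrix (Fin 4) (Fin 4) ℤ} (d : TopData q) (k : Fin 10) :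
    d.pt k ∈ suppV q := by
  rw [d.suppV_eq]
  exact ⟨k, rfl⟩

theorem TopData.pt_mem_nb {q : Matrix (Fin 4) (Fin 4) ℤ} (d : TopData q) {k l : Fin 10}
    (h : k ≠ l) : d.pt l ∈ suppV (d.nb k) :=
  mem_suppV_of_pair_eq (d.pt_mem l) (by rw [d.pair_nb, if_neg h, add_zero])

theorem TopData.pt_notMem_nb {q : Matrix (Fin 4) (Fin 4) ℤ} (d : TopData q) (hq : TopForm q)
    (k : Fin 10) : d.pt k ∉ suppV (d.nb k) := fun h => by
  have h1 := hq.pair_eq (d.topForm_nb k) (d.pt_mem k) h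
  rw [d.pair_nb, if_pos rfl] at h1
  have := d.gap_pos k
  omega

theorem ev_smul {R : Type} [CommRing R] (c : R) (Y : Matrix (Fin 4) (Fin 4) R) (v : Fin 4 → R) :
    ev (c • Y) v = c * ev Y v := by
  simp [ev, smul_mulVec]

theorem ev_sum {R ι : Type} [CommRing R] (s : Finset ι) (Y : ι → Matrix (Fin 4) (Fin 4) R)
    (v : Fin 4 → R) : ev (∑ i ∈ s, Y i) v = ∑ i ∈ s, ev (Y i) v := by
  simp [ev, Matrix.sum_mulVec, dotProduct_sum]

/-- The real vector underlying an integral one. -/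
abbrev vecReal (v : Fin 4 → ℤ) : Fin 4 → ℝ := fun j => (v j : ℝ)

theorem ev_toReal (Y : Matrix (Fin 4) (Fin 4) ℤ) (v : Fin 4 → ℤ) :
    ev (toReal Y) (vecReal v) = ((ev Y v : ℤ) : ℝ) := by
  simp [ev_eq_sum]

theorem Vert.ev_nonneg {X : Pt} {l : ℤ} (hX : Vert X l) (v : Fin 4 → ℤ) : 0 ≤ ev X.mat v := by
  rcases hX with ⟨rfl, u, hu, hX⟩ | ⟨rfl, g, rfl⟩
  · rw [hX, ev_vecMulVec]
    positivity
  · have h3 := congrArg (ev · v) (three_smul_smul_ctr g)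
    simp only [ev_smul, ev_sum, ev_vecMulVec] at h3
    have : 0 ≤ ∑ m, ((g.1 *ᵥ rootD m) ⬝ᵥ v) ^ 2 := by positivity
    dsimp only
    omega

theorem act_vecMulVec (g : GL (Fin 4) ℤ) (w : Fin 4 → ℤ) :
    act g (vecMulVec w w) = vecMulVec ((g⁻¹).1ᵀ *ᵥ w) ((g⁻¹).1ᵀ *ᵥ w) := by
  rw [← mul_vecMulVec_mul_transpose, transpose_transpose, act]

theorem domForm_det : ∀ i, (domForm i).det ≠ 0 := by decide +kernel

theorem toReal_vecMulVec (w : Fin 4 → ℤ) :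
    toReal (vecMulVec w w) = vecMulVec (vecReal w) (vecReal w) := by
  ext a b
  simp [vecMulVec_apply]

theorem pair_toReal_act_stdForm (g : GL (Fin 4) ℤ) (i : Fin 3) (Y : Matrix (Fin 4) (Fin 4) ℝ) :
    pair (toReal (act g (stdForm i))) Y =
      5 * ∑ r, ev Y (vecReal ((g⁻¹).1ᵀ *ᵥ domForm i r)) +
      ∑ s, (restCoeff i s : ℝ) * ev Y (vecReal ((g⁻¹).1ᵀ *ᵥ restForm i s)) := by
  have h : act g (stdForm i) =
      ∑ r, (5 : ℤ) • act g (vecMulVec (domForm i r) (domForm i r)) +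
      ∑ s, (restCoeff i s : ℤ) • act g (vecMulVec (restForm i s) (restForm i s)) := by
    conv_lhs => rw [stdForm_eq_sum]
    simp only [act, mul_add, add_mul, Finset.mul_sum, Finset.sum_mul, Matrix.mul_smul,
      Matrix.smul_mul]
  have h2 : toReal (act g (stdForm i)) =
      ∑ r, (5 : ℝ) • toReal (act g (vecMulVec (domForm i r) (domForm i r))) +
      ∑ s, (restCoeff i s : ℝ) • toReal (act g (vecMulVec (restForm i s) (restForm i s))) := by
    rw [h]
    ext a b
    simp only [map_apply, Matrix.add_apply, Matrix.sum_apply, Matrix.smul_apply, smul_eq_mul,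
      eq_intCast]
    push_cast
    rfl
  rw [h2, pair_comm, pair_add, pair_sum, pair_sum]
  simp only [act_vecMulVec, toReal_vecMulVec, pair_smul, pair_vecMulVec, Finset.mul_sum]

/-- Only finitely many top forms are bounded on a uniformly positive matrix. -/
theorem finite_pair_act_le (Y : Matrix (Fin 4) (Fin 4) ℝ) (n : ℕ)
    (hY : ∀ v : Fin 4 → ℤ, ((v ⬝ᵥ v : ℤ) : ℝ) ≤ n * ev Y (vecReal v)) (t : ℝ) :
    {g : GL (Fin 4) ℤ | ∃ i, pair (toReal (act g (stdForm i))) Y ≤ t}.Finite := by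
  have hnn : ∀ v : Fin 4 → ℤ, (0 : ℝ) ≤ ((v ⬝ᵥ v : ℤ) : ℝ) := fun v => by
    exact_mod_cast Finset.sum_nonneg fun j _ => mul_self_nonneg (v j)
  rcases Nat.eq_zero_or_pos n with rfl | hn
  · have h1 := hY 1
    simp at h1
    norm_num at h1
  have hpos : ∀ v : Fin 4 → ℤ, 0 ≤ ev Y (vecReal v) := fun v => by
    have h1 := hY v
    have h2 := hnn v
    have h3 : (0 : ℝ) < n := by exact_mod_cast hn
    by_contra hc
    push Not at hc
    nlinarith
  have : {g : GL (Fin 4) ℤ | ∃ i, pair (toReal (act g (stdForm i))) Y ≤ t} =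
      ⋃ i, {g : GL (Fin 4) ℤ | pair (toReal (act g (stdForm i))) Y ≤ t} := by
    ext g
    simp
  rw [this]
  refine Set.finite_iUnion fun i => ?_
  obtain ⟨T, hT⟩ := exists_nat_ge (n * t)
  let f : GL (Fin 4) ℤ → (Fin 4 → Fin 4 → ℤ) := fun g r => (g⁻¹).1ᵀ *ᵥ domForm i r
  have hfin : (Set.Icc (fun _ _ => -(T : ℤ)) (fun _ _ => (T : ℤ)) :
    Set (Fin 4 → Fin 4 → ℤ)).Finite := Set.finite_Icc _ _
  refine Set.Finite.of_finite_image (f := f) (hfin.subset ?_) ?_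
  · rintro _ ⟨g, hg, rfl⟩
    have hb : ∀ r j, (f g r j) ^ 2 ≤ T := fun r j => by
      have h1 : (f g r j) ^ 2 ≤ f g r ⬝ᵥ f g r := by
        rw [sq]
        exact Finset.single_le_sum (f := fun j => f g r j * f g r j)
          (fun _ _ => mul_self_nonneg _) (Finset.mem_univ j)
      have h2 : ev Y (vecReal (f g r)) ≤ ∑ r, ev Y (vecReal (f g r)) :=
        Finset.single_le_sum (f := fun r => ev Y (vecReal (f g r))) (fun _ _ => hpos _)
          (Finset.mem_univ r)
      have h3 : 0 ≤ ∑ s, (restCoeff i s : ℝ) * ev Y (vecReal ((g⁻¹).1ᵀ *ᵥ restForm i s)) :=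
        Finset.sum_nonneg fun s _ => mul_nonneg (Nat.cast_nonneg _) (hpos _)
      have h4 : pair (toReal (act g (stdForm i))) Y ≤ t := hg
      rw [pair_toReal_act_stdForm] at h4
      have h4' : 5 * ∑ r, ev Y (vecReal (f g r)) +
        ∑ s, (restCoeff i s : ℝ) * ev Y (vecReal ((g⁻¹).1ᵀ *ᵥ restForm i s)) ≤ t := h4
      have h5 := hY (f g r)
      have h6 : ev Y (vecReal (f g r)) ≤ t := by
        have := hpos (f g r)
        linarith
      have h7 : ((f g r ⬝ᵥ f g r : ℤ) : ℝ) ≤ T :=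
        h5.trans ((mul_le_mul_of_nonneg_left h6 (Nat.cast_nonneg n)).trans hT)
      have h8 : f g r ⬝ᵥ f g r ≤ (T : ℤ) := by exact_mod_cast h7
      linarith
    exact ⟨fun r j => by have := hb r j; show -(T : ℤ) ≤ f g r j; nlinarith [this],
      fun r j => by have := hb r j; show f g r j ≤ (T : ℤ); nlinarith [this]⟩
  · intro g _ h _ hgh
    have e : (g⁻¹).1ᵀ * (domForm i)ᵀ = (h⁻¹).1ᵀ * (domForm i)ᵀ := by
      ext a r
      exact congrFun (congrFun hgh r) a
    have hd : ((domForm i)ᵀ).det ≠ 0 := by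
      rw [det_transpose]
      exact domForm_det i
    have e2 := congrArg (· * ((domForm i)ᵀ).adjugate) e
    simp only [mul_assoc, mul_adjugate, Matrix.mul_smul, mul_one] at e2
    have e3 := smul_right_injective _ hd e2
    exact inv_injective (Units.ext (transpose_injective e3))

theorem exists_linearIndependent_between (a : Fin 10 → ℝ) (ha : ∀ k, 0 ≤ a k) :
    ∃ y : Fin 10 → ℝ, LinearIndependent ℚ y ∧ ∀ k, a k < y k ∧ y k < a k + 1 := by
  obtain ⟨x, hx⟩ : ∃ x : Fin 10 → ℝ, LinearIndependent ℚ x := by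
    rw [← Module.le_rank_iff, Real.rank_rat_real]
    exact (Cardinal.natCast_le_aleph0).trans Cardinal.aleph0_le_continuum
  have hc : ∀ k, ∃ c : ℚ, a k < c * x k ∧ c * x k < a k + 1 := fun k => by
    rcases lt_or_gt_of_ne (hx.ne_zero k) with h | h
    · obtain ⟨c, h1, h2⟩ := exists_rat_btwn (show (a k + 1) / x k < a k / x k from
        (div_lt_div_right_of_neg h).2 (by linarith))
      exact ⟨c, (lt_div_iff_of_neg h).1 h2, (div_lt_iff_of_neg h).1 h1⟩
    · obtain ⟨c, h1, h2⟩ := exists_rat_btwn (show a k / x k < (a k + 1) / x k from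
        (div_lt_div_iff_of_pos_right h).2 (by linarith))
      exact ⟨c, (div_lt_iff₀ h).1 h1, (lt_div_iff₀ h).1 h2⟩
  choose c hc using hc
  have hc0 : ∀ k, c k ≠ 0 := fun k h => by
    have h1 := (hc k).1
    rw [h] at h1
    have := ha k
    simp at h1
    linarith
  refine ⟨fun k => c k * x k, ?_, hc⟩
  convert hx.units_smul fun k => Units.mk0 (c k) (hc0 k) using 1
  ext k
  exact (Rat.smul_def (c k) (x k)).symm

/-- A positive definite matrix on which no nonzero integral symmetric form vanishes. -/
theorem exists_generic : ∃ B : Matrix (Fin 4) (Fin 4) ℝ, Bᵀ = B ∧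
    (∀ v : Fin 4 → ℤ, ((v ⬝ᵥ v : ℤ) : ℝ) ≤ ev B (vecReal v)) ∧
    ∀ N : Matrix (Fin 4) (Fin 4) ℤ, Nᵀ = N → pair (toReal N) B = 0 → N = 0 := by
  obtain ⟨y, hy, hb⟩ := exists_linearIndependent_between ![8, 0, 0, 0, 8, 0, 0, 8, 0, 8]
    (by intro k; fin_cases k <;> simp)
  refine ⟨!![y 0, y 1, y 2, y 3; y 1, y 4, y 5, y 6; y 2, y 5, y 7, y 8; y 3, y 6, y 8, y 9],
    ?_, ?_, ?_⟩
  · ext a b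
    fin_cases a <;> fin_cases b <;> rfl
  · intro v
    have hoff : ∀ (b s t : ℝ), 0 < b → b < 1 → -(s ^ 2 + t ^ 2) ≤ 2 * b * (s * t) := by
      intro b s t h0 h1
      nlinarith [mul_nonneg h0.le (sq_nonneg (s + t)),
        mul_nonneg (sub_nonneg.2 h1.le) (add_nonneg (sq_nonneg s) (sq_nonneg t))]
    have hdia : ∀ (b s : ℝ), 8 < b → 8 * s ^ 2 ≤ b * s ^ 2 := fun b s h =>
      mul_le_mul_of_nonneg_right h.le (sq_nonneg s)
    rw [ev_eq_sum]
    simp only [dotProduct, Fin.sum_univ_four, of_apply, cons_val', cons_val_zero, cons_val_one,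
      cons_val_fin_one, cons_val, vecReal]
    push_cast
    have d0 := hdia (y 0) (v 0) (by simpa using (hb 0).1)
    have d1 := hdia (y 4) (v 1) (by simpa using (hb 4).1)
    have d2 := hdia (y 7) (v 2) (by simpa using (hb 7).1)
    have d3 := hdia (y 9) (v 3) (by simpa using (hb 9).1)
    have o01 := hoff (y 1) (v 0) (v 1) (by simpa using (hb 1).1) (by simpa using (hb 1).2)
    have o02 := hoff (y 2) (v 0) (v 2) (by simpa using (hb 2).1) (by simpa using (hb 2).2)
    have o03 := hoff (y 3) (v 0) (v 3) (by simpa using (hb 3).1) (by simpa using (hb 3).2)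
    have o12 := hoff (y 5) (v 1) (v 2) (by simpa using (hb 5).1) (by simpa using (hb 5).2)
    have o13 := hoff (y 6) (v 1) (v 3) (by simpa using (hb 6).1) (by simpa using (hb 6).2)
    have o23 := hoff (y 8) (v 2) (v 3) (by simpa using (hb 8).1) (by simpa using (hb 8).2)
    have := sq_nonneg (v 0 : ℝ)
    have := sq_nonneg (v 1 : ℝ)
    have := sq_nonneg (v 2 : ℝ)
    have := sq_nonneg (v 3 : ℝ)
    linarith
  · intro N hN h
    have hs : ∀ a b, N b a = N a b := fun a b => congrFun (congrFun hN a) b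
    let c : Fin 10 → ℚ := ![N 0 0, 2 * N 0 1, 2 * N 0 2, 2 * N 0 3, N 1 1, 2 * N 1 2, 2 * N 1 3,
      N 2 2, 2 * N 2 3, N 3 3]
    have hsum : ∑ k, c k • y k = 0 := by
      rw [← h, pair_eq_sum]
      simp only [Fin.sum_univ_succ, Fin.sum_univ_zero, of_apply, cons_val', cons_val_zero,
        cons_val_one, cons_val_fin_one, cons_val, map_apply, eq_intCast, Rat.smul_def, c,
        Fin.succ_zero_eq_one, Fin.succ_one_eq_two, hs 0 1, hs 0 2, hs 1 2]
      simp [hs 0 3, hs 1 3, hs 2 3]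
      ring
    have hz := Fintype.linearIndependent_iff.1 hy c hsum
    have z0 := hz 0
    have z1 := hz 1
    have z2 := hz 2
    have z3 := hz 3
    have z4 := hz 4
    have z5 := hz 5
    have z6 := hz 6
    have z7 := hz 7
    have z8 := hz 8
    have z9 := hz 9
    simp [c] at z0 z1 z2 z3 z4 z5 z6 z7 z8 z9
    ext a b
    fin_cases a <;> fin_cases b <;>
      simp [hs 0 1, hs 0 2, hs 0 3, hs 1 2, hs 1 3, hs 2 3, z0, z1, z2, z3, z4, z5, z6, z7, z8, z9]

/-- A fixed generic matrix. -/
def generic : Matrix (Fin 4) (Fin 4) ℝ := exists_generic.choose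

theorem generic_transpose : genericᵀ = generic := exists_generic.choose_spec.1

theorem le_ev_generic (v : Fin 4 → ℤ) : ((v ⬝ᵥ v : ℤ) : ℝ) ≤ ev generic (vecReal v) :=
  exists_generic.choose_spec.2.1 v

/-- The height of a form. -/
def height (q : Matrix (Fin 4) (Fin 4) ℤ) : ℝ := pair (toReal q) generic

theorem toReal_sub (X Y : Matrix (Fin 4) (Fin 4) ℤ) : toReal (X - Y) = toReal X - toReal Y := by
  ext a b
  simp

theorem height_sub (q q' : Matrix (Fin 4) (Fin 4) ℤ) :
    pair (toReal (q - q')) generic = height q - height q' := by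
  rw [toReal_sub, pair_sub]
  rfl

theorem eq_of_height_eq {q q' : Matrix (Fin 4) (Fin 4) ℤ} (hq : TopForm q) (hq' : TopForm q')
    (h : height q = height q') : q = q' :=
  sub_eq_zero.1 (exists_generic.choose_spec.2.2 _
    (by rw [transpose_sub, hq.transpose_eq, hq'.transpose_eq])
    ((height_sub q q').trans (sub_eq_zero.2 h)))

theorem finite_height_le (t : ℝ) : {q | TopForm q ∧ height q ≤ t}.Finite := by
  have h := finite_pair_act_le generic 1 (by simpa using le_ev_generic) t
  refine ((h.prod (Set.finite_univ (α := Fin 3))).image fun p => act p.1 (stdForm p.2)).subset ?_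
  rintro _ ⟨⟨g, i, rfl⟩, hle⟩
  exact ⟨(g, i), ⟨⟨i, hle⟩, trivial⟩, rfl⟩

/-- The sets of vertices whose sum is positive definite. -/
def IsInner (S : Set Pt) : Prop := ∃ (n : ℕ) (F : Finset Pt), ↑F ⊆ S ∧
  ∀ v : Fin 4 → ℤ, v ⬝ᵥ v ≤ n * ∑ u ∈ F, ev u.mat v

theorem IsInner.mono {S S' : Set Pt} (hS : IsInner S) (h : S ⊆ S') : IsInner S' := by
  obtain ⟨n, F, hF, hv⟩ := hS
  exact ⟨n, F, hF.trans h, hv⟩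

theorem IsInner.finite {S : Set Pt} (hS : IsInner S) :
    {g : GL (Fin 4) ℤ | ∃ i, S ⊆ suppV (act g (stdForm i))}.Finite := by
  by_cases hne : ∃ q, TopForm q ∧ S ⊆ suppV q
  swap
  · convert Set.finite_empty
    rw [Set.eq_empty_iff_forall_notMem]
    rintro g ⟨i, hi⟩
    exact hne ⟨_, ⟨g, i, rfl⟩, hi⟩
  obtain ⟨q, hq, hSq⟩ := hne
  obtain ⟨n, F, hF, hv⟩ := hS
  refine (finite_pair_act_le (∑ u ∈ F, toReal u.mat) n (fun v => ?_)
    (pair (toReal q) (∑ u ∈ F, toReal u.mat))).subset ?_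
  · rw [ev_sum]
    simp only [ev_toReal]
    exact_mod_cast hv v
  · rintro g ⟨i, hi⟩
    refine ⟨i, le_of_eq ?_⟩
    simp only [pair_sum, pair_toReal]
    refine Finset.sum_congr rfl fun u hu => ?_
    rw [TopForm.pair_eq ⟨g, i, rfl⟩ hq (hi (hF hu)) (hSq (hF hu))]

theorem IsInner.finite_topForm {S : Set Pt} (hS : IsInner S) :
    {q | TopForm q ∧ S ⊆ suppV q}.Finite := by
  refine ((hS.finite.prod (Set.finite_univ (α := Fin 3))).image
    fun p => act p.1 (stdForm p.2)).subset ?_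
  rintro _ ⟨⟨g, i, rfl⟩, h⟩
  exact ⟨(g, i), ⟨⟨i, h⟩, trivial⟩, rfl⟩

theorem TopForm.finite_suppV {q : Matrix (Fin 4) (Fin 4) ℤ} (hq : TopForm q) :
    (suppV q).Finite := by
  obtain ⟨d⟩ := hq.nonempty_data
  rw [d.suppV_eq]
  exact Set.finite_range _

/-- The cells: sets of vertices of a top cell with positive definite sum. -/
def cells : CellFamily Pt where
  Cell S := IsInner S ∧ ∃ q, TopForm q ∧ S ⊆ suppV q
  convex := fun hS h1 h2 hS'' => by
    obtain ⟨q, hq, hsub⟩ := hS''.2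
    exact ⟨hS.1.mono h1, q, hq, h2.trans hsub⟩
  finite_link := fun {S} hS => by
    refine (hS.1.finite_topForm.biUnion fun q hq => hq.1.finite_suppV).subset ?_
    rintro v ⟨-, q, hq, hv⟩
    exact Set.mem_biUnion (show q ∈ {q | TopForm q ∧ S ⊆ suppV q} from
      ⟨hq, (Set.subset_insert _ _).trans hv⟩) (hv (Set.mem_insert _ _))

theorem suppV_ev_nonneg {q : Matrix (Fin 4) (Fin 4) ℤ} {X : Pt} (hX : X ∈ suppV q)
    (v : Fin 4 → ℤ) : 0 ≤ ev X.mat v := Vert.ev_nonneg hX v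

/-- Chosen data of a top cell. -/
def topData (q : {q // TopForm q}) : TopData q.1 := Classical.choice q.2.nonempty_data

/-- The vertices opposite to the facets through which the height decreases. -/
def downSet (q : {q // TopForm q}) : Set Pt :=
  {X | ∃ k, X = (topData q).pt k ∧ height ((topData q).nb k) < height q.1}

theorem TopData.generic_eq {q : Matrix (Fin 4) (Fin 4) ℤ} (d : TopData q) :
    generic = ∑ k, ((height (d.nb k) - height q) / d.gap k) • toReal (d.pt k).mat := by
  conv_lhs => rw [d.eq_sum generic generic_transpose]
  simp only [height_sub]

theorem coeff_neg_of_mem_downSet {q : {q // TopForm q}} {k : Fin 10}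
    (h : (topData q).pt k ∈ downSet q) :
    (height ((topData q).nb k) - height q.1) / ((topData q).gap k : ℝ) < 0 := by
  obtain ⟨l, hl, hlt⟩ := h
  obtain rfl := (topData q).pt_injective hl
  have : (0 : ℝ) < (topData q).gap k := by exact_mod_cast (topData q).gap_pos k
  exact div_neg_of_neg_of_pos (by linarith) this

theorem inner_of_diff_subset {q : {q // TopForm q}} {S : Set Pt}
    (hD : suppV q.1 \ S ⊆ downSet q) : IsInner S := by
  classical
  set d := topData q
  set b : Fin 10 → ℝ := fun k => (height (d.nb k) - height q.1) / (d.gap k : ℝ)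
  obtain ⟨n, hn⟩ := exists_nat_ge (∑ k, |b k|)
  refine ⟨n, (Finset.univ.filter fun k => d.pt k ∈ S).image d.pt, ?_, fun v => ?_⟩
  · intro X hX
    obtain ⟨k, hk, rfl⟩ := Finset.mem_image.1 (Finset.mem_coe.1 hX)
    exact (Finset.mem_filter.1 hk).2
  · have h1 := le_ev_generic v
    rw [d.generic_eq, ev_sum] at h1
    simp only [ev_smul, ev_toReal] at h1
    rw [Finset.sum_image (fun _ _ _ _ h => d.pt_injective h), Finset.sum_filter]
    have h2 : ∑ k, b k * (ev (d.pt k).mat v : ℤ) ≤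
        n * ∑ k, ((if d.pt k ∈ S then ev (d.pt k).mat v else 0 : ℤ) : ℝ) := by
      rw [Finset.mul_sum]
      refine Finset.sum_le_sum fun k _ => ?_
      have h0 : (0 : ℝ) ≤ (ev (d.pt k).mat v : ℤ) := by
        exact_mod_cast suppV_ev_nonneg (d.pt_mem k) v
      split_ifs with hk
      · refine mul_le_mul_of_nonneg_right ?_ h0
        refine (le_abs_self _).trans (le_trans ?_ hn)
        exact Finset.single_le_sum (f := fun k => |b k|) (fun _ _ => abs_nonneg _)
          (Finset.mem_univ k)
      · have := coeff_neg_of_mem_downSet (hD ⟨d.pt_mem k, hk⟩)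
        simpa using mul_nonpos_of_nonpos_of_nonneg this.le h0
    have h3 := h1.trans h2
    exact_mod_cast h3

theorem height_le_of_diff_subset {q q' : {q // TopForm q}} {S : Set Pt} (hS : S ⊆ suppV q.1)
    (hD : suppV q.1 \ S ⊆ downSet q) (hS' : S ⊆ suppV q'.1) : height q'.1 ≤ height q.1 := by
  have h : height q'.1 - height q.1 ≤ 0 := by
    rw [← height_sub, (topData q).generic_eq, pair_sum]
    refine Finset.sum_nonpos fun k _ => ?_
    rw [pair_smul, pair_toReal, pair_sub]
    by_cases hk : (topData q).pt k ∈ S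
    · rw [q'.2.pair_eq q.2 (hS' hk) (hS hk)]
      simp
    · refine mul_nonpos_of_nonpos_of_nonneg
        (coeff_neg_of_mem_downSet (hD ⟨(topData q).pt_mem k, hk⟩)).le ?_
      have := q'.2.pair_le ((topData q).pt_mem k)
      exact_mod_cast sub_nonneg.2 this
  linarith

theorem exists_highest {S : Set Pt} (hS : cells.Cell S) : ∃ q : {q // TopForm q}, S ⊆ suppV q.1 ∧
    ∀ q' : {q // TopForm q}, S ⊆ suppV q'.1 → height q'.1 ≤ height q.1 := by
  obtain ⟨q0, hq0⟩ := hS.2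
  obtain ⟨q, hq, hmax⟩ := Set.exists_max_image _ height hS.1.finite_topForm ⟨q0, hq0⟩
  exact ⟨⟨q, hq.1⟩, hq.2, fun q' h => hmax q'.1 ⟨q'.2, h⟩⟩

open Classical in
/-- The highest top cell that contains a cell. -/
def highest (S : Set Pt) : {q // TopForm q} :=
  if hS : cells.Cell S then (exists_highest hS).choose else ⟨act 1 (stdForm 0), 1, 0, rfl⟩

theorem subset_highest {S : Set Pt} (hS : cells.Cell S) : S ⊆ suppV (highest S).1 := by
  rw [highest, dif_pos hS]
  exact (exists_highest hS).choose_spec.1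

theorem height_le_highest {S : Set Pt} (hS : cells.Cell S) {q : {q // TopForm q}}
    (h : S ⊆ suppV q.1) : height q.1 ≤ height (highest S).1 := by
  rw [highest, dif_pos hS]
  exact (exists_highest hS).choose_spec.2 q h

/-- The number of lower top cells. -/
def lowerCard (q : {q // TopForm q}) : ℕ := {q' | TopForm q' ∧ height q' < height q.1}.ncard

theorem finite_lower (t : ℝ) : {q | TopForm q ∧ height q < t}.Finite :=
  (finite_height_le t).subset fun _ h => ⟨h.1, h.2.le⟩

theorem lowerCard_mono {q q' : {q // TopForm q}} (h : height q.1 ≤ height q'.1) :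
    lowerCard q ≤ lowerCard q' :=
  Set.ncard_le_ncard (fun _ hx => ⟨hx.1, hx.2.trans_le h⟩) (finite_lower _)

theorem lowerCard_strictMono {q q' : {q // TopForm q}} (h : height q.1 < height q'.1) :
    lowerCard q < lowerCard q' := by
  refine Set.ncard_lt_ncard ⟨fun _ hx => ⟨hx.1, hx.2.trans h⟩, fun hsub => ?_⟩ (finite_lower _)
  exact lt_irrefl _ (hsub (show q.1 ∈ {x | TopForm x ∧ height x < height q'.1} from ⟨q.2, h⟩)).2

theorem lowerCard_injective : Function.Injective lowerCard := fun q q' h => by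
  rcases lt_trichotomy (height q.1) (height q'.1) with hlt | heq | hlt
  · exact absurd h (lowerCard_strictMono hlt).ne
  · exact Subtype.ext (eq_of_height_eq q.2 q'.2 heq)
  · exact absurd h (lowerCard_strictMono hlt).ne'

theorem TopData.nb_ne {q : Matrix (Fin 4) (Fin 4) ℤ} (d : TopData q) (k : Fin 10) :
    d.nb k ≠ q := fun h => by
  have := d.pair_sub_pt k k
  rw [h, sub_self, if_pos rfl] at this
  have h2 := d.gap_pos k
  simp [pair] at this
  omega

/-- The shelling of the cells by the height. -/
def shelling : cells.Decomposition where
  T := {q // TopForm q}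
  W q := suppV q.1
  D := downSet
  t := highest
  r := lowerCard
  r_injective := lowerCard_injective
  D_subset q := by
    rintro X ⟨k, rfl, -⟩
    exact (topData q).pt_mem k
  subset hS := subset_highest hS
  diff_subset := fun {S} hS => by
    rintro X ⟨hX, hXS⟩
    set d := topData (highest S)
    rw [d.suppV_eq] at hX
    obtain ⟨k, rfl⟩ := hX
    refine ⟨k, rfl, lt_of_le_of_ne ?_ fun h => ?_⟩
    · refine height_le_highest hS (q := ⟨d.nb k, d.topForm_nb k⟩) fun Y hY => ?_
      have hY' := subset_highest hS hY
      rw [d.suppV_eq] at hY'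
      obtain ⟨l, rfl⟩ := hY'
      exact d.pt_mem_nb fun hkl => hXS (hkl ▸ hY)
    · exact d.nb_ne k (eq_of_height_eq (d.topForm_nb k) (highest S).2 h)
  interval := fun {S τ} hS hD => by
    have hc : cells.Cell S := ⟨inner_of_diff_subset hD, τ.1, τ.2, hS⟩
    refine ⟨hc, Subtype.ext (eq_of_height_eq (highest S).2 τ.2 (le_antisymm ?_ ?_))⟩
    · exact height_le_of_diff_subset hS hD (subset_highest hc)
    · exact height_le_highest hc hS
  antitone hS hS' h := lowerCard_mono (height_le_highest hS (h.trans (subset_highest hS')))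

theorem ncard_suppV {q : Matrix (Fin 4) (Fin 4) ℤ} (hq : TopForm q) : (suppV q).ncard = 10 := by
  obtain ⟨d⟩ := hq.nonempty_data
  rw [d.suppV_eq, ← Set.image_univ, Set.ncard_image_of_injective _ d.pt_injective,
    Set.ncard_univ]
  simp

theorem cells_exact (m : ℕ) (hm : m < 9) (φ : cells.Alt (m + 1))
    (hφ : CellFamily.bdry m φ = 0) : ∃ ψ, CellFamily.bdry (m + 1) ψ = φ := by
  refine shelling.exists_bdry_eq φ hφ fun x hx => ?_
  have hsub : Set.range x ⊆ suppV (highest (Set.range x)).1 := subset_highest hx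
  have hcard : (Set.range x).ncard ≤ m + 1 := by
    rw [← Set.image_univ]
    refine (Set.ncard_image_le).trans ?_
    rw [Set.ncard_univ]
    simp
  obtain ⟨X, hX, hXS⟩ : ∃ X ∈ suppV (highest (Set.range x)).1, X ∉ Set.range x := by
    by_contra hcon
    push Not at hcon
    have := Set.ncard_le_ncard hcon (Set.finite_range x)
    rw [ncard_suppV (highest _).2] at this
    omega
  exact ⟨X, shelling.diff_subset hx ⟨hX, hXS⟩⟩

theorem dotProduct_mulVec_self_le (A : Matrix (Fin 4) (Fin 4) ℤ) (w : Fin 4 → ℤ) :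
    (A *ᵥ w) ⬝ᵥ (A *ᵥ w) ≤ (∑ a, ∑ b, A a b ^ 2) * (w ⬝ᵥ w) := by
  rw [dotProduct, Finset.sum_mul]
  refine Finset.sum_le_sum fun a _ => ?_
  have := Finset.sum_mul_sq_le_sq_mul_sq Finset.univ (A a) w
  simp only [dotProduct, mulVec, ← sq] at this ⊢
  exact this

theorem IsInner.smul (g : GL (Fin 4) ℤ) {S : Set Pt} (hS : IsInner S) : IsInner (g • S) := by
  classical
  obtain ⟨n, F, hF, hv⟩ := hS
  set A : Matrix (Fin 4) (Fin 4) ℤ := (g⁻¹).1ᵀ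
  refine ⟨(∑ a, ∑ b, A a b ^ 2).toNat * n, F.image (g • ·), ?_, fun v => ?_⟩
  · rw [Finset.coe_image]
    exact Set.image_mono hF
  · have h0 : 0 ≤ ∑ a, ∑ b, A a b ^ 2 := by positivity
    rw [Finset.sum_image (fun _ _ _ _ h => smul_left_cancel g h)]
    simp only [Pt.mat_smul, ev_congr_mul]
    have h1 : v = A *ᵥ (g.1ᵀ *ᵥ v) := by
      rw [mulVec_mulVec, ← transpose_mul, GL.mul_inv_val, transpose_one, one_mulVec]
    have h2 := dotProduct_mulVec_self_le A (g.1ᵀ *ᵥ v)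
    rw [← h1] at h2
    push_cast
    rw [Int.toNat_of_nonneg h0, mul_assoc]
    exact h2.trans (mul_le_mul_of_nonneg_left (hv _) h0)

theorem cells_smul (g : GL (Fin 4) ℤ) (S : Set Pt) (hS : cells.Cell S) : cells.Cell (g • S) := by
  obtain ⟨h1, q, hq, h2⟩ := hS
  refine ⟨h1.smul g, act g q, hq.act g, ?_⟩
  rw [suppV_act]
  exact Set.smul_set_mono h2

/-- The space of real symmetric matrices. -/
def SymR : Submodule ℝ (Matrix (Fin 4) (Fin 4) ℝ) where
  carrier := {Y | Yᵀ = Y}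
  zero_mem' := transpose_zero
  add_mem' := fun {Y Z} hY hZ => by
    rw [Set.mem_ofPred_eq] at hY hZ ⊢
    rw [transpose_add, hY, hZ]
  smul_mem' := fun c Y hY => by
    rw [Set.mem_ofPred_eq] at hY ⊢
    rw [transpose_smul, hY]

/-- The congruence action of real matrices on symmetric matrices. -/
def symHom : Matrix (Fin 4) (Fin 4) ℝ →* Module.End ℝ SymR where
  toFun A :=
    { toFun := fun Y => ⟨A * Y.1 * Aᵀ, by
        have hY : Y.1ᵀ = Y.1 := Y.2
        change (A * Y.1 * Aᵀ)ᵀ = A * Y.1 * Aᵀ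
        rw [transpose_mul, transpose_mul, transpose_transpose, hY, mul_assoc]⟩
      map_add' := fun Y Z => Subtype.ext (by
        change A * (Y.1 + Z.1) * Aᵀ = A * Y.1 * Aᵀ + A * Z.1 * Aᵀ
        noncomm_ring)
      map_smul' := fun c Y => Subtype.ext (by
        change A * (c • Y.1) * Aᵀ = c • (A * Y.1 * Aᵀ)
        rw [Matrix.mul_smul, Matrix.smul_mul]) }
  map_one' := LinearMap.ext fun Y => Subtype.ext (by
    change 1 * Y.1 * 1ᵀ = Y.1
    simp)
  map_mul' A C := LinearMap.ext fun Y => Subtype.ext (by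
    change A * C * Y.1 * (A * C)ᵀ = A * (C * Y.1 * Cᵀ) * Aᵀ
    rw [transpose_mul]
    noncomm_ring)

theorem symHom_apply (A : Matrix (Fin 4) (Fin 4) ℝ) (Y : SymR) :
    (symHom A Y).1 = A * Y.1 * Aᵀ := rfl

/-- The sign of a real number as a rational number. -/
def sgn : ℝ →*₀ ℚ := (SignType.castHom : SignType →*₀ ℚ).comp signHom

theorem sgn_of_pos {x : ℝ} (h : 0 < x) : sgn x = 1 := by
  change ((SignType.sign x : SignType) : ℚ) = 1
  rw [sign_pos h]
  rfl

theorem sgn_of_neg {x : ℝ} (h : x < 0) : sgn x = -1 := by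
  change ((SignType.sign x : SignType) : ℚ) = -1
  rw [sign_neg h]
  rfl

theorem sgn_mul_self {x : ℝ} (h : x ≠ 0) : sgn x * sgn x = 1 := by
  rcases lt_or_gt_of_ne h with h | h
  · rw [sgn_of_neg h]; norm_num
  · rw [sgn_of_pos h]; norm_num

/-- The sign of the action on symmetric matrices of a real matrix. -/
def symSign : Matrix (Fin 4) (Fin 4) ℝ →* ℚ :=
  (sgn : ℝ →* ℚ).comp (LinearMap.det.comp symHom)

/-- The orientation character. -/
def orient : GL (Fin 4) ℤ →* ℚ :=
  symSign.comp (((Int.castRingHom ℝ).mapMatrix : Matrix (Fin 4) (Fin 4) ℤ →+* _).toMonoidHom.comp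
    (Units.coeHom _))

theorem orient_apply (g : GL (Fin 4) ℤ) : orient g = symSign (toReal g.1) := rfl

/-- The symmetric part of a point. -/
def symPt (X : Pt) : SymR :=
  ⟨(1 / 2 : ℝ) • (toReal X.mat + (toReal X.mat)ᵀ), by
    change ((1 / 2 : ℝ) • (toReal X.mat + (toReal X.mat)ᵀ))ᵀ = _
    rw [transpose_smul, transpose_add, transpose_transpose, add_comm]⟩

theorem symPt_smul (g : GL (Fin 4) ℤ) (X : Pt) : symPt (g • X) = symHom (toReal g.1) (symPt X) := by
  refine Subtype.ext ?_
  rw [symHom_apply]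
  simp only [symPt]
  have ht : (toReal g.1)ᵀ = toReal (g.1ᵀ) := rfl
  rw [Pt.mat_smul, toReal_mul, toReal_mul, transpose_mul, transpose_mul, ← ht, transpose_transpose,
    Matrix.mul_smul, Matrix.smul_mul]
  congr 1
  noncomm_ring

theorem Vert.transpose_eq {X : Pt} {l : ℤ} (hX : Vert X l) : X.matᵀ = X.mat := by
  rcases hX with ⟨rfl, u, hu, hX⟩ | ⟨rfl, g, rfl⟩
  · rw [hX, transpose_vecMulVec]
  · have h : ctrᵀ = ctr := by decide +kernel
    change (g.1 * ctr * g.1ᵀ)ᵀ = g.1 * ctr * g.1ᵀ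
    rw [transpose_mul, transpose_mul, transpose_transpose, h, mul_assoc]

theorem symPt_eq {X : Pt} {q : Matrix (Fin 4) (Fin 4) ℤ} (hX : X ∈ suppV q) :
    (symPt X).1 = toReal X.mat := by
  have h : (toReal X.mat)ᵀ = toReal X.mat := by
    change toReal (X.matᵀ) = _
    rw [Vert.transpose_eq hX]
  simp only [symPt, h]
  ext a b
  simp
  ring

theorem TopData.linearIndependent {q : Matrix (Fin 4) (Fin 4) ℤ} (d : TopData q) :
    LinearIndependent ℝ fun k => symPt (d.pt k) := by
  rw [Fintype.linearIndependent_iff]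
  intro c hc k
  have h1 : ∑ l, c l • toReal (d.pt l).mat = 0 := by
    have := congrArg Subtype.val hc
    simpa only [Submodule.coe_sum, Submodule.coe_smul, symPt_eq (d.pt_mem _),
      Submodule.coe_zero] using this
  have h2 := congrArg (pair (toReal (d.nb k - q))) h1
  simp only [pair_sum, pair_smul, pair_toReal, d.pair_sub_pt] at h2
  have h3 : pair (toReal (d.nb k - q)) 0 = 0 := by simp [pair]
  rw [h3, Finset.sum_eq_single k] at h2
  · have := d.gap_pos k
    have h4 : (d.gap k : ℝ) ≠ 0 := by exact_mod_cast this.ne'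
    simpa [h4] using h2
  · intro l _ hl
    simp [hl.symm]
  · simp

theorem TopData.sum_symPt {q : Matrix (Fin 4) (Fin 4) ℤ} (d : TopData q) (Y : SymR) :
    Y = ∑ k, (pair (toReal (d.nb k - q)) Y.1 / d.gap k) • symPt (d.pt k) := by
  refine Subtype.ext ?_
  simp only [Submodule.coe_sum, Submodule.coe_smul, symPt_eq (d.pt_mem _)]
  exact d.eq_sum Y.1 Y.2

/-- The basis of the symmetric matrices given by the vertices of a top cell. -/
def TopData.basis {q : Matrix (Fin 4) (Fin 4) ℤ} (d : TopData q) :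
    Module.Basis (Fin 10) ℝ SymR :=
  Module.Basis.mk d.linearIndependent fun Y _ => by
    rw [d.sum_symPt Y]
    exact Submodule.sum_mem _ fun k _ => Submodule.smul_mem _ _ (Submodule.subset_span ⟨k, rfl⟩)

theorem TopData.basis_apply {q : Matrix (Fin 4) (Fin 4) ℤ} (d : TopData q) (k : Fin 10) :
    d.basis k = symPt (d.pt k) := Module.Basis.mk_apply _ _ _

/-- The oriented volume of ten points. -/
def vol (x : Fin 10 → Pt) : ℝ := (stdData 0).basis.det (symPt ∘ x)

theorem vol_smul (g : GL (Fin 4) ℤ) (x : Fin 10 → Pt) :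
    vol (g • x) = LinearMap.det (symHom (toReal g.1)) * vol x := by
  rw [vol, vol, ← Module.Basis.det_comp]
  congr 1
  ext1 k
  exact symPt_smul g (x k)

theorem sgn_vol_smul (g : GL (Fin 4) ℤ) (x : Fin 10 → Pt) :
    sgn (vol (g • x)) = orient g * sgn (vol x) := by
  rw [vol_smul, map_mul]
  rfl

theorem vol_comp_perm (x : Fin 10 → Pt) (σ : Equiv.Perm (Fin 10)) :
    vol (x ∘ σ) = ((Equiv.Perm.sign σ : ℤ) : ℝ) * vol x := by
  rw [vol, vol, ← Function.comp_assoc, AlternatingMap.map_perm, Units.smul_def, zsmul_eq_mul]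

theorem sgn_intCast_sign (σ : Equiv.Perm (Fin 10)) :
    sgn ((Equiv.Perm.sign σ : ℤ) : ℝ) = ((Equiv.Perm.sign σ : ℤ) : ℚ) := by
  rcases Int.units_eq_one_or (Equiv.Perm.sign σ) with h | h <;> rw [h]
  · simp
  · simpa using sgn_of_neg (by norm_num : (-1 : ℝ) < 0)

theorem TopData.exists_perm {q : Matrix (Fin 4) (Fin 4) ℤ} (d : TopData q) {x : Fin 10 → Pt}
    (hx : Function.Injective x) (hr : Set.range x = suppV q) :
    ∃ σ : Equiv.Perm (Fin 10), x = d.pt ∘ σ := by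
  rw [d.suppV_eq] at hr
  have h : ∀ i, ∃ j, d.pt j = x i := fun i => by
    have : x i ∈ Set.range d.pt := hr ▸ ⟨i, rfl⟩
    exact this
  choose f hf using h
  have hinj : Function.Injective f := fun i j hij => hx (by rw [← hf, ← hf, hij])
  exact ⟨Equiv.ofBijective f (Finite.injective_iff_bijective.1 hinj), funext fun i => (hf i).symm⟩

theorem TopData.vol_pt_ne_zero {q : Matrix (Fin 4) (Fin 4) ℤ} (d : TopData q) :
    vol d.pt ≠ 0 := by
  have h := (stdData 0).basis.isUnit_det d.basis
  have e : (d.basis : Fin 10 → SymR) = symPt ∘ d.pt := funext d.basis_apply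
  rw [e] at h
  exact h.ne_zero

theorem vol_ne_zero {q : Matrix (Fin 4) (Fin 4) ℤ} (hq : TopForm q) {x : Fin 10 → Pt}
    (hx : Function.Injective x) (hr : Set.range x = suppV q) : vol x ≠ 0 := by
  obtain ⟨d⟩ := hq.nonempty_data
  obtain ⟨σ, rfl⟩ := d.exists_perm hx hr
  rw [vol_comp_perm]
  refine mul_ne_zero ?_ d.vol_pt_ne_zero
  exact_mod_cast (Equiv.Perm.sign σ).ne_zero

/-- A permutation of the vertices of the first standard top cell. -/
def swapPerm : Equiv.Perm (Fin 10) := Equiv.swap 9 5 * Equiv.swap 7 3 * Equiv.swap 8 4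

theorem swap_mul_stdPt : ∀ k, (!![0, 1, 0, 0; 1, 0, 0, 0; 0, 0, 1, 0; 0, 0, 0, 1] :
    Matrix (Fin 4) (Fin 4) ℤ) * (stdPt 0 k).mat *
      (!![0, 1, 0, 0; 1, 0, 0, 0; 0, 0, 1, 0; 0, 0, 0, 1] : Matrix (Fin 4) (Fin 4) ℤ)ᵀ =
      (stdPt 0 (swapPerm k)).mat := by
  decide +kernel

theorem sign_swapPerm : Equiv.Perm.sign swapPerm = -1 := by decide +kernel

theorem symSign_swap :
    symSign (toReal !![0, 1, 0, 0; 1, 0, 0, 0; 0, 0, 1, 0; 0, 0, 0, 1]) = -1 := by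
  set s : Matrix (Fin 4) (Fin 4) ℤ := !![0, 1, 0, 0; 1, 0, 0, 0; 0, 0, 1, 0; 0, 0, 0, 1] with hs
  have hss : s * s = 1 := by decide +kernel
  let g : GL (Fin 4) ℤ := ⟨s, s, hss, hss⟩
  have h1 : g • (stdData 0).pt = (stdData 0).pt ∘ swapPerm :=
    funext fun k => Pt.ext (swap_mul_stdPt k)
  have h2 := sgn_vol_smul g (stdData 0).pt
  rw [h1, vol_comp_perm, map_mul, sgn_intCast_sign, sign_swapPerm] at h2
  have h3 : sgn (vol (stdData 0).pt) ≠ 0 := fun h => by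
    have := sgn_mul_self (stdData 0).vol_pt_ne_zero
    rw [h] at this
    norm_num at this
  have h4 := mul_right_cancel₀ h3 h2
  rw [← orient_apply g, ← h4]
  simp

theorem symSign_reflection :
    symSign (diagonal ![-1, 1, 1, 1] : Matrix (Fin 4) (Fin 4) ℝ) = -1 := by
  have h1 : (diagonal ![-1, 1, 1, 1] : Matrix (Fin 4) (Fin 4) ℝ) *
      !![1, -1, 0, 0; 1, 1, 0, 0; 0, 0, 1, 0; 0, 0, 0, 1] =
      !![1, -1, 0, 0; 1, 1, 0, 0; 0, 0, 1, 0; 0, 0, 0, 1] *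
      toReal !![0, 1, 0, 0; 1, 0, 0, 0; 0, 0, 1, 0; 0, 0, 0, 1] := by
    ext a b
    fin_cases a <;> fin_cases b <;> simp [mul_apply, Fin.sum_univ_four, diagonal]
  have h2 : (!![1, -1, 0, 0; 1, 1, 0, 0; 0, 0, 1, 0; 0, 0, 0, 1] : Matrix (Fin 4) (Fin 4) ℝ) *
      !![1 / 2, 1 / 2, 0, 0; -1 / 2, 1 / 2, 0, 0; 0, 0, 1, 0; 0, 0, 0, 1] = 1 := by
    ext a b
    fin_cases a <;> fin_cases b <;> simp [mul_apply, Fin.sum_univ_four] <;> norm_num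
  have h3 := congrArg symSign h1
  have h4 := congrArg symSign h2
  rw [map_mul, map_mul, symSign_swap] at h3
  rw [map_mul, map_one] at h4
  have h5 : symSign (!![1, -1, 0, 0; 1, 1, 0, 0; 0, 0, 1, 0; 0, 0, 0, 1] :
      Matrix (Fin 4) (Fin 4) ℝ) ≠ 0 := left_ne_zero_of_mul (h4 ▸ one_ne_zero)
  rw [mul_comm] at h3
  exact mul_left_cancel₀ h5 h3

theorem TopData.pair_eq_mul_pair_nb {q q' : Matrix (Fin 4) (Fin 4) ℤ} (d : TopData q)
    (hq : TopForm q) (hq' : TopForm q') {k : Fin 10} (hk : ∀ l, l ≠ k → d.pt l ∈ suppV q')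
    (Y : Matrix (Fin 4) (Fin 4) ℝ) (hY : Yᵀ = Y) :
    pair (toReal (q' - q)) Y =
      (pair (q' - q) (d.pt k).mat / d.gap k : ℝ) * pair (toReal (d.nb k - q)) Y := by
  conv_lhs => rw [d.eq_sum Y hY, pair_sum]
  rw [Finset.sum_eq_single k]
  · rw [pair_smul, pair_toReal]
    ring
  · intro l _ hl
    rw [pair_smul, pair_toReal, pair_sub, hq'.pair_eq hq (hk l hl) (d.pt_mem l)]
    simp
  · simp

theorem TopForm.exists_mem_diff {q q' : Matrix (Fin 4) (Fin 4) ℤ} (hq : TopForm q)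
    (hq' : TopForm q') {X : Pt} (hX : X ∈ suppV q) (hX' : X ∉ suppV q') :
    ∃ u, u ∈ suppV q' ∧ u ∉ suppV q := by
  by_contra hcon
  push Not at hcon
  have h : suppV q' = suppV q :=
    Set.eq_of_subset_of_ncard_le hcon (by rw [ncard_suppV hq, ncard_suppV hq']) hq.finite_suppV
  exact hX' (h ▸ hX)

theorem TopForm.pair_sub_neg {q q' : Matrix (Fin 4) (Fin 4) ℤ} (hq : TopForm q) {u : Pt}
    (hu : u ∈ suppV q') (hu' : u ∉ suppV q) : pair (q' - q) u.mat < 0 := by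
  rw [pair_sub]
  have h1 := hq.pair_le hu
  have h2 : pair q u.mat ≠ pair q' u.mat := fun h => hu' (mem_suppV_of_pair_eq hu h)
  omega

theorem toReal_transpose_of_mem {q : Matrix (Fin 4) (Fin 4) ℤ} {u : Pt} (hu : u ∈ suppV q) :
    (toReal u.mat)ᵀ = toReal u.mat := by
  change toReal (u.matᵀ) = _
  rw [Vert.transpose_eq hu]

theorem TopData.eq_or_eq_nb {q q' : Matrix (Fin 4) (Fin 4) ℤ} (d : TopData q)
    (hq : TopForm q) (hq' : TopForm q') {k : Fin 10} (hk : ∀ l, l ≠ k → d.pt l ∈ suppV q') :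
    q' = q ∨ q' = d.nb k := by
  set c : ℝ := pair (q' - q) (d.pt k).mat / d.gap k with hc
  have key := d.pair_eq_mul_pair_nb hq hq' hk
  rw [← hc] at key
  have hgap : (0 : ℝ) < d.gap k := by exact_mod_cast d.gap_pos k
  have hc0 : 0 ≤ c := by
    refine div_nonneg ?_ hgap.le
    have := hq'.pair_le (d.pt_mem k)
    rw [pair_sub]
    exact_mod_cast sub_nonneg.2 this
  rcases hc0.eq_or_lt with hc0 | hc0
  · left
    refine eq_of_height_eq hq' hq ?_
    have := key generic generic_transpose
    rw [height_sub, ← hc0] at this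
    linarith
  · right
    have hpt : d.pt k ∉ suppV q' := fun h => by
      rw [hc, pair_sub, hq'.pair_eq hq h (d.pt_mem k)] at hc0
      simp at hc0
    have hle : c ≤ 1 := by
      obtain ⟨u, hu, hu'⟩ := hq.exists_mem_diff (d.topForm_nb k) (d.pt_mem k)
        (d.pt_notMem_nb hq k)
      have h1 := hq.pair_sub_neg hu hu'
      have h2 := key _ (toReal_transpose_of_mem hu)
      have h3 := hq'.pair_le hu
      have h4 : pair (d.nb k - q) u.mat ≤ pair (q' - q) u.mat := by
        rw [pair_sub, pair_sub]
        linarith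
      rw [pair_toReal, pair_toReal] at h2
      have h1' : ((pair (d.nb k - q) u.mat : ℤ) : ℝ) < 0 := by exact_mod_cast h1
      have h4' : ((pair (d.nb k - q) u.mat : ℤ) : ℝ) ≤ (pair (q' - q) u.mat : ℤ) := by
        exact_mod_cast h4
      rw [h2] at h4'
      nlinarith
    have hge : 1 ≤ c := by
      obtain ⟨u, hu, hu'⟩ := hq.exists_mem_diff hq' (d.pt_mem k) hpt
      have h1 := hq.pair_sub_neg hu hu'
      have h2 := key _ (toReal_transpose_of_mem hu)
      have h3 := (d.topForm_nb k).pair_le hu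
      have h4 : pair (q' - q) u.mat ≤ pair (d.nb k - q) u.mat := by
        rw [pair_sub, pair_sub]
        linarith
      rw [pair_toReal, pair_toReal] at h2
      have h1' : ((pair (q' - q) u.mat : ℤ) : ℝ) < 0 := by exact_mod_cast h1
      have h4' : ((pair (q' - q) u.mat : ℤ) : ℝ) ≤ (pair (d.nb k - q) u.mat : ℤ) := by
        exact_mod_cast h4
      have h5 : ((pair (d.nb k - q) u.mat : ℤ) : ℝ) < 0 := by
        by_contra h
        rw [h2] at h1'
        nlinarith
      rw [h2] at h4'
      nlinarith
    refine eq_of_height_eq hq' (d.topForm_nb k) ?_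
    have := key generic generic_transpose
    rw [height_sub, height_sub, le_antisymm hle hge] at this
    linarith

theorem TopData.exists_opposite {q : Matrix (Fin 4) (Fin 4) ℤ} (d : TopData q) (hq : TopForm q)
    (k : Fin 10) : ∃ u, u ∉ suppV q ∧ suppV (d.nb k) = insert u (suppV q \ {d.pt k}) := by
  obtain ⟨u, hu, hu'⟩ := hq.exists_mem_diff (d.topForm_nb k) (d.pt_mem k) (d.pt_notMem_nb hq k)
  refine ⟨u, hu', (Set.eq_of_subset_of_ncard_le ?_ ?_ (d.topForm_nb k).finite_suppV).symm⟩
  · refine Set.insert_subset hu ?_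
    rintro X ⟨hX, hXk⟩
    rw [d.suppV_eq] at hX
    obtain ⟨l, rfl⟩ := hX
    exact d.pt_mem_nb fun h => hXk (by rw [h]; rfl)
  · rw [Set.ncard_insert_of_notMem (fun h => hu' h.1) (hq.finite_suppV.subset Set.sdiff_subset),
      Set.ncard_sdiff_singleton_of_mem (d.pt_mem k), ncard_suppV hq, ncard_suppV (d.topForm_nb k)]

theorem TopData.vol_cons {q : Matrix (Fin 4) (Fin 4) ℤ} (d : TopData q) {k : Fin 10}
    {x : Fin 9 → Pt} (hx : ∀ l, l ≠ k → d.pt l ∈ Set.range x) {q' : Matrix (Fin 4) (Fin 4) ℤ}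
    {u : Pt} (hu : u ∈ suppV q') :
    vol (Fin.cons u x) = (pair (d.nb k - q) u.mat / d.gap k : ℝ) * vol (Fin.cons (d.pt k) x) := by
  let z : Fin 10 → SymR := Fin.cons 0 (symPt ∘ x)
  let L : SymR →ₗ[ℝ] ℝ := (stdData 0).basis.det.toMultilinearMap.toLinearMap z 0
  have hL : ∀ v, vol (Fin.cons v x) = L (symPt v) := fun v => by
    change (stdData 0).basis.det _ = (stdData 0).basis.det (Function.update z 0 (symPt v))
    congr 1
    rw [Fin.update_cons_zero]
    exact (Fin.comp_cons symPt v x)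
  rw [hL, hL]
  conv_lhs => rw [d.sum_symPt (symPt u), map_sum]
  rw [Finset.sum_eq_single k]
  · rw [map_smul, symPt_eq hu, pair_toReal, smul_eq_mul]
  · intro l _ hl
    obtain ⟨j, hj⟩ := hx l hl
    rw [map_smul, ← hL, vol, AlternatingMap.map_eq_zero_of_eq _ _
      (i := 0) (j := j.succ) (by simp [hj]) (Fin.succ_ne_zero j).symm, smul_zero]
  · simp

open Classical in
/-- The fundamental cycle: the sum of the oriented top cells. -/
def fundCycle : cells.Alt 10 :=
  ⟨fun x => if Function.Injective x ∧ ∃ q, TopForm q ∧ Set.range x = suppV q then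
    sgn (vol x) else 0, by
    refine ⟨fun x σ => ?_, fun x hx => ?_⟩
    · simp only [σ.surjective.range_comp, Function.Injective.of_comp_iff' x σ.bijective,
        vol_comp_perm, map_mul, sgn_intCast_sign]
      split_ifs <;> simp
    · beta_reduce at hx
      split_ifs at hx with h
      · obtain ⟨h1, q, hq, h2⟩ := h
        refine ⟨h1, (shelling.interval (τ := ⟨q, hq⟩) h2.subset ?_).1⟩
        change suppV q \ Set.range x ⊆ _
        rw [h2, sdiff_self]
        exact Set.empty_subset _
      · exact absurd rfl hx⟩

theorem fundCycle_apply {x : Fin 10 → Pt} (hx : Function.Injective x)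
    {q : Matrix (Fin 4) (Fin 4) ℤ} (hq : TopForm q) (hr : Set.range x = suppV q) :
    fundCycle.1 x = sgn (vol x) := if_pos ⟨hx, q, hq, hr⟩

theorem fundCycle_apply_of_not {x : Fin 10 → Pt}
    (hx : ¬ (Function.Injective x ∧ ∃ q, TopForm q ∧ Set.range x = suppV q)) :
    fundCycle.1 x = 0 := if_neg hx

theorem fundCycle_apply_ne_zero {x : Fin 10 → Pt} (hx : Function.Injective x)
    {q : Matrix (Fin 4) (Fin 4) ℤ} (hq : TopForm q) (hr : Set.range x = suppV q) :
    fundCycle.1 x ≠ 0 := fun h => by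
  rw [fundCycle_apply hx hq hr] at h
  have := sgn_mul_self (vol_ne_zero hq hx hr)
  rw [h] at this
  norm_num at this

theorem fundCycle_ne_zero : fundCycle ≠ 0 := fun h => by
  have h1 : TopForm (act 1 (stdForm 0)) := ⟨1, 0, rfl⟩
  obtain ⟨d⟩ := h1.nonempty_data
  exact fundCycle_apply_ne_zero d.pt_injective h1 d.suppV_eq.symm (by rw [h]; rfl)

theorem altRep_fundCycle (g : GL (Fin 4) ℤ) :
    CellFamily.altRep cells_smul orient 10 g fundCycle = fundCycle := by
  ext x
  rw [CellFamily.altRep_apply]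
  by_cases hx : Function.Injective x ∧ ∃ q, TopForm q ∧ Set.range x = suppV q
  · obtain ⟨h1, q, hq, h2⟩ := hx
    have h3 : Function.Injective (g⁻¹ • x) := fun i j h => h1 (smul_left_cancel g⁻¹ h)
    have h4 : Set.range (g⁻¹ • x) = suppV (act g⁻¹ q) := by
      rw [suppV_act, ← h2, ← Set.image_smul, ← Set.range_comp]
      rfl
    rw [fundCycle_apply h1 hq h2, fundCycle_apply h3 (hq.act _) h4, sgn_vol_smul, ← mul_assoc,
      ← map_mul, mul_inv_cancel, map_one, one_mul]
  · rw [fundCycle_apply_of_not hx, fundCycle_apply_of_not, mul_zero]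
    rintro ⟨h1, q, hq, h2⟩
    refine hx ⟨fun i j h => h1 ?_, act g q, hq.act g, ?_⟩
    · exact congrArg (g⁻¹ • ·) h
    · rw [suppV_act, ← h2, ← Set.image_smul, ← Set.range_comp]
      refine congrArg Set.range (funext fun i => ?_)
      simp

theorem bdry_fundCycle : CellFamily.bdry 9 fundCycle = 0 := by
  classical
  ext x
  by_cases hc : cells.Cell (Set.range x)
  swap
  · exact CellFamily.bdry_apply_of_not _ hc
  rw [CellFamily.bdry_apply _ hc]
  change _ = (0 : ℚ)
  by_cases hx : Function.Injective x
  swap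
  · refine finsum_eq_zero_of_forall_eq_zero fun v => fundCycle_apply_of_not fun h => hx ?_
    exact (Fin.cons_injective_iff.1 h.1).2
  obtain ⟨q, hq, hsub⟩ := hc.2
  obtain ⟨d⟩ := hq.nonempty_data
  have hcard : (Set.range x).ncard = 9 := by
    rw [← Set.image_univ, Set.ncard_image_of_injective _ hx, Set.ncard_univ]
    simp
  obtain ⟨k, hk⟩ : ∃ k, d.pt k ∉ Set.range x := by
    by_contra hcon
    push Not at hcon
    have h1 : suppV q ⊆ Set.range x := by
      rw [d.suppV_eq]
      rintro _ ⟨k, rfl⟩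
      exact hcon k
    have := Set.ncard_le_ncard h1 (Set.finite_range x)
    rw [ncard_suppV hq] at this
    omega
  have hr : Set.range x = suppV q \ {d.pt k} := by
    refine Set.eq_of_subset_of_ncard_le (fun X hX => ⟨hsub hX, ?_⟩) ?_
      (hq.finite_suppV.subset Set.sdiff_subset)
    · rintro rfl
      exact hk hX
    · rw [hcard, Set.ncard_sdiff_singleton_of_mem (d.pt_mem k), ncard_suppV hq]
  have hpt : ∀ l, l ≠ k → d.pt l ∈ Set.range x := fun l hl => by
    rw [hr]
    exact ⟨d.pt_mem l, fun h => hl (d.pt_injective h)⟩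
  obtain ⟨u, hu, hnb⟩ := d.exists_opposite hq k
  have hu' : u ∈ suppV (d.nb k) := hnb ▸ Set.mem_insert _ _
  have hne : d.pt k ≠ u := fun h => hu (h ▸ d.pt_mem k)
  have hneg : (pair (d.nb k - q) u.mat / d.gap k : ℝ) < 0 := by
    have h1 := hq.pair_sub_neg hu' hu
    have hgap : (0 : ℝ) < d.gap k := by exact_mod_cast d.gap_pos k
    exact div_neg_of_neg_of_pos (by exact_mod_cast h1) hgap
  rw [finsum_eq_sum_of_support_subset (s := {d.pt k, u}), Finset.sum_pair hne]
  · rw [fundCycle_apply (Fin.cons_injective_iff.2 ⟨hk, hx⟩) hq,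
      fundCycle_apply (Fin.cons_injective_iff.2 ⟨fun h => hu (hsub h), hx⟩) (d.topForm_nb k),
      d.vol_cons hpt hu', map_mul, sgn_of_neg hneg]
    · ring
    · rw [Fin.range_cons, hr, hnb]
    · rw [Fin.range_cons, hr, Set.insert_sdiff_singleton, Set.insert_eq_of_mem (d.pt_mem k)]
  · intro v hv
    have hv1 : fundCycle.1 (Fin.cons v x) ≠ 0 := hv
    obtain ⟨h1, q', hq', h2⟩ : Function.Injective (Fin.cons v x : Fin 10 → Pt) ∧
        ∃ q, TopForm q ∧ Set.range (Fin.cons v x : Fin 10 → Pt) = suppV q := by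
      by_contra h
      exact hv1 (fundCycle_apply_of_not h)
    rw [Fin.range_cons] at h2
    have hvx := (Fin.cons_injective_iff.1 h1).1
    have hvq : v ∈ suppV q' := h2 ▸ Set.mem_insert _ _
    rw [Finset.coe_insert, Finset.coe_singleton]
    rcases d.eq_or_eq_nb hq hq' (fun l hl => h2 ▸ Set.mem_insert_of_mem _ (hpt l hl)) with rfl | rfl
    · left
      by_contra hvk
      exact hvx (hr ▸ ⟨hvq, hvk⟩)
    · right
      rw [hnb, ← hr] at hvq
      exact hvq.resolve_right hvx

theorem height_le_of_downSet_eq_empty {q : {q // TopForm q}} (h : downSet q = ∅)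
    (q' : {q // TopForm q}) : height q.1 ≤ height q'.1 := by
  have h1 : 0 ≤ height q'.1 - height q.1 := by
    rw [← height_sub, (topData q).generic_eq, pair_sum]
    refine Finset.sum_nonneg fun k _ => ?_
    rw [pair_smul, pair_toReal, pair_sub]
    refine mul_nonneg (div_nonneg ?_ (by exact_mod_cast ((topData q).gap_pos k).le)) ?_
    · by_contra hlt
      have : (topData q).pt k ∈ downSet q := ⟨k, rfl, by linarith⟩
      rw [h] at this
      exact this
    · have := q'.2.pair_le ((topData q).pt_mem k)
      exact_mod_cast sub_nonneg.2 this
  linarith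

theorem range_eq_suppV_highest {x : Fin 10 → Pt} (hx : Function.Injective x)
    (hc : cells.Cell (Set.range x)) : Set.range x = suppV (highest (Set.range x)).1 := by
  refine Set.eq_of_subset_of_ncard_le (subset_highest hc) ?_ (highest _).2.finite_suppV
  rw [ncard_suppV (highest _).2, ← Set.image_univ, Set.ncard_image_of_injective _ hx,
    Set.ncard_univ]
  simp

theorem exists_eq_smul_fundCycle (φ : cells.Alt 10) (hφ : CellFamily.bdry 9 φ = 0) :
    ∃ c : ℚ, φ = c • fundCycle := by
  by_cases hx0 : ∃ x0, fundCycle.1 x0 ≠ 0 ∧ downSet (highest (Set.range x0)) = ∅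
  · obtain ⟨x0, h0, hD⟩ := hx0
    refine ⟨φ.1 x0 / fundCycle.1 x0, sub_eq_zero.1 ?_⟩
    set ψ := φ - (φ.1 x0 / fundCycle.1 x0) • fundCycle with hψ
    have hψ0 : ψ.1 x0 = 0 := by
      change φ.1 x0 - φ.1 x0 / fundCycle.1 x0 * fundCycle.1 x0 = 0
      rw [div_mul_cancel₀ _ h0, sub_self]
    refine shelling.eq_zero_of_bdry_eq_zero ψ ?_ (fun x => range_eq_suppV_highest) fun x hx => ?_
    · rw [hψ, map_sub, map_smul, bdry_fundCycle, hφ, smul_zero, sub_zero]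
    · by_contra hne
      have e : highest (Set.range x) = highest (Set.range x0) :=
        Subtype.ext (eq_of_height_eq (highest _).2 (highest _).2
          (le_antisymm (height_le_of_downSet_eq_empty hx _) (height_le_of_downSet_eq_empty hD _)))
      have hr := range_eq_suppV_highest (CellFamily.Alt.injective ψ hne)
        (CellFamily.Alt.cell ψ hne)
      rw [e] at hr
      have hr0 := range_eq_suppV_highest (CellFamily.Alt.injective _ h0) (CellFamily.Alt.cell _ h0)
      obtain ⟨σ, hσ⟩ := (topData _).exists_perm (CellFamily.Alt.injective ψ hne) hr
      obtain ⟨σ', hσ'⟩ := (topData _).exists_perm (CellFamily.Alt.injective _ h0) hr0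
      have h1 : x = x0 ∘ (σ'⁻¹ * σ) := by
        rw [hσ]
        funext i
        rw [Function.comp_apply, Function.comp_apply, congrFun hσ']
        simp
      rw [h1, CellFamily.Alt.isAlt ψ, hψ0, mul_zero] at hne
      exact hne rfl
  · refine ⟨0, ?_⟩
    rw [zero_smul]
    refine shelling.eq_zero_of_bdry_eq_zero φ hφ (fun x => range_eq_suppV_highest) fun x hx => ?_
    by_contra hne
    have hr := range_eq_suppV_highest (CellFamily.Alt.injective φ hne) (CellFamily.Alt.cell φ hne)
    exact hx0 ⟨x, fundCycle_apply_ne_zero (CellFamily.Alt.injective φ hne) (highest _).2 hr, hx⟩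

theorem cells_acyclic (m n : ℕ) :
    Subsingleton (groupCohomology (Rep.of (CellFamily.altRep cells_smul orient m)) (n + 1)) := by
  have h : ∀ (γ : GL (Fin 4) ℤ) (S : Set Pt) i, γ⁻¹ • S ⊆ suppV (stdForm i) ↔
      S ⊆ suppV (act γ (stdForm i)) := fun γ S i => by
    rw [suppV_act, Set.subset_smul_set_iff]
  refine CellFamily.altRep_acyclic cells_smul orient (fun S => ∃ i, S ⊆ suppV (stdForm i))
    (fun S hS => ?_) (fun S hS => ?_) m n
  · simp only [h]
    exact hS.1.finite
  · simp only [h]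
    obtain ⟨-, q, ⟨g, i, rfl⟩, hsub⟩ := hS
    exact ⟨g, i, hsub⟩

theorem exists_reflection (e : Fin 4 → Fin 4 → ℤ) (he : IsUnit (of e).det) :
    ∃ g : GL (Fin 4) ℤ, orient g = -1 ∧ g.1 *ᵥ e 0 = -e 0 ∧ ∀ a, a ≠ 0 → g.1 *ᵥ e a = e a := by
  have hdd : (diagonal ![-1, 1, 1, 1] : Matrix (Fin 4) (Fin 4) ℤ) *
      diagonal ![-1, 1, 1, 1] = 1 := by
    decide +kernel
  let D : GL (Fin 4) ℤ := ⟨diagonal ![-1, 1, 1, 1], diagonal ![-1, 1, 1, 1], hdd, hdd⟩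
  have hD : orient D = -1 := by
    rw [orient_apply, ← symSign_reflection]
    congr 1
    ext a b
    fin_cases a <;> fin_cases b <;> simp [D]
  obtain ⟨U, hU⟩ := (isUnit_iff_isUnit_det ((of e)ᵀ)).2 (by rwa [det_transpose])
  have hcol : ∀ a, U.1 *ᵥ Pi.single a 1 = e a := fun a => by
    rw [hU, mulVec_single_one]
    rfl
  have hinv : ∀ a, (U⁻¹).1 *ᵥ e a = Pi.single a 1 := fun a => by
    rw [← hcol, mulVec_mulVec, GL.inv_mul_val, one_mulVec]
  have hg : ∀ a, (U * D * U⁻¹).1 *ᵥ e a = (![-1, 1, 1, 1] : Fin 4 → ℤ) a • e a := fun a => by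
    rw [Units.val_mul, Units.val_mul, ← mulVec_mulVec, ← mulVec_mulVec, hinv]
    change U.1 *ᵥ (diagonal _ *ᵥ _) = _
    rw [diagonal_mulVec_single, mul_one, ← hcol, ← mulVec_smul, ← Pi.single_smul, smul_eq_mul,
      mul_one]
  refine ⟨U * D * U⁻¹, ?_, ?_, fun a ha => ?_⟩
  · rw [map_mul, mul_comm, ← map_mul, inv_mul_cancel_left, hD]
  · rw [hg]
    simp
  · rw [hg]
    fin_cases a
    · exact absurd rfl ha
    all_goals simp

theorem exists_flip_or_circuit (v : Fin 5 → Fin 4 → ℤ)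
    (hdet : ∀ f : Fin 4 → Fin 5, (of (v ∘ f)).det = 0 ∨ (of (v ∘ f)).det = 1 ∨
      (of (v ∘ f)).det = -1) (hne : ∃ f : Fin 4 → Fin 5, (of (v ∘ f)).det ≠ 0) :
    (∃ g : GL (Fin 4) ℤ, orient g = -1 ∧ ∀ j, g.1 *ᵥ v j = v j ∨ g.1 *ᵥ v j = -v j) ∨
      ∃ s : Fin 5 → ℤ, (∀ j, s j = 1 ∨ s j = -1) ∧ ∑ j, s j • v j = 0 := by
  obtain ⟨f, hf⟩ := hne
  have hf1 : (of (v ∘ f)).det = 1 ∨ (of (v ∘ f)).det = -1 := (hdet f).resolve_left hf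
  have hfu : IsUnit (of (v ∘ f)).det := Int.isUnit_iff.2 hf1
  have hinj : Function.Injective f := fun a b hab => by
    by_contra hne
    exact hf (det_zero_of_row_eq hne (by change v (f a) = v (f b); rw [hab]))
  obtain ⟨m, hm⟩ : ∃ m, m ∉ Set.range f := by
    by_contra h
    push Not at h
    have := Fintype.card_le_of_surjective f h
    simp at this
  have hbij : Function.Bijective (Fin.cons m f : Fin 5 → Fin 5) :=
    Finite.injective_iff_bijective.1 (Fin.cons_injective_iff.2 ⟨hm, hinj⟩)
  obtain ⟨U, hU⟩ := (isUnit_iff_isUnit_det (of (v ∘ f))).2 hfu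
  set c : Fin 4 → ℤ := v m ᵥ* (U⁻¹).1 with hc
  have hvm : v m = ∑ a, c a • v (f a) := by
    have h : c ᵥ* of (v ∘ f) = v m := by
      rw [hc, vecMul_vecMul, ← hU, GL.inv_mul_val, vecMul_one]
    rw [← h, vecMul_eq_sum]
    rfl
  have hcdet : ∀ a, (of (v ∘ Function.update f a m)).det = c a * (of (v ∘ f)).det := fun a => by
    rw [← smul_eq_mul, ← det_updateRow_sum]
    congr 1
    ext b d
    by_cases hb : b = a
    · subst hb
      simp [hvm]
    · simp [hb]
  have hc1 : ∀ a, c a = 0 ∨ c a = 1 ∨ c a = -1 := fun a => by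
    have := hcdet a ▸ hdet (Function.update f a m)
    rcases hf1 with h | h <;> rw [h] at this <;> omega
  by_cases h0 : ∃ a, c a = 0
  · left
    obtain ⟨a, ha⟩ := h0
    have hu : IsUnit (of (v ∘ f ∘ Equiv.swap 0 a)).det := by
      have : of (v ∘ f ∘ Equiv.swap 0 a) = (of (v ∘ f)).submatrix (Equiv.swap 0 a) id := rfl
      rw [this, det_permute]
      exact ((Equiv.Perm.sign _).isUnit).mul hfu
    obtain ⟨g, hg, h1, h2⟩ := exists_reflection _ hu
    have h3 : ∀ b, b ≠ a → g.1 *ᵥ v (f b) = v (f b) := fun b hb => by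
      have := h2 (Equiv.swap 0 a b) fun h => hb (by
        rw [Equiv.swap_apply_eq_iff, Equiv.swap_apply_left] at h
        exact h)
      simpa using this
    have h4 : g.1 *ᵥ v (f a) = -v (f a) := by simpa using h1
    refine ⟨g, hg, fun j => ?_⟩
    obtain ⟨i, rfl⟩ := hbij.2 j
    induction i using Fin.cases with
    | zero =>
      left
      rw [Fin.cons_zero, hvm, mulVec_sum]
      refine Finset.sum_congr rfl fun b _ => ?_
      rw [mulVec_smul]
      by_cases hb : b = a
      · rw [hb, ha, zero_smul, zero_smul]
      · rw [h3 b hb]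
    | succ b =>
      rw [Fin.cons_succ]
      by_cases hb : b = a
      · exact Or.inr (hb ▸ h4)
      · exact Or.inl (h3 b hb)
  · right
    push Not at h0
    let e := Equiv.ofBijective _ hbij
    have he : ∀ i, e i = (Fin.cons m f : Fin 5 → Fin 5) i := fun _ => rfl
    refine ⟨(Fin.cons (-1) c : Fin 5 → ℤ) ∘ e.symm, fun j => ?_, ?_⟩
    · rw [Function.comp_apply]
      generalize e.symm j = i
      induction i using Fin.cases with
      | zero => exact Or.inr rfl
      | succ b =>
        rw [Fin.cons_succ]
        exact (hc1 b).resolve_left (h0 b)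
    · rw [← e.sum_comp, Fin.sum_univ_succ]
      simp only [Function.comp_apply, Equiv.symm_apply_apply]
      simp only [Fin.cons_zero, Fin.cons_succ, he]
      rw [← hvm]
      simp

theorem exists_det_ne_zero (v : Fin 5 → Fin 4 → ℤ)
    (hv : ∀ w : Fin 4 → ℤ, (∀ j, v j ⬝ᵥ w = 0) → w = 0) :
    ∃ f : Fin 4 → Fin 5, (of (v ∘ f)).det ≠ 0 := by
  classical
  by_contra! hcon
  have h1 : ((of v)ᵀ * of v).det = 0 := by
    have h2 : (of v)ᵀ * of v = of fun a => ∑ j, v j a • v j := by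
      ext a b
      simp [mul_apply]
    rw [h2]
    change detRowAlternating.toMultilinearMap (fun a => ∑ j, v j a • v j) = 0
    rw [MultilinearMap.map_sum]
    refine Finset.sum_eq_zero fun f _ => ?_
    rw [MultilinearMap.map_smul_univ]
    have := hcon f
    change _ • (of (v ∘ f)).det = 0
    rw [this, smul_zero]
  obtain ⟨w, hw, hw0⟩ := exists_mulVec_eq_zero_iff.2 h1
  refine hw (hv w fun j => ?_)
  have h2 : (of v *ᵥ w) ⬝ᵥ (of v *ᵥ w) = 0 := by
    rw [dotProduct_mulVec, vecMul_mulVec, ← dotProduct_mulVec, hw0, dotProduct_zero]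
  exact congrFun (dotProduct_self_eq_zero.1 h2) j

theorem det_stdVec_of_lt : ∀ i, ∀ a b : Fin 10, a < b → ∀ c, b < c → ∀ d, c < d →
    (i = 0 ∨ d ≠ 9) →
    (of ![stdVec i a, stdVec i b, stdVec i c, stdVec i d]).det = 0 ∨
      (of ![stdVec i a, stdVec i b, stdVec i c, stdVec i d]).det = 1 ∨
      (of ![stdVec i a, stdVec i b, stdVec i c, stdVec i d]).det = -1 := by
  decide +kernel

theorem det_stdVec (i : Fin 3) (k : Fin 4 → Fin 10) (hk : ∀ a, i = 0 ∨ k a ≠ 9) :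
    (of (stdVec i ∘ k)).det = 0 ∨ (of (stdVec i ∘ k)).det = 1 ∨
      (of (stdVec i ∘ k)).det = -1 := by
  by_cases hinj : Function.Injective k
  · set σ := Tuple.sort k with hσ
    have hmono : StrictMono (k ∘ σ) :=
      (Tuple.monotone_sort k).strictMono_of_injective (hinj.comp σ.injective)
    have h := det_stdVec_of_lt i _ _ (hmono (show (0 : Fin 4) < 1 by decide)) _
      (hmono (show (1 : Fin 4) < 2 by decide)) _ (hmono (show (2 : Fin 4) < 3 by decide)) (hk _)
    have e : of ![stdVec i ((k ∘ σ) 0), stdVec i ((k ∘ σ) 1), stdVec i ((k ∘ σ) 2),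
        stdVec i ((k ∘ σ) 3)] = (of (stdVec i ∘ k)).submatrix σ id := by
      ext a b
      fin_cases a <;> rfl
    rw [e, det_permute] at h
    rcases Int.units_eq_one_or (Equiv.Perm.sign σ) with h1 | h1 <;> rw [h1] at h <;>
      simp at h <;> omega
  · left
    rw [Function.not_injective_iff] at hinj
    obtain ⟨a, b, hab, hne⟩ := hinj
    exact det_zero_of_row_eq hne (by change stdVec i (k a) = stdVec i (k b); rw [hab])

theorem vecMulVec_self_inj {v w : Fin 4 → ℤ} (h : vecMulVec v v = vecMulVec w w) :
    v = w ∨ v = -w := by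
  have h1 : ∀ a b, v a * v b = w a * w b := fun a b => congrFun (congrFun h a) b
  by_cases hv : v = 0
  · left
    subst hv
    funext a
    have := h1 a a
    simp at this
    simp [this]
  · obtain ⟨a, ha⟩ := Function.ne_iff.1 hv
    rcases mul_self_eq_mul_self_iff.1 (h1 a a) with h2 | h2
    · refine Or.inl (funext fun b => mul_left_cancel₀ ha ?_)
      rw [h1, h2]
    · refine Or.inr (funext fun b => mul_left_cancel₀ ha ?_)
      rw [h1, h2, Pi.neg_apply]
      ring

theorem det_ctr : ctr.det ≠ 0 := by decide +kernel

theorem det_ne_zero_of_mem_orbit {X : Pt} (hX : X ∈ MulAction.orbit (GL (Fin 4) ℤ) (⟨ctr⟩ : Pt)) :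
    X.mat.det ≠ 0 := by
  obtain ⟨g, rfl⟩ := hX
  change (g.1 * ctr * g.1ᵀ).det ≠ 0
  rw [det_mul, det_mul, det_transpose]
  have hg : g.1.det ≠ 0 := ((isUnit_iff_isUnit_det _).1 g.isUnit).ne_zero
  exact mul_ne_zero (mul_ne_zero hg det_ctr) hg

theorem vecMulVec_notMem_orbit (v : Fin 4 → ℤ) :
    (⟨vecMulVec v v⟩ : Pt) ∉ MulAction.orbit (GL (Fin 4) ℤ) (⟨ctr⟩ : Pt) :=
  fun h => det_ne_zero_of_mem_orbit h (det_vecMulVec v v)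

theorem stdPt_mem_orbit_iff (i : Fin 3) (k : Fin 10) :
    stdPt i k ∈ MulAction.orbit (GL (Fin 4) ℤ) (⟨ctr⟩ : Pt) ↔ i ≠ 0 ∧ k = 9 := by
  constructor
  · intro h
    by_contra hcon
    rw [stdPt, if_neg hcon] at h
    exact vecMulVec_notMem_orbit _ h
  · intro h
    rw [stdPt, if_pos h]
    exact MulAction.mem_orbit_self _

theorem smul_mem_orbit_ctr_iff (g : GL (Fin 4) ℤ) (X : Pt) :
    g • X ∈ MulAction.orbit (GL (Fin 4) ℤ) (⟨ctr⟩ : Pt) ↔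
      X ∈ MulAction.orbit (GL (Fin 4) ℤ) (⟨ctr⟩ : Pt) := by
  constructor
  · rintro ⟨h, hh⟩
    refine ⟨g⁻¹ * h, ?_⟩
    have hh' : h • (⟨ctr⟩ : Pt) = g • X := hh
    change (g⁻¹ * h) • (⟨ctr⟩ : Pt) = X
    rw [mul_smul, hh', inv_smul_smul]
  · rintro ⟨h, rfl⟩
    exact ⟨g * h, mul_smul g h _⟩

theorem mem_suppV_act_stdForm {g : GL (Fin 4) ℤ} {i : Fin 3} {X : Pt} :
    X ∈ suppV (act g (stdForm i)) ↔ ∃ k, X = g • stdPt i k := by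
  rw [suppV_act, suppV_stdForm, Set.mem_smul_set]
  constructor
  · rintro ⟨_, ⟨k, rfl⟩, rfl⟩
    exact ⟨k, rfl⟩
  · rintro ⟨k, rfl⟩
    exact ⟨_, ⟨k, rfl⟩, rfl⟩

theorem orbit_eq_of_mem_suppV {q : Matrix (Fin 4) (Fin 4) ℤ} (hq : TopForm q) {X Y : Pt}
    (hX : X ∈ suppV q) (hY : Y ∈ suppV q)
    (hX' : X ∈ MulAction.orbit (GL (Fin 4) ℤ) (⟨ctr⟩ : Pt))
    (hY' : Y ∈ MulAction.orbit (GL (Fin 4) ℤ) (⟨ctr⟩ : Pt)) : X = Y := by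
  obtain ⟨g, i, rfl⟩ := hq
  obtain ⟨k, rfl⟩ := mem_suppV_act_stdForm.1 hX
  obtain ⟨l, rfl⟩ := mem_suppV_act_stdForm.1 hY
  rw [smul_mem_orbit_ctr_iff, stdPt_mem_orbit_iff] at hX' hY'
  rw [hX'.2, hY'.2]

theorem isInner_ctr : IsInner {(⟨ctr⟩ : Pt)} := by
  refine ⟨2, {⟨ctr⟩}, by simp, fun v => ?_⟩
  have h3 := congrArg (ev · v) three_smul_ctr
  simp only [ev_smul, ev_sum, ev_vecMulVec] at h3
  rw [Finset.sum_singleton]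
  have h4 : ∀ m, 0 ≤ (rootD m ⬝ᵥ v) ^ 2 := fun m => sq_nonneg _
  have h5 : v ⬝ᵥ v ≤ ∑ m, (rootD m ⬝ᵥ v) ^ 2 := by
    have h6 : ∑ m ∈ ({0, 2, 5, 8} : Finset (Fin 12)), (rootD m ⬝ᵥ v) ^ 2 ≤
        ∑ m, (rootD m ⬝ᵥ v) ^ 2 :=
      Finset.sum_le_sum_of_subset_of_nonneg (Finset.subset_univ _) fun m _ _ => h4 m
    refine le_trans (le_of_eq ?_) h6
    rw [Finset.sum_insert (by decide), Finset.sum_insert (by decide),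
      Finset.sum_insert (by decide), Finset.sum_singleton]
    simp [rootD, dotProduct, Fin.sum_univ_four]
    ring
  have h7 : 0 ≤ v ⬝ᵥ v := Finset.sum_nonneg fun j _ => mul_self_nonneg (v j)
  push_cast
  linarith

theorem finite_smul_ctr_mem {S : Set Pt} (hS : cells.Cell S) :
    {γ : GL (Fin 4) ℤ | (⟨ctr⟩ : Pt) ∈ γ⁻¹ • S}.Finite := by
  obtain ⟨-, q, hq, hsub⟩ := hS
  have h : ∀ u : Pt, {γ : GL (Fin 4) ℤ | γ • (⟨ctr⟩ : Pt) = u}.Finite := fun u => by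
    by_cases hu : ∃ γ : GL (Fin 4) ℤ, γ • (⟨ctr⟩ : Pt) = u
    · obtain ⟨γ, rfl⟩ := hu
      have h1 := isInner_ctr.smul γ
      rw [Set.smul_set_singleton] at h1
      refine h1.finite.subset fun δ hδ => ⟨1, ?_⟩
      rw [Set.singleton_subset_iff, mem_suppV_act_stdForm]
      exact ⟨9, hδ.symm⟩
    · convert Set.finite_empty
      ext γ
      exact ⟨fun h => (hu ⟨γ, h⟩).elim, fun h => h.elim⟩
  refine ((hq.finite_suppV.subset hsub).biUnion fun u _ => h u).subset fun γ hγ => ?_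
  rw [Set.mem_ofPred_eq, Set.mem_inv_smul_set_iff] at hγ
  exact Set.mem_biUnion hγ rfl

theorem exists_line_vertex {S : Set Pt} (hS : cells.Cell S) (hcard : S.ncard = 5) :
    ∃ v, v ∉ MulAction.orbit (GL (Fin 4) ℤ) (⟨ctr⟩ : Pt) ∧ v ∉ S ∧ cells.Cell (insert v S) := by
  classical
  obtain ⟨hin, q, ⟨g, i, rfl⟩, hsub⟩ := hS
  have hq : TopForm (act g (stdForm i)) := ⟨g, i, rfl⟩
  have hSf : S.Finite := hq.finite_suppV.subset hsub
  obtain ⟨k, hk9, hkS⟩ : ∃ k : Fin 10, k ≠ 9 ∧ g • stdPt i k ∉ S := by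
    by_contra! hcon
    have h1 : (fun k => g • stdPt i k) '' {k | k ≠ 9} ⊆ S := by
      rintro _ ⟨k, hk, rfl⟩
      exact hcon k hk
    have h2 := Set.ncard_le_ncard h1 hSf
    have hinj : Function.Injective fun k => g • stdPt i k := fun a b hab =>
      (stdData i).pt_injective (smul_left_cancel g hab)
    rw [Set.ncard_image_of_injective _ hinj, hcard, Set.ncard_eq_toFinset_card'] at h2
    revert h2
    decide
  refine ⟨g • stdPt i k, ?_, hkS, hin.mono (Set.subset_insert _ _), _, hq,
    Set.insert_subset (mem_suppV_act_stdForm.2 ⟨k, rfl⟩) hsub⟩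
  rw [smul_mem_orbit_ctr_iff, stdPt_mem_orbit_iff]
  exact fun h => hk9 h.2

theorem smul_line_eq {g : GL (Fin 4) ℤ} {v : Fin 4 → ℤ}
    (h : g.1 *ᵥ v = v ∨ g.1 *ᵥ v = -v) : g • (⟨vecMulVec v v⟩ : Pt) = ⟨vecMulVec v v⟩ := by
  refine Pt.ext ?_
  rw [smul_vecMulVec_mat]
  exact vecMulVec_eq_of_eq_or_neg h

theorem flip_or_circuit {x : Fin 5 → Pt} (hc : cells.Cell (Set.range x))
    (ho : ∀ j, x j ∉ MulAction.orbit (GL (Fin 4) ℤ) (⟨ctr⟩ : Pt)) :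
    CellFamily.Flip orient x ∨
      ∃ v : Fin 5 → Fin 4 → ℤ, (∀ j, x j = ⟨vecMulVec (v j) (v j)⟩) ∧ ∑ j, v j = 0 := by
  obtain ⟨⟨n, F, hF, hin⟩, q, ⟨g, i, rfl⟩, hsub⟩ := hc
  have hk : ∀ j, ∃ k, x j = g • stdPt i k := fun j =>
    mem_suppV_act_stdForm.1 (hsub ⟨j, rfl⟩)
  choose k hk using hk
  have hk9 : ∀ j, i = 0 ∨ k j ≠ 9 := fun j => by
    have := ho j
    rw [hk, smul_mem_orbit_ctr_iff, stdPt_mem_orbit_iff] at this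
    tauto
  set v : Fin 5 → Fin 4 → ℤ := fun j => g.1 *ᵥ stdVec i (k j) with hv
  have hx : ∀ j, x j = ⟨vecMulVec (v j) (v j)⟩ := fun j => by
    rw [hk, stdPt_of_ne (hk9 j)]
    exact Pt.ext (smul_vecMulVec_mat _ _)
  have hdet : ∀ f : Fin 4 → Fin 5, (of (v ∘ f)).det = 0 ∨ (of (v ∘ f)).det = 1 ∨
      (of (v ∘ f)).det = -1 := fun f => by
    have e : of (v ∘ f) = of (stdVec i ∘ (k ∘ f)) * g.1ᵀ := by
      ext a b
      simp [hv, mulVec, dotProduct, mul_apply, mul_comm]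
    have h1 := det_stdVec i (k ∘ f) fun a => hk9 (f a)
    rw [e, det_mul, det_transpose]
    rcases Int.isUnit_iff.1 ((isUnit_iff_isUnit_det _).1 g.isUnit) with h2 | h2 <;> rw [h2] <;>
      omega
  have hne : ∃ f : Fin 4 → Fin 5, (of (v ∘ f)).det ≠ 0 := by
    refine exists_det_ne_zero v fun w hw => ?_
    have h1 := hin w
    rw [Finset.sum_eq_zero fun u hu => ?_, mul_zero] at h1
    · exact dotProduct_self_eq_zero.1 (le_antisymm h1
        (Finset.sum_nonneg fun j _ => mul_self_nonneg (w j)))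
    · obtain ⟨j, rfl⟩ := hF hu
      rw [hx, ev_vecMulVec, hw, sq, mul_zero]
  rcases exists_flip_or_circuit v hdet hne with ⟨h, h1, h2⟩ | ⟨s, hs, hsum⟩
  · refine Or.inl ⟨h, funext fun j => ?_, h1⟩
    change h • x j = x j
    rw [hx, smul_line_eq (h2 j)]
  · refine Or.inr ⟨fun j => s j • v j, fun j => ?_, hsum⟩
    rw [hx]
    refine Pt.ext (vecMulVec_eq_of_eq_or_neg ?_)
    rcases hs j with h | h <;> simp [h]

theorem ev_add_add_ev_sub (q : Matrix (Fin 4) (Fin 4) ℤ) (m n : Fin 4 → ℤ) :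
    ev q (m + n) + ev q (m - n) = 2 * (ev q m + ev q n) := by
  simp only [ev, mulVec_add, mulVec_sub, add_dotProduct, sub_dotProduct, dotProduct_add,
    dotProduct_sub]
  ring

theorem ev_eq_twelve {q : Matrix (Fin 4) (Fin 4) ℤ} {v : Fin 4 → ℤ}
    (h : (⟨vecMulVec v v⟩ : Pt) ∈ suppV q) : ev q v = 12 := by
  rcases h with h | h
  · rw [← pair_vecMulVec]
    exact h.1
  · exact absurd h.2 (vecMulVec_notMem_orbit v)

theorem TopForm.twelve_le_ev {q : Matrix (Fin 4) (Fin 4) ℤ} (hq : TopForm q) {v : Fin 4 → ℤ}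
    (hv : v ≠ 0) : 12 ≤ ev q v := by
  have := hq.le_pair (X := ⟨vecMulVec v v⟩) (l := 12) (Or.inl ⟨rfl, v, hv, rfl⟩)
  rwa [pair_vecMulVec] at this

theorem flip_or_flip_update (x : Fin 5 → Pt) (hx : Function.Injective x)
    (hc : cells.Cell (Set.range x))
    (ho : ∀ j, x j ∉ MulAction.orbit (GL (Fin 4) ℤ) (⟨ctr⟩ : Pt)) :
    CellFamily.Flip orient x ∨ ∀ u, u ∉ MulAction.orbit (GL (Fin 4) ℤ) (⟨ctr⟩ : Pt) →
      u ∉ Set.range x → cells.Cell (insert u (Set.range x)) →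
      ∀ j, cells.Cell (Set.range (Function.update x j u)) →
        CellFamily.Flip orient (Function.update x j u) := by
  rcases flip_or_circuit hc ho with h | ⟨v, hv, hsum⟩
  · exact Or.inl h
  refine Or.inr fun u hu hux hcu j hcj => ?_
  have ho' : ∀ i, Function.update x j u i ∉ MulAction.orbit (GL (Fin 4) ℤ) (⟨ctr⟩ : Pt) := by
    intro i
    by_cases hij : i = j
    · rw [hij, Function.update_self]
      exact hu
    · rw [Function.update_of_ne hij]
      exact ho i
  rcases flip_or_circuit hcj ho' with h | ⟨w, hw, hsum'⟩
  · exact h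
  · exfalso
    obtain ⟨-, q, hq, hsub⟩ := hcu
    have hs : ∀ i, ∃ s : ℤ, (s = 1 ∨ s = 0) ∧ (i ≠ j → v i + w i = (2 * s) • v i) := fun i => by
      by_cases hij : i = j
      · exact ⟨1, Or.inl rfl, fun h => absurd hij h⟩
      · have h1 := hw i
        rw [Function.update_of_ne hij, hv] at h1
        rcases vecMulVec_self_inj (congrArg Pt.mat h1) with h2 | h2
        · refine ⟨1, Or.inl rfl, fun _ => ?_⟩
          rw [← h2, mul_one, two_smul]
        · refine ⟨0, Or.inr rfl, fun _ => ?_⟩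
          rw [h2]
          simp
    choose s _ hs using hs
    set m : Fin 4 → ℤ := -∑ i ∈ Finset.univ.erase j, s i • v i with hm
    have h2m : v j + w j = (2 : ℤ) • m := by
      have h1 : ∑ i, (v i + w i) = 0 := by rw [Finset.sum_add_distrib, hsum, hsum', add_zero]
      rw [← Finset.add_sum_erase _ _ (Finset.mem_univ j), Finset.sum_congr rfl fun i hi =>
        hs i (Finset.ne_of_mem_erase hi)] at h1
      rw [hm, smul_neg, Finset.smul_sum, eq_neg_iff_add_eq_zero]
      simpa only [smul_smul] using h1
    set n : Fin 4 → ℤ := v j - m with hn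
    have hvj : v j = m + n := by rw [hn]; abel
    have hwj : w j = m - n := by
      have : w j = (2 : ℤ) • m - v j := by rw [← h2m]; abel
      rw [this, hn, two_smul]
      abel
    have hj : (⟨vecMulVec (w j) (w j)⟩ : Pt) = u := by
      rw [← hw j, Function.update_self]
    have hne : ¬(w j = v j ∨ w j = -v j) := fun h => by
      refine hux ⟨j, ?_⟩
      rw [hv, ← hj]
      exact Pt.ext (vecMulVec_eq_of_eq_or_neg h).symm
    have hm0 : m ≠ 0 := fun h => hne (Or.inr (by rw [hvj, hwj, h]; simp))
    have hn0 : n ≠ 0 := fun h => hne (Or.inl (by rw [hvj, hwj, h]; simp))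
    have e1 : ev q (v j) = 12 := ev_eq_twelve (by
      rw [← hv]
      exact hsub (Set.mem_insert_of_mem _ ⟨j, rfl⟩))
    have e2 : ev q (w j) = 12 := ev_eq_twelve (by
      rw [hj]
      exact hsub (Set.mem_insert _ _))
    have e3 := ev_add_add_ev_sub q m n
    rw [← hvj, ← hwj, e1, e2] at e3
    have e4 := hq.twelve_le_ev hm0
    have e5 := hq.twelve_le_ev hn0
    omega

/-- Lee–Szczarba.  The group cohomology of `GL(4,ℤ)` with trivial
rational coefficients vanishes in degree `5`: `H^5(GL(4,ℤ);ℚ) = 0`. -/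
theorem gl4_rational_cohomology_degree_five_vanishes :
    Subsingleton (groupCohomology (Rep.trivial ℚ (GL (Fin 4) ℤ) ℚ) 5) := by
  refine CellFamily.subsingleton_groupCohomology_five cells_smul orient cells_acyclic
    (fun m hm φ hφ => cells_exact m hm φ hφ) fundCycle altRep_fundCycle fundCycle_ne_zero
    bdry_fundCycle exists_eq_smul_fundCycle fun φ hφ => ?_
  refine CellFamily.exists_invariant_bdry_eq cells_smul orient (c := ⟨ctr⟩)
    (fun S hS => finite_smul_ctr_mem hS) (fun S hS γ γ' h h' => ?_)
    (fun S hS _ hcard => exists_line_vertex hS hcard) flip_or_flip_update φ hφ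
  obtain ⟨-, q, hq, hsub⟩ := hS
  exact orbit_eq_of_mem_suppV hq (hsub h) (hsub h') ⟨γ, rfl⟩ ⟨γ', rfl⟩
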